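/- Let G be a (possibly infinite) graph and let T ⊆ V(G) be countable such that there is no X ⊆ V(G)∖T for which d_G(X) is an odd natural number. Assume that for each t ∈ T there is a system 𝒫_t of pairwise edge-disjoint T-paths covering all the edges incident with t. Then there exists a single system 𝒫 of pairwise edge-disjoint T-paths covering all the edges incident with any t ∈ T. -/

import Mathlib

/-!
Common definitions: multigraphs (parallel edges allowed, no loops), walks,
paths, cuts, waves and related notions used in the statements below.
-/

universe u v

/-- A multigraph with vertex type `V` and edge type `E`: every edge is assigned
an unordered pair of *distinct* end-vertices (parallel edges allowed, no loops). -/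
structure Multigraph (V : Type u) (E : Type v) : Type (max u v) where
  inc : E → Sym2 V
  not_isDiag : ∀ e, ¬ (inc e).IsDiag

namespace Multigraph

variable {V : Type u} {E : Type v}

/-- Walks in a multigraph, recorded together with the edges they traverse. -/
inductive Walk (G : Multigraph V E) : V → V → Type (max u v)
  | nil (v : V) : Walk G v v
  | cons {u v w : V} (e : E) (he : G.inc e = s(u, v)) (p : Walk G v w) : Walk G u w

namespace Walk

variable {G : Multigraph V E}

/-- The list of vertices visited by a walk. -/
def support : ∀ {u w : V}, G.Walk u w → List V
  | _, _, .nil v => [v]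
  | u, _, .cons _ _ p => u :: p.support

/-- The list of edges traversed by a walk. -/
def edges : ∀ {u w : V}, G.Walk u w → List E
  | _, _, .nil _ => []
  | _, _, .cons e _ p => e :: p.edges

end Walk

/-- `δ_G(v)`: the set of edges incident with the vertex `v`. -/
def inci (G : Multigraph V E) (v : V) : Set E := {e | v ∈ G.inc e}

/-- `δ_G(X)`: the set of edges with exactly one end-vertex in `X`. -/
def cut (G : Multigraph V E) (X : Set V) : Set E :=
  {e | ∃ x y, G.inc e = s(x, y) ∧ x ∈ X ∧ y ∉ X}

/-- Connectedness of a multigraph. -/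
def Connected (G : Multigraph V E) : Prop := ∀ u v : V, Nonempty (G.Walk u v)

/-- A `T`-path: a path connecting two distinct vertices of `T`
with no internal vertex in `T`. -/
structure TPath (G : Multigraph V E) (T : Set V) : Type (max u v) where
  first : V
  last : V
  walk : G.Walk first last
  first_mem : first ∈ T
  last_mem : last ∈ T
  ne : first ≠ last
  support_nodup : walk.support.Nodup
  internal : ∀ x ∈ walk.support, x ∈ T → x = first ∨ x = last

/-- A system of pairwise edge-disjoint `T`-paths. -/
def TPathDisjoint (G : Multigraph V E) {T : Set V} (P : Set (G.TPath T)) : Prop :=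
  ∀ p ∈ P, ∀ q ∈ P, p ≠ q → ∀ e, e ∈ p.walk.edges → e ∉ q.walk.edges

/-- An `st`-path: a path from `s` to `t` (no internal vertex is `s` or `t`,
which is automatic as the vertices of a path are distinct). -/
structure STPath (G : Multigraph V E) (s t : V) : Type (max u v) where
  walk : G.Walk s t
  support_nodup : walk.support.Nodup

/-- A system of pairwise edge-disjoint `st`-paths. -/
def STPathDisjoint (G : Multigraph V E) {s t : V} (P : Set (G.STPath s t)) : Prop :=
  ∀ p ∈ P, ∀ q ∈ P, p ≠ q → ∀ e, e ∈ p.walk.edges → e ∉ q.walk.edges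

/-- A nontrivial path starting at `s`. -/
structure SPath (G : Multigraph V E) (s : V) : Type (max u v) where
  last : V
  walk : G.Walk s last
  support_nodup : walk.support.Nodup
  edges_ne_nil : walk.edges ≠ []

/-- A system of pairwise edge-disjoint paths starting at `s`. -/
def SPathDisjoint (G : Multigraph V E) {s : V} (W : Set (G.SPath s)) : Prop :=
  ∀ p ∈ W, ∀ q ∈ W, p ≠ q → ∀ e, e ∈ p.walk.edges → e ∉ q.walk.edges

/-- The set of last edges of a system of paths starting at `s`. -/
def lastEdges (G : Multigraph V E) {s : V} (W : Set (G.SPath s)) : Set E :=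
  {e | ∃ p ∈ W, p.walk.edges.getLast? = some e}

/-- `C` is a cut separating `A` from `B`. -/
def SepCut (G : Multigraph V E) (A B : Set V) (C : Set E) : Prop :=
  ∃ X : Set V, A ⊆ X ∧ (∀ b ∈ B, b ∉ X) ∧ C = G.cut X

/-- `C` is a `⊆`-minimal cut separating `A` from `B`. -/
def IsMinSepCut (G : Multigraph V E) (A B : Set V) (C : Set E) : Prop :=
  G.SepCut A B C ∧ ∀ D : Set E, G.SepCut A B D → D ⊆ C → D = C

/-- An `s`-`B`-wave: a system of pairwise edge-disjoint paths starting at `s`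
whose set of last edges is a `⊆`-minimal cut separating `s` from `B`. -/
def IsWave (G : Multigraph V E) (s : V) (B : Set V) (W : Set (G.SPath s)) : Prop :=
  G.SPathDisjoint W ∧ G.IsMinSepCut {s} B (G.lastEdges W)

/-- An Erdős–Menger `st`-cut: an `st`-cut which is orthogonal to some system of
pairwise edge-disjoint `st`-paths, i.e. it consists of exactly one edge chosen
from each path of the system. -/
def IsEMCut (G : Multigraph V E) (s t : V) (C : Set E) : Prop :=
  (∃ X : Set V, s ∈ X ∧ t ∉ X ∧ C = G.cut X) ∧
  ∃ P : Set (G.STPath s t), G.STPathDisjoint P ∧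
    (∀ p ∈ P, ∃! e, e ∈ C ∧ e ∈ p.walk.edges) ∧
    (∀ e ∈ C, ∃ p ∈ P, e ∈ p.walk.edges)

/-- The order `≼` on `st`-cuts: the `s`-side of `C` is contained in the
`s`-side of `D` (in a connected graph the `s`-side is unique). -/
def CutLE (G : Multigraph V E) (s t : V) (C D : Set E) : Prop :=
  ∃ X Y : Set V, s ∈ X ∧ t ∉ X ∧ C = G.cut X ∧ s ∈ Y ∧ t ∉ Y ∧ D = G.cut Y ∧ X ⊆ Y

/-- A cut of the form `C_W` for some `st`-wave `W`. -/
def IsWaveCut (G : Multigraph V E) (s t : V) (C : Set E) : Prop :=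
  ∃ W : Set (G.SPath s), G.IsWave s {t} W ∧ G.lastEdges W = C

/-- Deletion of a set of edges. -/
def deleteEdges (G : Multigraph V E) (F : Set E) : Multigraph V {e : E // e ∉ F} where
  inc e := G.inc e.1
  not_isDiag e := G.not_isDiag e.1

open Classical in
/-- Contraction of the vertex set `X` to the vertex `s` (edges inside `X` are
deleted, edges leaving `X` are redirected to `s`). -/
noncomputable def contract (G : Multigraph V E) (X : Set V) (s : V) :
    Multigraph V {e : E // ¬ (Sym2.map (fun v => if v ∈ X then s else v) (G.inc e)).IsDiag} where
  inc e := Sym2.map (fun v => if v ∈ X then s else v) (G.inc e.1)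
  not_isDiag e := e.2

/-- Reachability inside a set `S` of vertices. -/
def ReachableIn (G : Multigraph V E) (S : Set V) (x y : V) : Prop :=
  ∃ p : G.Walk x y, ∀ z ∈ p.support, z ∈ S

/-- `Y` is (the vertex set of) a connected component of the subgraph of `G`
induced by `S`. -/
def IsComponentOf (G : Multigraph V E) (Y S : Set V) : Prop :=
  Y.Nonempty ∧ Y ⊆ S ∧ ∀ x ∈ Y, ∀ y ∈ S, (G.ReachableIn S x y ↔ y ∈ Y)

/-- A cycle in a multigraph (a closed walk with distinct edges whose
vertices are distinct except that the first one equals the last one). -/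
structure Cycle (G : Multigraph V E) : Type (max u v) where
  base : V
  walk : G.Walk base base
  edges_ne_nil : walk.edges ≠ []
  edges_nodup : walk.edges.Nodup
  support_tail_nodup : walk.support.tail.Nodup

/-- A graph is Eulerian if its edge set can be partitioned into
edge sets of cycles. -/
def IsEulerian (G : Multigraph V E) : Prop :=
  ∃ C : Set G.Cycle,
    (∀ c ∈ C, ∀ d ∈ C, c ≠ d → ∀ e, e ∈ c.walk.edges → e ∉ d.walk.edges) ∧
    ∀ e : E, ∃ c ∈ C, e ∈ c.walk.edges

/-- A `T`-partition: a family `{A t : t ∈ T}` of pairwise disjoint vertex sets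
with `A t ∩ T = {t}`. -/
def IsTPartition (T : Set V) (A : V → Set V) : Prop :=
  (∀ t ∈ T, A t ∩ T = {t}) ∧
  ∀ t₁ ∈ T, ∀ t₂ ∈ T, t₁ ≠ t₂ → Disjoint (A t₁) (A t₂)

end Multigraph
section Part1
namespace LC

variable {V : Type*} {E : Type*}

/-- chains of steps -/
def Ch (S : V → E → V → Prop) : V → List (E × V) → Prop
  | _, [] => True
  | u, (e, x) :: l => S u e x ∧ Ch S x l

/-- end point of a chain -/
def endp : V → List (E × V) → V
  | u, [] => u
  | _, (_, x) :: l => endp x l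

/-- edges -/
def eds (l : List (E × V)) : List E := l.map Prod.fst
/-- vertices (without the start) -/
def vts (l : List (E × V)) : List V := l.map Prod.snd

/-- walks -/
def IsWk (inc : E → Sym2 V) (u : V) (l : List (E × V)) : Prop :=
  Ch (fun u e x => inc e = s(u, x)) u l

@[simp] lemma eds_nil : eds ([] : List (E × V)) = [] := rfl
@[simp] lemma vts_nil : vts ([] : List (E × V)) = [] := rfl
@[simp] lemma eds_cons (p : E × V) (l) : eds (p :: l) = p.1 :: eds l := rfl
@[simp] lemma vts_cons (p : E × V) (l) : vts (p :: l) = p.2 :: vts l := rfl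
@[simp] lemma eds_append (l m : List (E × V)) : eds (l ++ m) = eds l ++ eds m := by simp [eds]
@[simp] lemma vts_append (l m : List (E × V)) : vts (l ++ m) = vts l ++ vts m := by simp [vts]
@[simp] lemma endp_nil (u : V) : endp u ([] : List (E × V)) = u := rfl
@[simp] lemma endp_cons (u : V) (p : E × V) (l) : endp u (p :: l) = endp p.2 l := rfl
@[simp] lemma endp_append (u : V) (l m : List (E × V)) :
    endp u (l ++ m) = endp (endp u l) m := by
  induction l generalizing u with
  | nil => rfl
  | cons p l ih => simp [ih]
@[simp] lemma Ch_nil (S : V → E → V → Prop) (u) : Ch S u [] ↔ True := Iff.rfl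
@[simp] lemma Ch_cons (S : V → E → V → Prop) (u p l) :
    Ch S u (p :: l) ↔ S u p.1 p.2 ∧ Ch S p.2 l := Iff.rfl
@[simp] lemma Ch_append (S : V → E → V → Prop) (u l m) :
    Ch S u (l ++ m) ↔ Ch S u l ∧ Ch S (endp u l) m := by
  induction l generalizing u with
  | nil => simp
  | cons p l ih => simp [ih, and_assoc]
@[simp] lemma IsWk_nil (inc : E → Sym2 V) (u) : IsWk inc u [] := trivial
@[simp] lemma IsWk_cons (inc : E → Sym2 V) (u p l) :
    IsWk inc u (p :: l) ↔ inc p.1 = s(u, p.2) ∧ IsWk inc p.2 l := Iff.rfl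
@[simp] lemma IsWk_append (inc : E → Sym2 V) (u l m) :
    IsWk inc u (l ++ m) ↔ IsWk inc u l ∧ IsWk inc (endp u l) m := Ch_append _ _ _ _

lemma endp_mem (u : V) (l : List (E × V)) : endp u l ∈ u :: vts l := by
  induction l generalizing u with
  | nil => simp
  | cons p l ih => simpa using Or.inr (by simpa using ih p.2)

lemma endp_mem' (u : V) (l : List (E × V)) (h : l ≠ []) : endp u l ∈ vts l := by
  cases l with
  | nil => exact absurd rfl h
  | cons p l => simpa using endp_mem p.2 l

lemma split_vts (u x : V) (l : List (E × V)) (h : x ∈ vts l) :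
    ∃ a b, l = a ++ b ∧ endp u a = x ∧ a ≠ [] := by
  simp only [vts, List.mem_map] at h
  obtain ⟨p, hp, rfl⟩ := h
  obtain ⟨a, b, rfl⟩ := List.append_of_mem hp
  exact ⟨a ++ [p], b, by simp, by simp, by simp⟩

lemma split_vts' (u x : V) (l : List (E × V)) (h : x ∈ u :: vts l) :
    ∃ a b, l = a ++ b ∧ endp u a = x := by
  rcases List.mem_cons.1 h with rfl | h
  · exact ⟨[], l, rfl, rfl⟩
  · obtain ⟨a, b, h1, h2, _⟩ := split_vts u x l h
    exact ⟨a, b, h1, h2⟩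

lemma split_eds (h : E) (l : List (E × V)) (hl : h ∈ eds l) :
    ∃ a x b, l = a ++ (h, x) :: b := by
  simp only [eds, List.mem_map] at hl
  obtain ⟨p, hp, rfl⟩ := hl
  obtain ⟨a, b, rfl⟩ := List.append_of_mem hp
  exact ⟨a, p.2, b, rfl⟩

lemma Ch_mono {S S' : V → E → V → Prop} {u l} (h : Ch S u l)
    (H : ∀ u, ∀ p ∈ l, S u p.1 p.2 → S' u p.1 p.2) : Ch S' u l := by
  induction l generalizing u with
  | nil => trivial
  | cons p l ih =>
    exact ⟨H _ _ (by simp) h.1, ih h.2 fun u q hq => H u q (by simp [hq])⟩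

lemma IsWk_congr {inc inc' : E → Sym2 V} {u l} (h : IsWk inc u l)
    (H : ∀ e ∈ eds l, inc e = inc' e) : IsWk inc' u l := by
  refine Ch_mono h ?_
  intro u p hp hh
  rw [← H _ (List.mem_map_of_mem hp)]; exact hh

/-- loop erasure -/
lemma shorten (S : V → E → V → Prop) (u : V) (l : List (E × V)) (h : Ch S u l) :
    ∃ l', Ch S u l' ∧ endp u l' = endp u l ∧ l' ⊆ l ∧ (u :: vts l').Nodup := by
  classical
  induction l generalizing u with
  | nil => exact ⟨[], trivial, rfl, by simp, by simp⟩
  | cons p l ih =>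
    obtain ⟨m, h1, h2, h3, h4⟩ := ih p.2 h.2
    by_cases hu : u ∈ p.2 :: vts m
    · obtain ⟨a, b, rfl, hb⟩ := split_vts' p.2 u m hu
      refine ⟨b, ?_, ?_, ?_, ?_⟩
      · rw [Ch_append, hb] at h1; exact h1.2
      · rw [endp_append, hb] at h2; simpa using h2
      · intro q hq; exact List.mem_cons_of_mem _ (h3 (by simp [hq]))
      · rw [vts_append, ← List.cons_append] at h4
        have h5 := List.nodup_append.1 h4
        refine List.nodup_cons.2 ⟨fun hm => ?_, h5.2.1⟩
        have := endp_mem p.2 a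
        rw [hb] at this
        exact h5.2.2 _ this _ hm rfl
    · refine ⟨p :: m, ⟨h.1, h1⟩, by simpa using h2, ?_, ?_⟩
      · exact List.cons_subset_cons _ h3
      · rw [vts_cons]; exact List.nodup_cons.2 ⟨hu, h4⟩

lemma eds_subset {l m : List (E × V)} (h : l ⊆ m) : eds l ⊆ eds m := List.map_subset _ h
lemma vts_subset {l m : List (E × V)} (h : l ⊆ m) : vts l ⊆ vts m := List.map_subset _ h

lemma mem_eds_ends {inc : E → Sym2 V} {u l h} (hl : IsWk inc u l) (hh : h ∈ eds l) :
    ∀ x ∈ inc h, x ∈ u :: vts l := by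
  obtain ⟨a, y, b, rfl⟩ := split_eds h l hh
  intro x hx
  simp only [IsWk_append, IsWk_cons] at hl
  rw [hl.2.1] at hx
  rcases Sym2.mem_iff.1 hx with rfl | rfl
  · have := endp_mem u a
    simp only [List.mem_cons, vts_append, List.mem_append] at this ⊢
    tauto
  · simp

/-- an edge of a walk incident with its start which is not revisited is the first edge -/
lemma head_edge {inc : E → Sym2 V} {t l g} (hl : IsWk inc t l) (hn : t ∉ vts l) (hg : g ∈ eds l)
    (ht : t ∈ inc g) : ∃ x m, l = (g, x) :: m := by
  obtain ⟨a, y, b, rfl⟩ := split_eds g l hg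
  simp only [IsWk_append, IsWk_cons] at hl
  rw [hl.2.1] at ht
  rcases Sym2.mem_iff.1 ht with h | h
  · rcases a with _ | ⟨p, a⟩
    · exact ⟨y, b, rfl⟩
    · exfalso; apply hn
      have := endp_mem' t (p :: a) (by simp)
      rw [← h] at this
      rw [vts_append]; exact List.mem_append_left _ this
  · exfalso; apply hn; simp [h]

/-- vertex-simple walks are edge-simple -/
lemma eds_nodup {inc : E → Sym2 V} {u l} (hl : IsWk inc u l) (hn : (u :: vts l).Nodup) :
    (eds l).Nodup := by
  induction l generalizing u with
  | nil => simp
  | cons p l ih =>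
    rw [vts_cons] at hn
    have hn' := List.nodup_cons.1 hn
    rw [eds_cons, List.nodup_cons]
    refine ⟨fun h => ?_, ih hl.2 hn'.2⟩
    have := mem_eds_ends hl.2 h u (by have := hl.1; simp only at this; rw [this]; simp)
    exact hn'.1 this

/-- reversing a walk -/
lemma rev_walk {inc : E → Sym2 V} {u l} (hl : IsWk inc u l) :
    ∃ m, IsWk inc (endp u l) m ∧ endp (endp u l) m = u ∧ eds m = (eds l).reverse ∧
      (endp u l :: vts m) = (u :: vts l).reverse := by
  induction l generalizing u with
  | nil => exact ⟨[], by simp⟩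
  | cons p l ih =>
    obtain ⟨m, h1, h2, h3, h4⟩ := ih hl.2
    refine ⟨m ++ [(p.1, u)], ?_, ?_, ?_, ?_⟩
    · simp only [endp_cons, IsWk_append, IsWk_cons, IsWk_nil, and_true, h2]
      refine ⟨h1, ?_⟩
      have := hl.1; simp only at this; rw [this, Sym2.eq_swap]
    · simp
    · simp [h3]
    · simp only [endp_cons, vts_append, vts_cons, vts_nil]
      rw [← List.cons_append, h4]; simp

/-- edge `h` crosses `X` -/
def crs (inc : E → Sym2 V) (X : Set V) (h : E) : Prop :=
  ∃ x y, inc h = s(x, y) ∧ x ∈ X ∧ y ∉ X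

lemma crs_iff {inc : E → Sym2 V} {X : Set V} {h : E} {u x : V} (hh : inc h = s(u, x)) :
    crs inc X h ↔ ¬ (u ∈ X ↔ x ∈ X) := by
  constructor
  · rintro ⟨a, b, hab, ha, hb⟩
    rw [hh] at hab
    rcases Sym2.eq_iff.1 hab with ⟨rfl, rfl⟩ | ⟨rfl, rfl⟩ <;> tauto
  · intro hn
    by_cases hu : u ∈ X
    · exact ⟨u, x, hh, hu, by tauto⟩
    · exact ⟨x, u, by rw [hh, Sym2.eq_swap], by tauto, hu⟩

/-- parity condition -/
def Par (inc : E → Sym2 V) (A : Set E) (T : Set V) : Prop :=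
  ∀ X : Set V, X ⊆ Tᶜ → {h | h ∈ A ∧ crs inc X h}.Finite → Even {h | h ∈ A ∧ crs inc X h}.ncard

open Classical in
lemma cross_parity {inc : E → Sym2 V} {u l} (X : Set V) (hl : IsWk inc u l) :
    Even ((eds l).countP (fun h => decide (crs inc X h))) ↔ (u ∈ X ↔ endp u l ∈ X) := by
  induction l generalizing u with
  | nil => simp
  | cons p l ih =>
    have h1 := ih hl.2
    have h2 := crs_iff (X := X) hl.1
    rw [eds_cons, List.countP_cons, endp_cons]
    by_cases hc : crs inc X p.1
    · simp only [hc, decide_true, if_true, Nat.even_add_one, h1]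
      have := h2.1 hc; tauto
    · simp only [hc, decide_false, Bool.false_eq_true, if_false, add_zero, h1]
      have : (u ∈ X ↔ p.2 ∈ X) := by by_contra hcc; exact hc (h2.2 hcc)
      tauto

/-- `T`-paths as lists -/
structure TP (inc : E → Sym2 V) (T : Set V) (s : V) (l : List (E × V)) : Prop where
  wk : IsWk inc s l
  nd : (s :: vts l).Nodup
  fin : endp s l ∈ T
  ne : endp s l ≠ s
  int : ∀ x ∈ vts l, x ∈ T → x = endp s l

lemma TP.eds_nd {inc : E → Sym2 V} {T s l} (h : TP inc T s l) : (eds l).Nodup :=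
  eds_nodup h.wk h.nd

lemma TP.nr {inc : E → Sym2 V} {T s l} (h : TP inc T s l) : s ∉ vts l :=
  (List.nodup_cons.1 h.nd).1

/-- truncating -/
lemma trunc (P : V → Prop) (u : V) (l : List (E × V)) (h : ∃ x ∈ vts l, P x) :
    ∃ a e x b, l = a ++ (e, x) :: b ∧ P x ∧ ∀ y ∈ vts a, ¬ P y := by
  induction l with
  | nil => simp at h
  | cons p l ih =>
    by_cases hp : P p.2
    · exact ⟨[], p.1, p.2, l, rfl, hp, by simp⟩
    · have : ∃ x ∈ vts l, P x := by
        obtain ⟨x, hx, hPx⟩ := h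
        rw [vts_cons, List.mem_cons] at hx
        rcases hx with rfl | hx
        · exact absurd hPx hp
        · exact ⟨x, hx, hPx⟩
      obtain ⟨a, e, x, b, rfl, h1, h2⟩ := ih this
      refine ⟨p :: a, e, x, b, rfl, h1, ?_⟩
      intro y hy
      rw [vts_cons, List.mem_cons] at hy
      rcases hy with rfl | hy
      · exact hp
      · exact h2 y hy

lemma exists_TP {inc : E → Sym2 V} {T : Set V} {t : V} {l : List (E × V)} (hl : IsWk inc t l)
    (h1 : endp t l ∈ T) (h2 : endp t l ≠ t) : ∃ m, TP inc T t m ∧ m ⊆ l := by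
  obtain ⟨m, hm, he, hs, hn⟩ := shorten _ t l hl
  have hne : m ≠ [] := by rintro rfl; exact h2 he.symm
  obtain ⟨a, e, x, b, rfl, hx, ha⟩ := trunc (· ∈ T) t m ⟨_, endp_mem' t m hne, he ▸ h1⟩
  have hn' : (t :: vts (a ++ [(e, x)])).Nodup := by
    refine hn.sublist ?_
    simp
  refine ⟨a ++ [(e, x)], ⟨?_, hn', by simpa using hx, ?_, ?_⟩, ?_⟩
  · have : a ++ (e, x) :: b = (a ++ [(e, x)]) ++ b := by simp
    rw [this] at hm
    exact ((Ch_append _ _ _ _).1 hm).1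
  · intro h
    have := (List.nodup_cons.1 hn').1
    apply this
    rw [← h]; simp
  · intro y hy hyT
    simp only [vts_append, vts_cons, vts_nil, List.mem_append, List.mem_singleton] at hy
    rcases hy with hy | hy
    · exact absurd hyT (ha y hy)
    · simpa using hy
  · intro q hq; apply hs; simp at hq ⊢; tauto

lemma TP_rev {inc : E → Sym2 V} {T : Set V} {s : V} {l : List (E × V)} (hs : s ∈ T)
    (h : TP inc T s l) :
    ∃ m, TP inc T (endp s l) m ∧ endp (endp s l) m = s ∧ eds m = (eds l).reverse := by
  obtain ⟨m, h1, h2, h3, h4⟩ := rev_walk h.wk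
  have hnd : (endp s l :: vts m).Nodup := by rw [h4]; exact List.nodup_reverse.2 h.nd
  refine ⟨m, ⟨h1, hnd, by rwa [h2], by rw [h2]; exact h.ne.symm, ?_⟩, h2, h3⟩
  intro x hx hxT
  rw [h2]
  have h5 : x ∈ (s :: vts l).reverse := by rw [← h4]; exact List.mem_cons_of_mem _ hx
  rw [List.mem_reverse, List.mem_cons] at h5
  rcases h5 with h5 | h5
  · exact h5
  · have := h.int x h5 hxT
    subst this
    exact absurd hx (List.nodup_cons.1 hnd).1

/-- a system of walks from `t`, with edges in `B`, covering the edges of `A` at `t` -/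
structure Lk (inc : E → Sym2 V) (A B : Set E) (t : V) (I : Set E) (W : E → List (E × V)) :
    Prop where
  wk : ∀ i ∈ I, IsWk inc t (W i)
  nr : ∀ i ∈ I, t ∉ vts (W i)
  sub : ∀ i ∈ I, ∀ h ∈ eds (W i), h ∈ B
  dj : ∀ i ∈ I, ∀ j ∈ I, ∀ h, h ∈ eds (W i) → h ∈ eds (W j) → i = j
  cov : ∀ g ∈ A, t ∈ inc g → ∃ i ∈ I, g ∈ eds (W i)

/-- linkedness -/
def Linked (inc : E → Sym2 V) (A : Set E) (T : Set V) (t : V) : Prop :=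
  ∃ I W, Lk inc A A t I W ∧ ∀ i ∈ I, endp t (W i) ∈ T ∧ endp t (W i) ≠ t

/-- strict linkages -/
def SLk (inc : E → Sym2 V) (A B : Set E) (T : Set V) (t : V) (I : Set E)
    (W : E → List (E × V)) : Prop :=
  Lk inc A B t I W ∧ ∀ i ∈ I, TP inc T t (W i)

lemma strict_of {inc : E → Sym2 V} {A B : Set E} {T : Set V} {t : V} {I W}
    (h : Lk inc A B t I W) (h' : ∀ i ∈ I, endp t (W i) ∈ T ∧ endp t (W i) ≠ t) :
    ∃ W', SLk inc A B T t I W' ∧ ∀ i ∈ I, W' i ⊆ W i := by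
  have := fun i (hi : i ∈ I) => exists_TP (h.wk i hi) (h' i hi).1 (h' i hi).2
  choose! W' hW hs using this
  refine ⟨W', ⟨⟨fun i hi => (hW i hi).wk, fun i hi => (hW i hi).nr, ?_, ?_, ?_⟩, hW⟩, hs⟩
  · intro i hi g hg; exact h.sub i hi g (eds_subset (hs i hi) hg)
  · intro i hi j hj g hg hg'
    exact h.dj i hi j hj g (eds_subset (hs i hi) hg) (eds_subset (hs j hj) hg')
  · intro g hg ht
    obtain ⟨i, hi, hgi⟩ := h.cov g hg ht
    refine ⟨i, hi, ?_⟩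
    obtain ⟨x, m, hm⟩ := head_edge (h.wk i hi) (h.nr i hi) hgi ht
    have h1 := hW i hi
    have h2 := hs i hi
    rcases hc : W' i with _ | ⟨p, m'⟩
    · rw [hc] at h1; exact absurd rfl h1.ne
    · rw [hc] at h1 h2
      have h3 : p.1 ∈ eds (W i) := eds_subset h2 (by simp)
      obtain ⟨y, m2, hm2⟩ := head_edge (h.wk i hi) (h.nr i hi) h3
        (by rw [show inc p.1 = s(t, p.2) from h1.wk.1]; simp)
      rw [hm] at hm2
      simp only [List.cons.injEq, Prod.mk.injEq] at hm2
      simp [hm2.1.1]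

lemma SLk.linked {inc : E → Sym2 V} {A : Set E} {T : Set V} {t : V} {I W}
    (h : SLk inc A A T t I W) : Linked inc A T t :=
  ⟨I, W, h.1, fun i hi => ⟨(h.2 i hi).fin, (h.2 i hi).ne⟩⟩

lemma Linked.strict {inc : E → Sym2 V} {A : Set E} {T : Set V} {t : V}
    (h : Linked inc A T t) : ∃ I W, SLk inc A A T t I W := by
  obtain ⟨I, W, h1, h2⟩ := h
  obtain ⟨W', h3, _⟩ := strict_of h1 h2
  exact ⟨I, W', h3⟩

lemma Linked.mono {inc : E → Sym2 V} {B C : Set E} {T : Set V} {t : V}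
    (h : Linked inc B T t) (hBC : B ⊆ C) (hx : ∀ g ∈ C, t ∈ inc g → g ∈ B) :
    Linked inc C T t := by
  obtain ⟨I, W, h1, h2⟩ := h
  exact ⟨I, W, ⟨h1.wk, h1.nr, fun i hi g hg => hBC (h1.sub i hi g hg), h1.dj,
    fun g hg ht => h1.cov g (hx g hg ht) ht⟩, h2⟩

end LC

end Part1

section Part2
namespace LC

variable {V : Type*} {E : Type*}

/-- state with one open walk `W g` -/
structure St (inc : E → Sym2 V) (A B : Set E) (T : Set V) (t : V) (I : Set E)
    (W : E → List (E × V)) (g : E) : Prop where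
  lk : Lk inc A B t I W
  nd : ∀ i ∈ I, (eds (W i)).Nodup
  mem : g ∈ I
  fn : ∀ i ∈ I, i ≠ g → endp t (W i) ∈ T ∧ endp t (W i) ≠ t

/-- unused or used as dart x → u -/
def Us (t : V) (I : Set E) (W : E → List (E × V)) (u : V) (h : E) (x : V) : Prop :=
  (∀ i ∈ I, h ∉ eds (W i)) ∨ ∃ i ∈ I, ∃ l1 l2, W i = l1 ++ (h, u) :: l2 ∧ endp t l1 = x

/-- residual step -/
def Rs (inc : E → Sym2 V) (B : Set E) (t : V) (I : Set E) (W : E → List (E × V))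
    (u : V) (h : E) (x : V) : Prop :=
  inc h = s(u, x) ∧ h ∈ B ∧ x ≠ t ∧ Us t I W u h x

lemma Lk.cov_head {inc : E → Sym2 V} {A B : Set E} {t : V} {I W} {W' : E → List (E × V)}
    (h : Lk inc A B t I W) (hh : ∀ i ∈ I, W i ≠ [] → (W' i).head? = (W i).head?) :
    ∀ g ∈ A, t ∈ inc g → ∃ i ∈ I, g ∈ eds (W' i) := by
  intro g hg ht
  obtain ⟨i, hi, hgi⟩ := h.cov g hg ht
  obtain ⟨x, m, hm⟩ := head_edge (h.wk i hi) (h.nr i hi) hgi ht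
  have := hh i hi (by rw [hm]; simp)
  rw [hm] at this
  simp only [List.head?_cons] at this
  obtain ⟨l, hl⟩ := List.head?_eq_some_iff.1 this
  exact ⟨i, hi, by rw [hl]; simp⟩

lemma St.move {inc : E → Sym2 V} {A B : Set E} {T : Set V} {t : V} {I W g}
    (st : St inc A B T t I W g) {u h x} (hu : endp t (W g) = u) (hut : u ≠ t)
    (hr : Rs inc B t I W u h x) :
    ∃ W' g', St inc A B T t I W' g' ∧ endp t (W' g') = x ∧
      (∀ u' h' x', h' ≠ h → Us t I W u' h' x' → Us t I W' u' h' x') ∧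
      ((∃ i ∈ I, h ∈ eds (W i)) → ∀ i ∈ I, h ∉ eds (W' i)) := by
  classical
  obtain ⟨hinc, hB, hxt, hus⟩ := hr
  have hk := st.lk
  have hgne : W g ≠ [] := by
    intro hc; rw [hc] at hu; exact hut hu.symm
  rcases hus with hus | ⟨i, hi, l1, l2, hW, hl1⟩
  · refine ⟨Function.update W g (W g ++ [(h, x)]), g, ⟨⟨?_, ?_, ?_, ?_, ?_⟩, ?_, st.mem, ?_⟩, ?_, ?_, ?_⟩
    · intro j hj
      by_cases hjg : j = g
      · subst hjg; simp [hk.wk j hj, hu, hinc]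
      · simpa [hjg] using hk.wk j hj
    · intro j hj
      by_cases hjg : j = g
      · subst hjg; simp [hk.nr j hj, hxt.symm]
      · simpa [hjg] using hk.nr j hj
    · intro j hj k hk'
      by_cases hjg : j = g
      · subst hjg
        simp at hk'
        rcases hk' with hk' | rfl
        · exact hk.sub _ hj _ hk'
        · exact hB
      · simp [hjg] at hk'; exact hk.sub _ hj _ hk'
    · intro i hi j hj k h1 h2
      by_cases hig : i = g <;> by_cases hjg : j = g
      · rw [hig, hjg]
      · subst hig; simp [hjg] at h1 h2
        rcases h1 with h1 | rfl
        · exact hk.dj _ hi _ hj _ h1 h2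
        · exact absurd h2 (hus j hj)
      · subst hjg; simp [hig] at h1 h2
        rcases h2 with h2 | rfl
        · exact hk.dj _ hi _ hj _ h1 h2
        · exact absurd h1 (hus i hi)
      · simp [hig, hjg] at h1 h2; exact hk.dj _ hi _ hj _ h1 h2
    · apply hk.cov_head
      intro j hj hne
      by_cases hjg : j = g
      · subst hjg; simp [List.head?_append, List.head?_eq_some_head hne]
      · simp [hjg]
    · intro j hj
      by_cases hjg : j = g
      · subst hjg
        simp only [Function.update_self, eds_append, eds_cons, eds_nil]
        have h1 := st.nd j hj
        have h2 := hus j hj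
        rw [List.nodup_append]
        refine ⟨h1, by simp, ?_⟩
        intro a ha b hb; simp at hb; subst hb; rintro rfl; exact h2 ha
      · simpa [hjg] using st.nd j hj
    · intro j hj hjg; simpa [hjg] using st.fn j hj hjg
    · simp
    · intro u' h' x' hne hh
      rcases hh with hh | ⟨j, hj, a, b, hab, ha⟩
      · left; intro j hj
        by_cases hjg : j = g
        · subst hjg; simp [hh j hj, hne]
        · simpa [hjg] using hh j hj
      · right; refine ⟨j, hj, a, if j = g then b ++ [(h, x)] else b, ?_, ha⟩
        by_cases hjg : j = g
        · subst hjg; simp [hab]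
        · simp [hjg, hab]
    · rintro ⟨i, hi, hh⟩; exact absurd hh (hus i hi)
  have hl1ne : l1 ≠ [] := by rintro rfl; exact hxt hl1.symm
  have hwki := hk.wk i hi
  have hnri := hk.nr i hi
  have hsubi := hk.sub i hi
  have hndi := st.nd i hi
  rw [hW] at hwki hnri hsubi hndi
  simp only [IsWk_append, IsWk_cons] at hwki
  simp only [vts_append, vts_cons, List.mem_append, List.mem_cons, not_or] at hnri
  simp only [eds_append, eds_cons, List.mem_append, List.mem_cons] at hsubi
  simp only [eds_append, eds_cons, List.nodup_append, List.nodup_cons, List.mem_cons] at hndi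
  obtain ⟨hnd1, ⟨hnd2, hnd3⟩, hnd4⟩ := hndi
  have hi1 : ∀ k, k ∈ eds l1 → k ∈ eds (W i) := by intro k hk; simp [hW, hk]
  have hi2 : ∀ k, k ∈ eds l2 → k ∈ eds (W i) := by intro k hk; simp [hW, hk]
  have hih : h ∈ eds (W i) := by simp [hW]
  have hhd : l1.head? = (W i).head? := by
    rw [hW]; simp [List.head?_append, List.head?_eq_some_head hl1ne]
  have hh1 : h ∉ eds l1 := fun hc => hnd4 _ hc h (Or.inl rfl) rfl
  by_cases hig : i = g
  · subst hig
    refine ⟨Function.update W i l1, i, ⟨⟨?_, ?_, ?_, ?_, ?_⟩, ?_, st.mem, ?_⟩, ?_, ?_, ?_⟩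
    · intro j hj
      by_cases hjg : j = i
      · subst hjg; simpa using hwki.1
      · simpa [hjg] using hk.wk j hj
    · intro j hj
      by_cases hjg : j = i
      · subst hjg; simpa using hnri.1
      · simpa [hjg] using hk.nr j hj
    · intro j hj k hk'
      by_cases hjg : j = i
      · subst hjg; simp at hk'; exact hk.sub _ hj _ (hi1 _ hk')
      · simp [hjg] at hk'; exact hk.sub _ hj _ hk'
    · intro j hj j' hj' k h1 h2
      refine hk.dj j hj j' hj' k ?_ ?_
      · by_cases hjg : j = i
        · subst hjg; simp at h1; exact hi1 _ h1
        · simpa [hjg] using h1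
      · by_cases hjg : j' = i
        · subst hjg; simp at h2; exact hi1 _ h2
        · simpa [hjg] using h2
    · apply hk.cov_head
      intro j hj hne
      by_cases hjg : j = i
      · subst hjg; simpa using hhd
      · simp [hjg]
    · intro j hj
      by_cases hjg : j = i
      · subst hjg; simpa using hnd1
      · simpa [hjg] using st.nd j hj
    · intro j hj hjg; simpa [hjg] using st.fn j hj hjg
    · simpa using hl1
    · intro u' h' x' hne hh
      rcases hh with hh | ⟨j, hj, a, b, hab, ha⟩
      · left; intro j hj
        by_cases hjg : j = i
        · subst hjg; simpa using fun hc => hh _ hj (hi1 _ hc)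
        · simpa [hjg] using hh j hj
      · by_cases hjg : j = i
        · subst hjg
          rw [hW] at hab
          rcases List.append_eq_append_iff.1 hab with ⟨c, hc1, hc2⟩ | ⟨c, hc1, hc2⟩
          · left
            have hl2 : h' ∈ eds l2 := by
              rcases c with _ | ⟨q, c⟩
              · simp at hc2; exact absurd hc2.1.1.symm hne
              · simp at hc2; simp [hc2.2]
            intro k hk'
            by_cases hkj : k = j
            · subst hkj; simp only [Function.update_self]
              intro hc; exact hnd4 _ hc h' (Or.inr hl2) rfl
            · simp only [ne_eq, hkj, not_false_eq_true, Function.update_of_ne]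
              intro hc; exact hkj (hk.dj _ hk' _ hj _ hc (hi2 _ hl2))
          · rcases c with _ | ⟨q, c⟩
            · simp at hc2; exact absurd hc2.1.1 hne
            · simp at hc2
              right; refine ⟨j, hj, a, c, ?_, ha⟩
              simp [hc1, hc2.1]
        · right; refine ⟨j, hj, a, b, by simp [hjg, hab], ha⟩
    · intro _ j hj
      by_cases hjg : j = i
      · subst hjg; simpa using hh1
      · simp only [ne_eq, hjg, not_false_eq_true, Function.update_of_ne]
        intro hc; exact hjg (hk.dj _ hj _ hi _ hc hih)
  · have hgi : g ≠ i := Ne.symm hig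
    set W' := Function.update (Function.update W g (W g ++ l2)) i l1 with hW'
    have e1 : W' i = l1 := by simp [hW']
    have e2 : W' g = W g ++ l2 := by simp [hW', hgi]
    have e3 : ∀ j, j ≠ i → j ≠ g → W' j = W j := by intro j h1 h2; simp [hW', h1, h2]
    have cases : ∀ j, j = i ∨ j = g ∨ (j ≠ i ∧ j ≠ g) := by intro j; tauto
    have hendl2 : endp t (W i) = endp u l2 := by simp [hW]
    have hdis : ∀ k, k ∈ eds l2 → k ∉ eds l1 := fun k h2 h1 => hnd4 _ h1 k (Or.inr h2) rfl
    have hmem : ∀ j ∈ I, ∀ k, k ∈ eds (W' j) → (j = i ∧ k ∈ eds l1) ∨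
        (j = g ∧ k ∈ eds l2) ∨ (j ≠ i ∧ k ∈ eds (W j)) := by
      intro j hj k hk'
      rcases cases j with rfl | rfl | ⟨h1, h2⟩
      · rw [e1] at hk'; tauto
      · rw [e2] at hk'; simp at hk'; tauto
      · rw [e3 j h1 h2] at hk'; tauto
    refine ⟨W', i, ⟨⟨?_, ?_, ?_, ?_, ?_⟩, ?_, hi, ?_⟩, ?_, ?_, ?_⟩
    · intro j hj
      rcases cases j with rfl | rfl | ⟨h1, h2⟩
      · rw [e1]; exact hwki.1
      · rw [e2, IsWk_append, hu]; exact ⟨hk.wk _ hj, hwki.2.2⟩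
      · rw [e3 j h1 h2]; exact hk.wk _ hj
    · intro j hj
      rcases cases j with rfl | rfl | ⟨h1, h2⟩
      · rw [e1]; exact hnri.1
      · rw [e2, vts_append, List.mem_append, not_or]; exact ⟨hk.nr _ hj, hnri.2.2⟩
      · rw [e3 j h1 h2]; exact hk.nr _ hj
    · intro j hj k hk'
      rcases hmem j hj k hk' with ⟨rfl, h1⟩ | ⟨rfl, h1⟩ | ⟨h1, h2⟩
      · exact hk.sub _ hi _ (hi1 _ h1)
      · exact hk.sub _ hi _ (hi2 _ h1)
      · exact hk.sub _ hj _ h2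
    · intro j hj j' hj' k h1 h2
      rcases hmem j hj k h1 with ⟨a1, a2⟩ | ⟨a1, a2⟩ | ⟨a1, a2⟩ <;>
      rcases hmem j' hj' k h2 with ⟨b1, b2⟩ | ⟨b1, b2⟩ | ⟨b1, b2⟩
      · rw [a1, b1]
      · exact absurd a2 (hdis _ b2)
      · exact absurd (hk.dj _ hj' _ hi _ b2 (hi1 _ a2)) b1
      · exact absurd b2 (hdis _ a2)
      · rw [a1, b1]
      · exact absurd (hk.dj _ hj' _ hi _ b2 (hi2 _ a2)) b1
      · exact absurd (hk.dj _ hj _ hi _ a2 (hi1 _ b2)) a1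
      · exact absurd (hk.dj _ hj _ hi _ a2 (hi2 _ b2)) a1
      · exact hk.dj _ hj _ hj' _ a2 b2
    · apply hk.cov_head
      intro j hj hne
      rcases cases j with rfl | rfl | ⟨h1, h2⟩
      · rw [e1]; exact hhd
      · rw [e2]; simp [List.head?_append, List.head?_eq_some_head hne]
      · rw [e3 j h1 h2]
    · intro j hj
      rcases cases j with rfl | rfl | ⟨h1, h2⟩
      · rw [e1]; exact hnd1
      · rw [e2, eds_append, List.nodup_append]
        refine ⟨st.nd _ hj, hnd3, ?_⟩
        rintro a ha b hb rfl
        exact hgi (hk.dj _ hj _ hi _ ha (hi2 _ hb))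
      · rw [e3 j h1 h2]; exact st.nd _ hj
    · intro j hj hji
      rcases cases j with rfl | rfl | ⟨h1, h2⟩
      · exact absurd rfl hji
      · rw [e2, endp_append, hu, ← hendl2]; exact st.fn i hi hig
      · rw [e3 j h1 h2]; exact st.fn j hj h2
    · rw [e1, hl1]
    · intro u' h' x' hne hh
      rcases hh with hh | ⟨j, hj, a, b, hab, ha⟩
      · left; intro j hj hc
        rcases hmem j hj h' hc with ⟨rfl, h1⟩ | ⟨rfl, h1⟩ | ⟨h1, h2⟩
        · exact hh _ hi (hi1 _ h1)
        · exact hh _ hi (hi2 _ h1)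
        · exact hh _ hj h2
      · right
        rcases cases j with rfl | rfl | ⟨h1, h2⟩
        · rw [hW] at hab
          rcases List.append_eq_append_iff.1 hab with ⟨c, hc1, hc2⟩ | ⟨c, hc1, hc2⟩
          · rcases c with _ | ⟨q, c⟩
            · simp at hc2; exact absurd hc2.1.1.symm hne
            · simp at hc2
              refine ⟨g, st.mem, W g ++ c, b, ?_, ?_⟩
              · rw [e2, hc2.2]; simp
              · rw [← ha, hc1, ← hc2.1]; simp [hu]
          · rcases c with _ | ⟨q, c⟩
            · simp at hc2; exact absurd hc2.1.1 hne
            · simp at hc2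
              refine ⟨j, hj, a, c, ?_, ha⟩
              simp [e1, hc1, hc2.1]
        · exact ⟨j, hj, a, b ++ l2, by rw [e2, hab]; simp, ha⟩
        · exact ⟨j, hj, a, b, by rw [e3 j h1 h2, hab], ha⟩
    · intro _ j hj hc
      rcases hmem j hj h hc with ⟨rfl, h1⟩ | ⟨rfl, h1⟩ | ⟨h1, h2⟩
      · exact hh1 h1
      · exact hnd2 h1
      · exact h1 (hk.dj _ hj _ hi _ h2 hih)

lemma St.chain {inc : E → Sym2 V} {A B : Set E} {T : Set V} {t : V} {I W g}
    (st : St inc A B T t I W g) {u r} (hu : endp t (W g) = u) (hut : u ≠ t)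
    (hr : Ch (Rs inc B t I W) u r) (hnd : (eds r).Nodup) :
    ∃ W' g', St inc A B T t I W' g' ∧ endp t (W' g') = endp u r ∧ endp u r ≠ t ∧
      (∀ u' h' x', h' ∉ eds r → Us t I W u' h' x' → Us t I W' u' h' x') := by
  induction r generalizing W g u with
  | nil => exact ⟨W, g, st, hu, hut, fun _ _ _ _ h => h⟩
  | cons p r ih =>
    rw [eds_cons, List.nodup_cons] at hnd
    obtain ⟨W1, g1, st1, h1, h2, _⟩ := st.move hu hut hr.1
    obtain ⟨W2, g2, st2, h3, h4, h5⟩ := ih st1 h1 hr.1.2.2.1 (by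
      refine Ch_mono hr.2 ?_
      rintro u q hq ⟨a1, a2, a3, a4⟩
      refine ⟨a1, a2, a3, h2 _ _ _ ?_ a4⟩
      rintro hc; apply hnd.1; rw [← hc]; exact List.mem_map_of_mem hq) hnd.2
    refine ⟨W2, g2, st2, h3, h4, ?_⟩
    intro u' h' x' hh hus
    simp only [eds_cons, List.mem_cons, not_or] at hh
    exact h5 _ _ _ hh.2 (h2 _ _ _ hh.1 hus)

/-- reach -/
def Rch (inc : E → Sym2 V) (B : Set E) (t : V) (I : Set E) (W : E → List (E × V)) (u y : V) :
    Prop := ∃ r, Ch (Rs inc B t I W) u r ∧ endp u r = y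

lemma St.reach {inc : E → Sym2 V} {A B B' : Set E} {T : Set V} {t : V} {I W g}
    (st : St inc A B T t I W g) {u y} (hu : endp t (W g) = u) (hut : u ≠ t)
    (hBB : B' ⊆ B)
    (hr : Rch inc B' t I W u y) :
    ∃ W' g', St inc A B T t I W' g' ∧ endp t (W' g') = y ∧ y ≠ t ∧
      (∀ u' h' x', h' ∉ B' → Us t I W u' h' x' → Us t I W' u' h' x') := by
  obtain ⟨r, h1, rfl⟩ := hr
  obtain ⟨r', h2, h3, h4, h5⟩ := shorten _ _ _ h1
  have hB : ∀ h ∈ eds r', h ∈ B' := by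
    clear h3 h4 h5 hu hut h1
    induction r' generalizing u with
    | nil => simp
    | cons p r ih =>
      intro h hh
      rw [eds_cons, List.mem_cons] at hh
      rcases hh with rfl | hh
      · exact h2.1.2.1
      · exact ih h2.2 h hh
  have hnd : (eds r').Nodup := eds_nodup (inc := inc)
    (Ch_mono h2 (fun u p _ hp => hp.1)) h5
  obtain ⟨W', g', a, b, c, d⟩ := st.chain hu hut (Ch_mono h2
    (S' := Rs inc B t I W) (fun u p _ hp => ⟨hp.1, hBB hp.2.1, hp.2.2⟩)) hnd
  rw [h3] at b c
  refine ⟨W', g', a, b, c, fun u' h' x' hh => d u' h' x' (fun hc => hh (hB _ hc))⟩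

lemma Rch.refl {inc : E → Sym2 V} {B : Set E} {t : V} {I W} (u : V) : Rch inc B t I W u u :=
  ⟨[], trivial, rfl⟩

lemma Rch.step {inc : E → Sym2 V} {B : Set E} {t : V} {I W} {u y z h}
    (h1 : Rch inc B t I W u y) (h2 : Rs inc B t I W y h z) : Rch inc B t I W u z := by
  obtain ⟨r, hr, rfl⟩ := h1
  exact ⟨r ++ [(h, z)], by simp [hr, h2], by simp⟩

lemma Rch.ne {inc : E → Sym2 V} {B : Set E} {t : V} {I W} {u y}
    (h1 : Rch inc B t I W u y) (hu : u ≠ t) : y ≠ t := by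
  obtain ⟨r, hr, rfl⟩ := h1
  induction r generalizing u with
  | nil => exact hu
  | cons p r ih => exact ih hr.1.2.2.1 hr.2

lemma St.mono {inc : E → Sym2 V} {A B B' : Set E} {T : Set V} {t : V} {I W g}
    (st : St inc A B T t I W g) (h : ∀ i ∈ I, ∀ k ∈ eds (W i), k ∈ B → k ∈ B') :
    St inc A B' T t I W g :=
  ⟨⟨st.lk.wk, st.lk.nr, fun i hi k hk => h i hi k hk (st.lk.sub i hi k hk), st.lk.dj, st.lk.cov⟩,
    st.nd, st.mem, st.fn⟩

end LC

end Part2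

section Part3
namespace LC

variable {V : Type*} {E : Type*}

/-- context of a split -/
structure Ctx (inc : E → Sym2 V) (A : Set E) (T : Set V) (s v w : V) (e f : E) : Prop where
  hs : s ∈ T
  hv : v ∉ T
  hws : w ≠ s
  he : inc e = s(s, v)
  hf : inc f = s(v, w)
  eA : e ∈ A
  fA : f ∈ A
  par : Par inc A T

lemma Ctx.sv {inc : E → Sym2 V} {A T s v w e f} (c : Ctx inc A T s v w e f) : s ≠ v := by
  rintro rfl; exact c.hv c.hs

lemma Ctx.ef {inc : E → Sym2 V} {A T s v w e f} (c : Ctx inc A T s v w e f) : e ≠ f := by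
  rintro rfl
  have : s ∈ inc e := by rw [c.he]; simp
  rw [c.hf] at this
  rcases Sym2.mem_iff.1 this with h | h
  · exact c.sv h
  · exact c.hws h.symm

open Classical in
lemma ncard_countP {P Q : E → Prop} {L : List E} (hn : L.Nodup)
    (h : ∀ k, Q k ↔ (k ∈ L ∧ P k)) :
    {k | Q k}.Finite ∧ {k | Q k}.ncard = L.countP (fun k => decide (P k)) := by
  have : {k | Q k} = ↑((L.filter (fun k => decide (P k))).toFinset) := by
    ext k; simp [h]
  rw [this]
  refine ⟨Finset.finite_toSet _, ?_⟩
  rw [Set.ncard_coe_finset, List.toFinset_card_of_nodup (hn.filter _), List.countP_eq_length_filter]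

section
variable {inc : E → Sym2 V} {A : Set E} {T : Set V} {s v w : V} {e f : E}

lemma Ctx.linked_of_avoid (c : Ctx inc A T s v w e f) [DecidableEq E] {t : V} (hst : s ≠ t)
    (hwt : w ≠ t) {I W}
    (h : Lk inc A (A \ {e, f}) t I W) (h' : ∀ i ∈ I, endp t (W i) ∈ T ∧ endp t (W i) ≠ t) :
    Linked (Function.update inc e s(s, w)) (A \ {f}) T t := by
  refine ⟨I, W, ⟨?_, h.nr, ?_, h.dj, ?_⟩, h'⟩
  · intro i hi
    refine IsWk_congr (h.wk i hi) ?_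
    intro k hk
    have := h.sub i hi k hk
    have hke : k ≠ e := by rintro rfl; exact this.2 (by simp)
    simp [hke]
  · intro i hi k hk
    have := h.sub i hi k hk
    exact ⟨this.1, fun hc => this.2 (by simp at hc; simp [hc])⟩
  · intro k hk ht
    by_cases hke : k = e
    · subst hke; simp [hst.symm, hwt.symm] at ht
    · simp [hke] at ht
      exact h.cov k hk.1 ht

lemma Ctx.linked_of_w (c : Ctx inc A T s v w e f) [DecidableEq E] {t : V} (hst : s ≠ t)
    (hwt : w ≠ t) {I W g}
    (st : St inc A (A \ {e, f}) T t I W g) (h' : endp t (W g) = w) :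
    Linked (Function.update inc e s(s, w)) (A \ {f}) T t := by
  have h := st.lk
  have hke : ∀ i ∈ I, ∀ k ∈ eds (W i), k ≠ e := by
    rintro i hi k hk rfl
    exact (h.sub i hi k hk).2 (by simp)
  have hgne : W g ≠ [] := by
    intro hc; rw [hc] at h'; exact hwt h'.symm
  have hu : ∀ j, j ≠ g → Function.update W g (W g ++ [(e, s)]) j = W j := by
    intro j hj; simp [hj]
  refine ⟨I, Function.update W g (W g ++ [(e, s)]), ⟨?_, ?_, ?_, ?_, ?_⟩, ?_⟩
  · intro i hi
    have h1 : IsWk (Function.update inc e s(s, w)) t (W i) := by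
      refine IsWk_congr (h.wk i hi) ?_
      intro k hk
      simp [hke i hi k hk]
    by_cases hig : i = g
    · subst hig; simp [h1, h', Sym2.eq_swap]
    · rw [hu i hig]; exact h1
  · intro i hi
    by_cases hig : i = g
    · subst hig; simp [h.nr i hi, hst.symm]
    · rw [hu i hig]; exact h.nr i hi
  · intro i hi k hk
    have key : k ∈ eds (W i) → k ∈ A \ {f} := by
      intro hk
      have := h.sub i hi k hk
      exact ⟨this.1, fun hc => this.2 (by simp at hc; simp [hc])⟩
    by_cases hig : i = g
    · subst hig; simp at hk
      rcases hk with hk | rfl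
      · exact key hk
      · exact ⟨c.eA, by simpa using c.ef⟩
    · rw [hu i hig] at hk; exact key hk
  · intro i hi j hj k h1 h2
    by_cases hig : i = g <;> by_cases hjg : j = g
    · rw [hig, hjg]
    · subst hig; rw [hu j hjg] at h2; simp at h1
      rcases h1 with h1 | rfl
      · exact h.dj _ hi _ hj _ h1 h2
      · exact absurd rfl (hke _ hj _ h2)
    · subst hjg; rw [hu i hig] at h1; simp at h2
      rcases h2 with h2 | rfl
      · exact h.dj _ hi _ hj _ h1 h2
      · exact absurd rfl (hke _ hi _ h1)
    · rw [hu i hig] at h1; rw [hu j hjg] at h2; exact h.dj _ hi _ hj _ h1 h2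
  · intro k hk ht
    by_cases hke : k = e
    · subst hke; simp [hst.symm, hwt.symm] at ht
    · simp [hke] at ht
      refine h.cov_head ?_ k hk.1 ht
      intro j hj hne
      by_cases hjg : j = g
      · subst hjg; simp [List.head?_append, List.head?_eq_some_head hne]
      · simp [hjg]
  · intro i hi
    by_cases hig : i = g
    · subst hig; simp [c.hs, hst]
    · rw [hu i hig]; exact st.fn i hi hig

lemma Ctx.hotel_parity (c : Ctx inc A T s v w e f) {t : V} (htT : t ∈ T) {I W g}
    (st : St inc A (A \ {e, f}) T t I W g) (hg : endp t (W g) = v) {Q : List (E × V)}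
    (hQ : IsWk inc v Q) (hQn : (eds Q).Nodup) (hQB : ∀ h ∈ eds Q, h ∈ A \ {e, f})
    (hQu : ∀ h ∈ eds Q, ∀ i ∈ I, h ∉ eds (W i)) {Y : Set V} (hYT : Y ⊆ Tᶜ) (hwY : w ∉ Y)
    (hQY : endp v Q ∈ Y) {J : List E} (hJn : J.Nodup) (hJ : ∀ j ∈ J, j ∈ I ∧ j ≠ g)
    (hcr : ∀ h ∈ A, crs inc Y h → h = e ∨ h = f ∨ h ∈ eds Q ∨ h ∈ eds (W g) ∨
      ∃ i ∈ J, h ∈ eds (W i)) : False := by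
  classical
  have hdj : ∀ i ∈ I, ∀ h ∈ eds (W i), h ∈ A \ {e, f} := st.lk.sub
  set L : List E := [e, f] ++ (eds Q ++ (eds (W g) ++ J.flatMap (fun i => eds (W i)))) with hL
  have hLn : L.Nodup := by
    rw [hL, List.nodup_append, List.nodup_append, List.nodup_append, List.nodup_flatMap]
    refine ⟨by simp [c.ef], ⟨hQn, ⟨st.nd g st.mem, ⟨fun i hi => st.nd i (hJ i hi).1, ?_⟩, ?_⟩, ?_⟩, ?_⟩
    · rw [List.pairwise_iff_forall_sublist]
      intro a b hab
      have hne : a ≠ b := by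
        have := hJn.sublist hab; simp at this; exact this
      have ha : a ∈ J := hab.subset (by simp)
      have hb : b ∈ J := hab.subset (by simp)
      intro k h1 h2
      exact hne (st.lk.dj _ (hJ a ha).1 _ (hJ b hb).1 _ h1 h2)
    · rintro a ha b hb rfl
      simp only [List.mem_flatMap] at hb
      obtain ⟨j, hj, hb⟩ := hb
      exact (hJ j hj).2 (st.lk.dj _ (hJ j hj).1 _ st.mem _ hb ha)
    · rintro a ha b hb rfl
      simp only [List.mem_append, List.mem_flatMap] at hb
      rcases hb with hb | ⟨j, hj, hb⟩
      · exact hQu _ ha _ st.mem hb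
      · exact hQu _ ha _ (hJ j hj).1 hb
    · rintro a ha b hb rfl
      have hx : a ∈ A \ {e, f} := by
        simp only [List.mem_append, List.mem_flatMap] at hb
        rcases hb with hb | hb | ⟨j, hj, hb⟩
        · exact hQB _ hb
        · exact hdj _ st.mem _ hb
        · exact hdj _ (hJ j hj).1 _ hb
      simp at ha
      exact hx.2 (by simpa using ha)
  obtain ⟨h1, h2⟩ := ncard_countP (P := crs inc Y) (Q := fun h => h ∈ A ∧ crs inc Y h) hLn (by
    intro k
    refine ⟨fun hk => ⟨?_, hk.2⟩, fun hk => ⟨?_, hk.2⟩⟩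
    · have := hcr k hk.1 hk.2
      simp only [hL, List.mem_append, List.mem_flatMap, List.mem_cons, List.not_mem_nil, or_false]
      tauto
    · have := hk.1
      simp only [hL, List.mem_append, List.mem_flatMap, List.mem_cons, List.not_mem_nil, or_false] at this
      rcases this with (rfl | rfl) | hb | hb | ⟨j, hj, hb⟩
      · exact c.eA
      · exact c.fA
      · exact (hQB _ hb).1
      · exact (hdj _ st.mem _ hb).1
      · exact (hdj _ (hJ j hj).1 _ hb).1)
  have hev := c.par Y hYT h1
  rw [h2, hL, List.countP_append, List.countP_append, List.countP_append] at hev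
  have htY : t ∉ Y := fun h => hYT h htT
  have hsY : s ∉ Y := fun h => hYT h c.hs
  have e1 : Even (List.countP (fun h => decide (crs inc Y h)) [e, f]) := by
    have a1 := crs_iff (X := Y) c.he
    have a2 := crs_iff (X := Y) c.hf
    by_cases hvY : v ∈ Y
    · have b1 : crs inc Y e := by rw [a1]; tauto
      have b2 : crs inc Y f := by rw [a2]; tauto
      simp [b1, b2]
    · have b1 : ¬ crs inc Y e := by rw [a1]; tauto
      have b2 : ¬ crs inc Y f := by rw [a2]; tauto
      simp [b1, b2]
  have e2 := cross_parity Y hQ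
  have e3 := cross_parity Y (st.lk.wk g st.mem)
  have e4 : Even (List.countP (fun h => decide (crs inc Y h)) (J.flatMap (fun i => eds (W i)))) := by
    clear hcr hL hLn L h1 h2 hev
    induction J with
    | nil => simp
    | cons j J ih =>
      rw [List.flatMap_cons, List.countP_append]
      refine Even.add ?_ (ih (List.nodup_cons.1 hJn).2 (fun i hi => hJ i (by simp [hi])))
      have := hJ j (by simp)
      rw [cross_parity Y (st.lk.wk j this.1)]
      have h3 := hYT.trans (le_refl _)
      have h4 : endp t (W j) ∉ Y := fun h => hYT h (st.fn j this.1 this.2).1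
      tauto
  rw [hg] at e3
  simp only [Nat.even_add] at hev
  tauto

end

end LC

end Part3

section Part4
namespace LC

variable {V : Type*} {E : Type*}

/-- step along an unused edge -/
def Hs (inc : E → Sym2 V) (B : Set E) (I : Set E) (W : E → List (E × V))
    (u : V) (h : E) (x : V) : Prop :=
  inc h = s(u, x) ∧ h ∈ B ∧ ∀ i ∈ I, h ∉ eds (W i)

lemma Hs_mem {inc : E → Sym2 V} {B : Set E} {I : Set E} {W : E → List (E × V)} {u l}
    (h : Ch (Hs inc B I W) u l) : ∀ k ∈ eds l, k ∈ B ∧ ∀ i ∈ I, k ∉ eds (W i) := by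
  induction l generalizing u with
  | nil => simp
  | cons p l ih =>
    intro k hk
    rw [eds_cons, List.mem_cons] at hk
    rcases hk with rfl | hk
    · exact h.1.2
    · exact ih h.2 k hk

lemma Hs_not {inc : E → Sym2 V} {A B : Set E} {t : V} {I : Set E} {W : E → List (E × V)} {u l}
    (lk : Lk inc A B t I W) (hBA : B ⊆ A) 
    (h : Ch (Hs inc B I W) u l) : t ∉ vts l := by
  induction l generalizing u with
  | nil => simp
  | cons p l ih =>
    rw [vts_cons, List.mem_cons, not_or]
    refine ⟨?_, ih h.2⟩
    rintro rfl
    obtain ⟨i, hi, hh⟩ := lk.cov p.1 (hBA h.1.2.1) (by rw [h.1.1]; simp)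
    exact h.1.2.2 i hi hh

lemma hotel {inc : E → Sym2 V} {A B : Set E} {T : Set V} {t v : V} {I W g}
    (st : St inc A B T t I W g) (hg : endp t (W g) = v) (hvt : v ≠ t) (hBA : B ⊆ A)
    (ext : ∀ Q, Ch (Hs inc B I W) v Q → (eds Q).Nodup → ∀ F : Finset E, g ∈ F →
      ∃ i ∈ I, i ∉ F ∧ ∃ R, Ch (Hs inc B I W) (endp v Q) R ∧ (eds (Q ++ R)).Nodup ∧
        endp (endp v Q) R ∈ vts (W i)) :
    ∃ W', Lk inc A B t I W' ∧ ∀ i ∈ I, endp t (W' i) ∈ T ∧ endp t (W' i) ≠ t := by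
  classical
  -- states: (Q, F, i, a, b)
  let P : List (E × V) × Finset E × E × List (E × V) × List (E × V) → Prop :=
    fun ⟨Q, F, i, a, b⟩ => Ch (Hs inc B I W) v Q ∧ (eds Q).Nodup ∧ g ∈ F ∧ i ∈ F ∧ i ∈ I ∧
      W i = a ++ b ∧ endp t a = endp v Q
  have step : ∀ x : {x // P x}, ∃ y : {x // P x}, ∃ R, y.1.1 = x.1.1 ++ R ∧
      y.1.2.1 = insert y.1.2.2.1 x.1.2.1 ∧ y.1.2.2.1 ∉ x.1.2.1 := by
    rintro ⟨⟨Q, F, i, a, b⟩, h1, h2, h3, h4, h5, h6, h7⟩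
    obtain ⟨j, hj, hjF, R, hR, hn, hv⟩ := ext Q h1 h2 F h3
    obtain ⟨a', b', hab, ha', _⟩ := split_vts t _ _ hv
    exact ⟨⟨⟨Q ++ R, insert j F, j, a', b'⟩, by simp [h1, hR], hn, by simp [h3], by simp, hj, hab,
      by rw [ha', endp_append]⟩, R, rfl, rfl, hjF⟩
  choose nxt R hQ hF hi using step
  let x0 : {x // P x} := ⟨⟨[], {g}, g, W g, []⟩, trivial, by simp, by simp, by simp, st.mem, by simp,
    by simpa using hg⟩
  let sq : ℕ → {x // P x} := fun n => Nat.rec x0 (fun _ x => nxt x) n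
  have sqs : ∀ n, sq (n + 1) = nxt (sq n) := fun n => rfl
  let q : ℕ → List (E × V) := fun n => (sq n).1.1
  let F : ℕ → Finset E := fun n => (sq n).1.2.1
  let ix : ℕ → E := fun n => (sq n).1.2.2.1
  let a : ℕ → List (E × V) := fun n => (sq n).1.2.2.2.1
  let b : ℕ → List (E × V) := fun n => (sq n).1.2.2.2.2
  let r : ℕ → List (E × V) := fun n => R (sq n)
  have hP : ∀ n, Ch (Hs inc B I W) v (q n) ∧ (eds (q n)).Nodup ∧ g ∈ F n ∧ ix n ∈ F n ∧ ix n ∈ I ∧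
      W (ix n) = a n ++ b n ∧ endp t (a n) = endp v (q n) := fun n => (sq n).2
  have hq : ∀ n, q (n + 1) = q n ++ r n := fun n => hQ (sq n)
  have hFs : ∀ n, F (n + 1) = insert (ix (n + 1)) (F n) := fun n => hF (sq n)
  have hix : ∀ n, ix (n + 1) ∉ F n := fun n => hi (sq n)
  have hix0 : ix 0 = g := rfl
  clear_value sq q F ix a b r
  clear hQ hF hi sqs
  have Fmono : Monotone F := monotone_nat_of_le_succ (fun n => by rw [hFs]; exact Finset.subset_insert _ _)
  have ixlt : ∀ m n, m < n → ix m ≠ ix n := by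
    intro m n hmn heq
    obtain ⟨k, rfl⟩ := Nat.exists_eq_add_of_lt hmn
    apply hix (m + k)
    rw [← heq]
    exact Fmono (Nat.le_add_right m k) (hP m).2.2.2.1
  have ixinj : ∀ m n, ix m = ix n → m = n := by
    intro m n h
    rcases lt_trichotomy m n with hl | hl | hl
    · exact absurd h (ixlt _ _ hl)
    · exact hl
    · exact absurd h.symm (ixlt _ _ hl)
  have ixg : ∀ n, ix (n + 1) ≠ g := by
    intro n h; rw [← hix0] at h; have := ixinj _ _ h; omega
  have qmono : ∀ m n, m ≤ n → eds (q m) ⊆ eds (q n) := by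
    intro m n hmn
    induction n, hmn using Nat.le_induction with
    | base => exact fun _ h => h
    | succ n hmn ih => intro k hk; rw [hq]; simp [ih hk]
  have rq : ∀ n k, k ∈ eds (r n) → k ∈ eds (q (n + 1)) := by
    intro n k hk; rw [hq]; simp [hk]
  have rlt : ∀ m n k, m < n → k ∈ eds (r m) → k ∉ eds (r n) := by
    intro m n k hmn h1 h2
    have h3 := qmono (m + 1) n hmn (rq m k h1)
    have h4 := (hP (n + 1)).2.1
    rw [hq, eds_append, List.nodup_append] at h4
    exact h4.2.2 _ h3 _ h2 rfl
  have rinj : ∀ m n k, k ∈ eds (r m) → k ∈ eds (r n) → m = n := by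
    intro m n k h1 h2
    rcases lt_trichotomy m n with hl | hl | hl
    · exact absurd h2 (rlt _ _ _ hl h1)
    · exact hl
    · exact absurd h1 (rlt _ _ _ hl h2)
  have rch : ∀ n, Ch (Hs inc B I W) (endp v (q n)) (r n) := by
    intro n
    have := (hP (n + 1)).1
    rw [hq, Ch_append] at this
    exact this.2
  have qt : ∀ n, endp v (q n) ≠ t := by
    intro n hc
    have h1 := Hs_not st.lk hBA (hP n).1
    have h2 := endp_mem v (q n)
    rw [hc, List.mem_cons] at h2
    rcases h2 with h2 | h2
    · exact hvt h2.symm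
    · exact h1 h2
  have ane : ∀ n, a n ≠ [] := by
    intro n hc
    have := (hP n).2.2.2.2.2.2
    rw [hc] at this
    exact qt n this.symm
  have wkn := fun n => st.lk.wk (ix n) (hP n).2.2.2.2.1
  have nrn := fun n => st.lk.nr (ix n) (hP n).2.2.2.2.1
  have hI := fun n => (hP n).2.2.2.2.1
  have hab := fun n => (hP n).2.2.2.2.2.1
  have haq := fun n => (hP n).2.2.2.2.2.2
  have ain : ∀ n k, k ∈ eds (a n) → k ∈ eds (W (ix n)) := by intro n k hk; rw [hab]; simp [hk]
  have bin : ∀ n k, k ∈ eds (b n) → k ∈ eds (W (ix n)) := by intro n k hk; rw [hab]; simp [hk]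
  have abd : ∀ n k, k ∈ eds (a n) → k ∉ eds (b n) := by
    intro n k h1 h2
    have := st.nd _ (hI n)
    rw [hab, eds_append, List.nodup_append] at this
    exact this.2.2 _ h1 _ h2 rfl
  let W' : E → List (E × V) := fun j =>
    if h : ∃ n, ix n = j then a h.choose ++ (r h.choose ++ b (h.choose + 1)) else W j
  have e1 : ∀ n, W' (ix n) = a n ++ (r n ++ b (n + 1)) := by
    intro n
    have h : ∃ m, ix m = ix n := ⟨n, rfl⟩
    have h2 : h.choose = n := ixinj _ _ h.choose_spec
    simp only [W', dif_pos h, h2]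
  have e2 : ∀ j, (¬ ∃ n, ix n = j) → W' j = W j := by
    intro j h; simp only [W', dif_neg h]
  clear_value W'
  have hmem : ∀ j ∈ I, ∀ k, k ∈ eds (W' j) → (∃ n, j = ix n ∧ k ∈ eds (a n)) ∨
      (∃ n, j = ix n ∧ k ∈ eds (r n)) ∨ (∃ n, j = ix n ∧ k ∈ eds (b (n + 1))) ∨
      ((¬ ∃ n, ix n = j) ∧ k ∈ eds (W j)) := by
    intro j hj k hk
    by_cases h : ∃ n, ix n = j
    · obtain ⟨n, rfl⟩ := h
      rw [e1] at hk
      simp only [eds_append, List.mem_append] at hk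
      rcases hk with hk | hk | hk
      · exact Or.inl ⟨n, rfl, hk⟩
      · exact Or.inr (Or.inl ⟨n, rfl, hk⟩)
      · exact Or.inr (Or.inr (Or.inl ⟨n, rfl, hk⟩))
    · rw [e2 j h] at hk; tauto
  have hun : ∀ n k, k ∈ eds (r n) → ∀ i ∈ I, k ∉ eds (W i) := fun n k hk => (Hs_mem (rch n) k hk).2
  refine ⟨W', ⟨?_, ?_, ?_, ?_, ?_⟩, ?_⟩
  · intro j hj
    by_cases h : ∃ n, ix n = j
    · obtain ⟨n, rfl⟩ := h
      rw [e1, IsWk_append, IsWk_append, haq, ← endp_append, ← hq]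
      have h1 := wkn n
      have h2 := wkn (n + 1)
      rw [hab, IsWk_append, haq] at h1 h2
      refine ⟨h1.1, Ch_mono (rch n) (fun u p _ hp => hp.1), h2.2⟩
    · rw [e2 j h]; exact st.lk.wk j hj
  · intro j hj
    by_cases h : ∃ n, ix n = j
    · obtain ⟨n, rfl⟩ := h
      have h1 := nrn n
      have h2 := nrn (n + 1)
      rw [hab] at h1 h2
      simp only [vts_append, List.mem_append, not_or] at h1 h2
      rw [e1]
      simp only [vts_append, List.mem_append, not_or]
      exact ⟨h1.1, Hs_not st.lk hBA (rch n), h2.2⟩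
    · rw [e2 j h]; exact st.lk.nr j hj
  · intro j hj k hk
    rcases hmem j hj k hk with ⟨n, rfl, h⟩ | ⟨n, rfl, h⟩ | ⟨n, rfl, h⟩ | ⟨_, h⟩
    · exact st.lk.sub _ (hI n) _ (ain n k h)
    · exact (Hs_mem (rch n) k h).1
    · exact st.lk.sub _ (hI (n + 1)) _ (bin _ k h)
    · exact st.lk.sub _ hj _ h
  · intro j hj j' hj' k hk hk'
    rcases hmem j hj k hk with ⟨n, rfl, h⟩ | ⟨n, rfl, h⟩ | ⟨n, rfl, h⟩ | ⟨h0, h⟩ <;>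
    rcases hmem j' hj' k hk' with ⟨m, rfl, h'⟩ | ⟨m, rfl, h'⟩ | ⟨m, rfl, h'⟩ | ⟨h0', h'⟩
    · exact st.lk.dj _ hj _ hj' _ (ain n k h) (ain m k h')
    · exact absurd (ain n k h) (hun m k h' _ hj)
    · have := ixinj _ _ (st.lk.dj _ hj _ (hI (m + 1)) _ (ain n k h) (bin _ k h'))
      subst this; exact absurd h' (abd _ _ h)
    · exact absurd ⟨n, st.lk.dj _ hj _ hj' _ (ain n k h) h'⟩ h0'
    · exact absurd (ain m k h') (hun n k h _ hj')
    · rw [rinj n m k h h']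
    · exact absurd (bin _ k h') (hun n k h _ (hI _))
    · exact absurd h' (hun n k h _ hj')
    · have := ixinj _ _ (st.lk.dj _ hj' _ (hI (n + 1)) _ (ain m k h') (bin _ k h))
      subst this; exact absurd h (abd _ _ h')
    · exact absurd (bin _ k h) (hun m k h' _ (hI _))
    · have := ixinj _ _ (st.lk.dj _ (hI (n + 1)) _ (hI (m + 1)) _ (bin _ k h) (bin _ k h'))
      have : n = m := by omega
      rw [this]
    · exact absurd ⟨n + 1, st.lk.dj _ (hI _) _ hj' _ (bin _ k h) h'⟩ h0'
    · exact absurd ⟨m, st.lk.dj _ hj' _ hj _ (ain m k h') h⟩ h0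
    · exact absurd h (hun m k h' _ hj)
    · exact absurd ⟨m + 1, st.lk.dj _ (hI _) _ hj _ (bin _ k h') h⟩ h0
    · exact st.lk.dj _ hj _ hj' _ h h'
  · apply st.lk.cov_head
    intro j hj hne
    by_cases h : ∃ n, ix n = j
    · obtain ⟨n, rfl⟩ := h
      rw [e1, hab]; simp [List.head?_append, List.head?_eq_some_head (ane n)]
    · rw [e2 j h]
  · intro j hj
    by_cases h : ∃ n, ix n = j
    · obtain ⟨n, rfl⟩ := h
      have : endp t (W' (ix n)) = endp t (W (ix (n + 1))) := by
        rw [e1, hab (n + 1), endp_append, endp_append, endp_append, haq, haq, ← endp_append v, ← hq]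
      rw [this]
      exact st.fn _ (hI _) (ixg n)
    · rw [e2 j h]
      exact st.fn j hj (fun hc => h ⟨0, by rw [hix0, hc]⟩)

section
variable {inc : E → Sym2 V} {A : Set E} {T : Set V} {s v w : V} {e f : E}

lemma Ctx.open (c : Ctx inc A T s v w e f) [DecidableEq E] {t : V} (htT : t ∈ T) (hst : s ≠ t)
    (hwt : w ≠ t) {I W g}
    (st : St inc A (A \ {e, f}) T t I W g) (hg : endp t (W g) = v) :
    Linked (Function.update inc e s(s, w)) (A \ {f}) T t := by
  have hvt : v ≠ t := by rintro rfl; exact c.hv htT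
  by_cases h1 : ∃ y, Rch inc (A \ {e, f}) t I W v y ∧ y ∈ T
  · obtain ⟨y, hy, hyT⟩ := h1
    obtain ⟨W', g', st', h2, h3, _⟩ := st.reach hg hvt le_rfl hy
    refine c.linked_of_avoid hst hwt st'.lk ?_
    intro i hi
    by_cases hig : i = g'
    · subst hig; rw [h2]; exact ⟨hyT, h3⟩
    · exact st'.fn i hi hig
  by_cases h2 : Rch inc (A \ {e, f}) t I W v w
  · obtain ⟨W', g', st', h2, h3, _⟩ := st.reach hg hvt le_rfl h2
    exact c.linked_of_w hst hwt st' h2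
  have hBA : A \ {e, f} ⊆ A := Set.sdiff_subset
  suffices hx : ∃ W', Lk inc A (A \ {e, f}) t I W' ∧
      ∀ i ∈ I, endp t (W' i) ∈ T ∧ endp t (W' i) ≠ t by
    obtain ⟨W', h3, h4⟩ := hx
    exact c.linked_of_avoid hst hwt h3 h4
  refine hotel st hg hvt hBA ?_
  intro Q hQ hQn F hgF
  by_contra hcon
  push Not at hcon
  have hrch : ∀ R, Ch (Hs inc (A \ {e, f}) I W) v R → Rch inc (A \ {e, f}) t I W v (endp v R) := by
    intro R hR
    refine ⟨R, ?_, rfl⟩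
    have ht := Hs_not st.lk hBA hR
    refine Ch_mono hR ?_
    rintro u p hp ⟨a1, a2, a3⟩
    refine ⟨a1, a2, ?_, Or.inl a3⟩
    rintro rfl; exact ht (List.mem_map_of_mem hp)
  let Y : Set V := {y | ∃ R, Ch (fun u h x => Hs inc (A \ {e, f}) I W u h x ∧ h ∉ eds Q) (endp v Q) R ∧
    endp (endp v Q) R = y}
  have hYr : ∀ y ∈ Y, Rch inc (A \ {e, f}) t I W v y := by
    rintro y ⟨R, hR, rfl⟩
    have := hrch (Q ++ R) (by
      rw [Ch_append]; exact ⟨hQ, Ch_mono hR (fun u p _ hp => hp.1)⟩)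
    rwa [endp_append] at this
  have hYF : ∀ i ∈ I, ∀ y ∈ Y, y ∈ vts (W i) → i ∈ F := by
    intro i hi y hy hyv
    by_contra hiF
    obtain ⟨R, hR, hRy⟩ := hy
    obtain ⟨R', b1, b2, b3, b4⟩ := shorten _ _ _ hR
    refine hcon i hi hiF R' (Ch_mono b1 (fun u p _ hp => hp.1)) ?_ (by rw [b2, hRy]; exact hyv)
    rw [eds_append, List.nodup_append]
    refine ⟨hQn, eds_nodup (inc := inc) (Ch_mono b1 (fun u p _ hp => hp.1.1)) b4, ?_⟩
    rintro k hk k' hk' rfl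
    clear b2 b3 b4 hcon
    revert b1 
    generalize endp v Q = z
    intro b1
    induction R' generalizing z with
    | nil => simp at hk'
    | cons p R' ih =>
      rw [eds_cons, List.mem_cons] at hk'
      rcases hk' with rfl | hk'
      · exact b1.1.2 hk
      · exact ih hk' _ b1.2
  classical
  refine c.hotel_parity htT st hg (Y := Y) (J := (F.filter (fun i => i ∈ I ∧ i ≠ g)).toList)
    (Ch_mono hQ (fun u p _ hp => hp.1)) hQn (fun k hk => (Hs_mem hQ k hk).1)
    (fun k hk => (Hs_mem hQ k hk).2) ?_ ?_ ?_ (Finset.nodup_toList _) ?_ ?_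
  · intro y hy hyT; exact h1 ⟨y, hYr y hy, hyT⟩
  · intro hw; exact h2 (hYr w hw)
  · exact ⟨[], trivial, rfl⟩
  · intro j hj; simp at hj; exact hj.2
  · intro k hkA hk
    by_cases hke : k = e
    · exact Or.inl hke
    by_cases hkf : k = f
    · exact Or.inr (Or.inl hkf)
    by_cases hkQ : k ∈ eds Q
    · exact Or.inr (Or.inr (Or.inl hkQ))
    obtain ⟨x, y, hxy, hx, hy⟩ := hk
    have hkB : k ∈ A \ {e, f} := ⟨hkA, by simp [hke, hkf]⟩
    by_cases hused : ∃ i ∈ I, k ∈ eds (W i)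
    · obtain ⟨i, hi, hki⟩ := hused
      by_cases hig : i = g
      · subst hig; tauto
      right; right; right; right
      refine ⟨i, ?_, hki⟩
      simp only [Finset.mem_toList, Finset.mem_filter]
      refine ⟨hYF i hi x hx ?_, hi, hig⟩
      have h5 := mem_eds_ends (st.lk.wk i hi) hki x (by rw [hxy]; simp)
      rw [List.mem_cons] at h5
      rcases h5 with rfl | h5
      · exact absurd ((hYr x hx).ne hvt) (by simp)
      · exact h5
    · push Not at hused
      exfalso; apply hy
      obtain ⟨R, hR, hRx⟩ := hx
      refine ⟨R ++ [(k, y)], ?_, by simp⟩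
      rw [Ch_append, hRx]
      exact ⟨hR, ⟨⟨hxy, hkB, hused⟩, hkQ⟩, trivial⟩

end

end LC

end Part4

section Part5
namespace LC

variable {V : Type*} {E : Type*}

lemma split_unique {l a b a' b' : List (E × V)} {h x x'} (hn : (eds l).Nodup)
    (h1 : l = a ++ (h, x) :: b) (h2 : l = a' ++ (h, x') :: b') : a = a' ∧ x = x' ∧ b = b' := by
  rw [h1] at h2 hn
  simp only [eds_append, eds_cons, List.nodup_append, List.nodup_cons, List.mem_cons] at hn
  obtain ⟨n1, ⟨n2, n3⟩, n4⟩ := hn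
  rcases List.append_eq_append_iff.1 h2 with ⟨c, hc1, hc2⟩ | ⟨c, hc1, hc2⟩
  · rcases c with _ | ⟨q, c⟩
    · simp at hc1 hc2; simp [hc1, hc2]
    · simp at hc2
      exfalso; apply n2; rw [hc2.2]; simp
  · rcases c with _ | ⟨q, c⟩
    · simp at hc1 hc2; simp [hc1, hc2]
    · simp at hc2
      exfalso; apply n4 h _ h (Or.inl rfl) rfl; rw [hc1, ← hc2.1]; simp

section
variable {inc : E → Sym2 V} {A : Set E} {T : Set V} {s v w : V} {e f : E}

lemma TP.last_e {t : V} {l : List (E × V)} (h : TP inc T t l) (hsT : s ∈ T)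
    (hst : s ≠ t) (hv : v ∉ T) (he : inc e = s(s, v)) {l1 x l2} (hl : l = l1 ++ (e, x) :: l2) :
    x = s ∧ l2 = [] ∧ endp t l1 = v := by
  have hwk := h.wk
  have hnd := h.nd
  have h_int := h.int
  rw [hl] at hwk hnd h_int
  simp only [IsWk_append, IsWk_cons] at hwk
  have h2 := hwk.2.1
  rw [he] at h2
  have hend : endp t (l1 ++ (e, x) :: l2) = endp x l2 := by simp
  rw [hend] at h_int
  rw [vts_append, vts_cons, List.nodup_cons, List.nodup_append, List.nodup_cons] at hnd
  obtain ⟨n0, n1, ⟨n2, n3⟩, n4⟩ := hnd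
  rcases Sym2.eq_iff.1 h2 with ⟨h3, h4⟩ | ⟨h3, h4⟩
  · exfalso
    have hl1 : l1 ≠ [] := by rintro rfl; exact hst h3
    have h5 := endp_mem' t l1 hl1
    rw [← h3] at h5
    have h6 := h_int s (by simp [h5]) hsT
    have h7 : endp x l2 ∈ x :: vts l2 := endp_mem x l2
    exact n4 s h5 _ h7 h6
  · refine ⟨h3.symm, ?_, h4.symm⟩
    have h6 := h_int x (by simp) (by rw [← h3]; exact hsT)
    by_contra hne
    have := endp_mem' x l2 hne
    rw [← h6] at this
    exact n2 this

lemma SLk.trunc {B : Set E} {t : V} {I W} (h : SLk inc A B T t I W) [DecidableEq E] {q a b}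
    (hq : q ∈ I) (hW : W q = a ++ b) (ha : endp t a ≠ t) :
    St inc A B T t I (Function.update W q a) q := by
  have hk := h.1
  have hane : a ≠ [] := by rintro rfl; exact ha rfl
  have hu : ∀ j, j ≠ q → Function.update W q a j = W j := by
    intro j hj; simp [hj]
  have hsub : ∀ j k, k ∈ eds (Function.update W q a j) → k ∈ eds (W j) := by
    intro j k hk'
    by_cases hj : j = q
    · subst hj; rw [hW]; simp at hk'; simp [hk']
    · rwa [hu j hj] at hk'
  refine ⟨⟨?_, ?_, ?_, ?_, ?_⟩, ?_, hq, ?_⟩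
  · intro j hj
    by_cases hjq : j = q
    · subst hjq; have := hk.wk j hj; rw [hW, IsWk_append] at this; simpa using this.1
    · rw [hu j hjq]; exact hk.wk j hj
  · intro j hj
    by_cases hjq : j = q
    · subst hjq; have := hk.nr j hj; rw [hW] at this; simp at this; simpa using this.1
    · rw [hu j hjq]; exact hk.nr j hj
  · intro j hj k hk'; exact hk.sub j hj k (hsub j k hk')
  · intro i hi j hj k h1 h2; exact hk.dj i hi j hj k (hsub i k h1) (hsub j k h2)
  · apply hk.cov_head
    intro j hj hne
    by_cases hjq : j = q
    · subst hjq; simp [hW, List.head?_append, List.head?_eq_some_head hane]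
    · rw [hu j hjq]
  · intro j hj
    by_cases hjq : j = q
    · subst hjq; have := (h.2 j hj).eds_nd; rw [hW, eds_append, List.nodup_append] at this
      simpa using this.1
    · rw [hu j hjq]; exact (h.2 j hj).eds_nd
  · intro j hj hjq
    rw [hu j hjq]; exact ⟨(h.2 j hj).fin, (h.2 j hj).ne⟩

/-- case (i), after swapping -/
lemma Ctx.case_in (c : Ctx inc A T s v w e f) [DecidableEq E] {t : V} (hst : s ≠ t)
    (hvt : v ≠ t) {I W} (h : Lk inc A A t I W)
    (h' : ∀ i ∈ I, endp t (W i) ∈ T ∧ endp t (W i) ≠ t) {q l1 l2} (hq : q ∈ I)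
    (hW : W q = l1 ++ (f, v) :: l2) (hl1 : endp t l1 = w) (hf1 : f ∉ eds l1) (he1 : e ∉ eds l1)
    (heo : ∀ i ∈ I, i ≠ q → e ∉ eds (W i)) :
    Linked (Function.update inc e s(s, w)) (A \ {f}) T t := by
  have hu : ∀ j, j ≠ q → Function.update W q (l1 ++ [(e, s)]) j = W j := by
    intro j hj; simp [hj]
  have hfq : f ∈ eds (W q) := by rw [hW]; simp
  have h1q : ∀ k, k ∈ eds l1 → k ∈ eds (W q) := by intro k hk; rw [hW]; simp [hk]
  refine ⟨I, Function.update W q (l1 ++ [(e, s)]), ⟨?_, ?_, ?_, ?_, ?_⟩, ?_⟩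
  · intro j hj
    by_cases hjq : j = q
    · subst hjq
      have := h.wk j hj
      rw [hW, IsWk_append] at this
      have h3 : IsWk (Function.update inc e s(s, w)) t l1 := by
        refine IsWk_congr this.1 ?_
        intro k hk
        have : k ≠ e := by rintro rfl; exact he1 hk
        simp [this]
      simp [h3, hl1, Sym2.eq_swap]
    · rw [hu j hjq]
      refine IsWk_congr (h.wk j hj) ?_
      intro k hk
      have : k ≠ e := by rintro rfl; exact heo j hj hjq hk
      simp [this]
  · intro j hj
    by_cases hjq : j = q
    · subst hjq
      have := h.nr j hj
      rw [hW] at this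
      simp at this
      simp [this, hst.symm]
    · rw [hu j hjq]; exact h.nr j hj
  · intro j hj k hk
    by_cases hjq : j = q
    · subst hjq
      simp at hk
      rcases hk with hk | rfl
      · exact ⟨h.sub j hj k (h1q k hk), by rintro rfl; exact hf1 hk⟩
      · exact ⟨c.eA, by simpa using c.ef⟩
    · rw [hu j hjq] at hk
      exact ⟨h.sub j hj k hk, by rintro rfl; exact hjq (h.dj _ hj _ hq _ hk hfq)⟩
  · intro i hi j hj k h1 h2
    by_cases hiq : i = q <;> by_cases hjq : j = q
    · rw [hiq, hjq]
    · subst hiq; rw [hu j hjq] at h2; simp at h1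
      rcases h1 with h1 | rfl
      · exact h.dj _ hi _ hj _ (h1q _ h1) h2
      · exact absurd h2 (heo j hj hjq)
    · subst hjq; rw [hu i hiq] at h1; simp at h2
      rcases h2 with h2 | rfl
      · exact h.dj _ hi _ hj _ h1 (h1q _ h2)
      · exact absurd h1 (heo i hi hiq)
    · rw [hu i hiq] at h1; rw [hu j hjq] at h2; exact h.dj _ hi _ hj _ h1 h2
  · intro k hk ht
    by_cases hke : k = e
    · exact ⟨q, hq, by simp [hke]⟩
    simp [hke] at ht
    obtain ⟨i, hi, hki⟩ := h.cov k hk.1 ht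
    obtain ⟨x, m, hm⟩ := head_edge (h.wk i hi) (h.nr i hi) hki ht
    refine ⟨i, hi, ?_⟩
    by_cases hiq : i = q
    · subst hiq
      rw [hW] at hm
      rcases l1 with _ | ⟨p, l1⟩
      · simp at hm; exact absurd hm.1.1.symm hk.2
      · simp at hm; simp [hm.1]
    · rw [hu i hiq]; exact hki
  · intro j hj
    by_cases hjq : j = q
    · subst hjq; simp [c.hs, hst]
    · rw [hu j hjq]; exact h' j hj

/-- case (i) -/
lemma Ctx.case_in' (c : Ctx inc A T s v w e f) [DecidableEq E] {t : V} (hst : s ≠ t)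
    (hvt : v ≠ t) {I W} (h : SLk inc A A T t I W) {q l1 l2} (hq : q ∈ I)
    (hW : W q = l1 ++ (f, v) :: l2) (hl1 : endp t l1 = w) :
    Linked (Function.update inc e s(s, w)) (A \ {f}) T t := by
  have hk := h.1
  have hndq := (h.2 q hq).eds_nd
  have hfl1 : f ∉ eds l1 := by
    rw [hW, eds_append, List.nodup_append] at hndq
    intro hc; exact hndq.2.2 _ hc f (by simp) rfl
  have hel1 : e ∉ eds l1 := by
    intro hc
    obtain ⟨a, x, b, hab⟩ := split_eds e l1 hc
    have := (h.2 q hq).last_e c.hs hst c.hv c.he (l1 := a) (x := x) (l2 := b ++ (f, v) :: l2)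
      (by rw [hW, hab]; simp)
    simp at this
  by_cases hp : ∃ p ∈ I, p ≠ q ∧ e ∈ eds (W p)
  · obtain ⟨p, hp, hpq, hep⟩ := hp
    obtain ⟨l3, x, b, hab⟩ := split_eds e _ hep
    obtain ⟨rfl, rfl, hl3⟩ := (h.2 p hp).last_e c.hs hst c.hv c.he hab
    have hqp := hpq.symm
    set W' := Function.update (Function.update W p (l3 ++ l2)) q (l1 ++ (f, v) :: [(e, x)]) with hW'
    have e1 : W' q = l1 ++ (f, v) :: [(e, x)] := by simp [hW']
    have e2 : W' p = l3 ++ l2 := by simp [hW', hpq]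
    have e3 : ∀ j, j ≠ q → j ≠ p → W' j = W j := by intro j h1 h2; simp [hW', h1, h2]
    clear_value W'
    have cs : ∀ j, j = q ∨ j = p ∨ (j ≠ q ∧ j ≠ p) := by intro j; tauto
    have hl3ne : l3 ≠ [] := by rintro rfl; exact hvt hl3.symm
    have wkq := hk.wk q hq
    have wkp := hk.wk p hp
    rw [hW, IsWk_append, IsWk_cons] at wkq
    rw [hab, IsWk_append] at wkp
    have nrq := hk.nr q hq
    have nrp := hk.nr p hp
    rw [hW] at nrq
    rw [hab] at nrp
    simp only [vts_append, vts_cons, List.mem_append, List.mem_cons, not_or] at nrq nrp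
    have m1 : ∀ k, k ∈ eds l1 → k ∈ eds (W q) := by intro k hk; rw [hW]; simp [hk]
    have m2 : ∀ k, k ∈ eds l2 → k ∈ eds (W q) := by intro k hk; rw [hW]; simp [hk]
    have m3 : ∀ k, k ∈ eds l3 → k ∈ eds (W p) := by intro k hk; rw [hab]; simp [hk]
    have m4 : f ∈ eds (W q) := by rw [hW]; simp
    have m5 : ∀ k, k ∈ eds l2 → k ∉ eds l1 ∧ k ≠ f := by
      intro k hk
      simp only [hW, eds_append, eds_cons, List.nodup_append, List.nodup_cons, List.mem_cons] at hndq
      exact ⟨fun hc => hndq.2.2 k hc k (Or.inr hk) rfl, by rintro rfl; exact hndq.2.1.1 hk⟩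
    have m6 : e ∉ eds l3 := by
      have := (h.2 p hp).eds_nd
      rw [hab, eds_append, List.nodup_append] at this
      intro hc; exact this.2.2 _ hc e (by simp) rfl
    -- classification
    have own : ∀ j ∈ I, ∀ k, k ∈ eds (W' j) → (j = q ∧ (k ∈ eds l1 ∨ k = f)) ∨ (j = q ∧ k = e) ∨
        (j = p ∧ k ∈ eds l3) ∨ (j = p ∧ k ∈ eds l2) ∨ (j ≠ q ∧ j ≠ p ∧ k ∈ eds (W j)) := by
      intro j hj k hk
      rcases cs j with rfl | rfl | ⟨h1, h2⟩
      · rw [e1] at hk; simp at hk; tauto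
      · rw [e2] at hk; simp at hk; tauto
      · rw [e3 j h1 h2] at hk; tauto
    have q1 : ∀ k, (k ∈ eds l1 ∨ k = f) → k ∈ eds (W q) := by
      rintro k (hk | rfl)
      · exact m1 k hk
      · exact m4
    refine c.case_in hst hvt (I := I) (W := W') ⟨?_, ?_, ?_, ?_, ?_⟩ ?_ hq e1 hl1 hfl1 hel1 ?_
    · intro j hj
      rcases cs j with rfl | rfl | ⟨h1, h2⟩
      · rw [e1, IsWk_append, IsWk_cons]
        exact ⟨wkq.1, wkq.2.1, by simp [c.he, Sym2.eq_swap]⟩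
      · rw [e2, IsWk_append, hl3]; exact ⟨wkp.1, wkq.2.2⟩
      · rw [e3 j h1 h2]; exact hk.wk j hj
    · intro j hj
      rcases cs j with rfl | rfl | ⟨h1, h2⟩
      · rw [e1]; simp [nrq, hst.symm, hvt.symm]
      · rw [e2]; simp [nrp, nrq]
      · rw [e3 j h1 h2]; exact hk.nr j hj
    · intro j hj k hk'
      rcases own j hj k hk' with ⟨rfl, h1⟩ | ⟨rfl, h1⟩ | ⟨rfl, h1⟩ | ⟨rfl, h1⟩ | ⟨h1, h2, h3⟩
      · exact hk.sub _ hq _ (q1 k h1)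
      · rw [h1]; exact c.eA
      · exact hk.sub _ hp _ (m3 k h1)
      · exact hk.sub _ hq _ (m2 k h1)
      · exact hk.sub _ hj _ h3
    · intro i hi j hj k hk1 hk2
      rcases own i hi k hk1 with ⟨a1, h1⟩ | ⟨a1, h1⟩ | ⟨a1, h1⟩ | ⟨a1, h1⟩ | ⟨h1, h2, h3⟩ <;>
      rcases own j hj k hk2 with ⟨b1, h1'⟩ | ⟨b1, h1'⟩ | ⟨b1, h1'⟩ | ⟨b1, h1'⟩ | ⟨h1', h2', h3'⟩
      · rw [a1, b1]
      · rw [a1, b1]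
      · exact absurd (hk.dj _ hp _ hq _ (m3 k h1') (q1 k h1)) hpq
      · have := m5 k h1'; tauto
      · exact absurd (hk.dj _ hj _ hq _ h3' (q1 k h1)) h1'
      · rw [a1, b1]
      · rw [a1, b1]
      · subst h1; exact absurd h1' m6
      · subst h1; exact absurd (hk.dj _ hp _ hq _ hep (m2 _ h1')) hpq
      · subst h1; exact absurd (hk.dj _ hj _ hp _ h3' hep) h2'
      · exact absurd (hk.dj _ hp _ hq _ (m3 k h1) (q1 k h1')) hpq
      · subst h1'; exact absurd h1 m6
      · rw [a1, b1]
      · rw [a1, b1]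
      · exact absurd (hk.dj _ hj _ hp _ h3' (m3 k h1)) h2'
      · have := m5 k h1; tauto
      · subst h1'; exact absurd (hk.dj _ hp _ hq _ hep (m2 _ h1)) hpq
      · rw [a1, b1]
      · rw [a1, b1]
      · exact absurd (hk.dj _ hj _ hq _ h3' (m2 k h1)) h1'
      · exact absurd (hk.dj _ hi _ hq _ h3 (q1 k h1')) h1
      · subst h1'; exact absurd (hk.dj _ hi _ hp _ h3 hep) h2
      · exact absurd (hk.dj _ hi _ hp _ h3 (m3 k h1')) h2
      · exact absurd (hk.dj _ hi _ hq _ h3 (m2 k h1')) h1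
      · exact hk.dj _ hi _ hj _ h3 h3'
    · apply hk.cov_head
      intro j hj hne
      rcases cs j with rfl | rfl | ⟨h1, h2⟩
      · rw [e1, hW]; rcases l1 with _ | ⟨p, l1⟩ <;> simp
      · rw [e2, hab]; simp [List.head?_append, List.head?_eq_some_head hl3ne]
      · rw [e3 j h1 h2]
    · intro j hj
      rcases cs j with rfl | rfl | ⟨h1, h2⟩
      · rw [e1]; simp [c.hs, hst]
      · have : endp t (W' j) = endp t (W q) := by rw [e2, hW]; simp [hl3]
        rw [this]; exact ⟨(h.2 q hq).fin, (h.2 q hq).ne⟩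
      · rw [e3 j h1 h2]; exact ⟨(h.2 j hj).fin, (h.2 j hj).ne⟩
    · intro j hj hjq hej
      rcases own j hj e hej with ⟨b1, h1'⟩ | ⟨b1, h1'⟩ | ⟨b1, h1'⟩ | ⟨b1, h1'⟩ | ⟨h1', h2', h3'⟩
      · exact hjq b1
      · exact hjq b1
      · exact m6 h1'
      · exact absurd (hk.dj _ hp _ hq _ hep (m2 _ h1')) hpq
      · exact absurd (hk.dj _ hj _ hp _ h3' hep) h2'
  · push Not at hp
    exact c.case_in hst hvt hk (fun i hi => ⟨(h.2 i hi).fin, (h.2 i hi).ne⟩) hq hW hl1 hfl1 hel1 hp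

/-- f used outward by q, e not used by other walks -/
lemma Ctx.case_out (c : Ctx inc A T s v w e f) [DecidableEq E] {t : V} (htT : t ∈ T) (hst : s ≠ t)
    (hvt : v ≠ t) {I W} (h : SLk inc A A T t I W) {q l1 l2} (hq : q ∈ I)
    (hW : W q = l1 ++ (f, w) :: l2) (hl1 : endp t l1 = v)
    (hp : ∀ p ∈ I, p ≠ q → e ∉ eds (W p)) :
    Linked (Function.update inc e s(s, w)) (A \ {f}) T t := by
  have hk := h.1
  have hwt : w ≠ t := by
    have := hk.nr q hq
    rw [hW] at this
    rintro rfl; simp at this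
  have hndq := (h.2 q hq).eds_nd
  have hfl1 : f ∉ eds l1 := by
    rw [hW, eds_append, List.nodup_append] at hndq
    intro hc; exact hndq.2.2 _ hc f (by simp) rfl
  have hel1 : e ∉ eds l1 := by
    intro hc
    obtain ⟨a, x, b, hab⟩ := split_eds e l1 hc
    have := (h.2 q hq).last_e c.hs hst c.hv c.he (l1 := a) (x := x) (l2 := b ++ (f, w) :: l2)
      (by rw [hW, hab]; simp)
    simp at this
  have st := h.trunc hq hW (by rw [hl1]; exact hvt)
  refine c.open htT hst hwt (st.mono ?_) (by simpa using hl1)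
  intro i hi k hk' hkA
  refine ⟨hkA, ?_⟩
  by_cases hiq : i = q
  · subst hiq
    simp at hk'
    rintro (rfl | rfl)
    · exact hel1 hk'
    · exact hfl1 hk'
  · simp [hiq] at hk'
    rintro (rfl | rfl)
    · exact hp i hi hiq hk'
    · exact hiq (hk.dj _ hi _ hq _ hk' (by rw [hW]; simp))

/-- cases when e is unused -/
lemma Ctx.star_unused (c : Ctx inc A T s v w e f) [DecidableEq E] {t : V} (htT : t ∈ T)
    (hst : s ≠ t) {I W} (h : SLk inc A A T t I W) (hp : ∀ p ∈ I, e ∉ eds (W p)) :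
    Linked (Function.update inc e s(s, w)) (A \ {f}) T t := by
  have hvt : v ≠ t := by rintro rfl; exact c.hv htT
  by_cases hf : ∃ q ∈ I, f ∈ eds (W q)
  · obtain ⟨q, hq, hfq⟩ := hf
    obtain ⟨l1, x, l2, hW⟩ := split_eds f _ hfq
    have := h.1.wk q hq
    rw [hW, IsWk_append, IsWk_cons] at this
    have h2 := this.2.1
    rw [c.hf] at h2
    rcases Sym2.eq_iff.1 h2 with ⟨h3, h4⟩ | ⟨h3, h4⟩
    · simp only at h4; subst h4
      exact c.case_out htT hst hvt h hq hW h3.symm (fun p hp' _ => hp p hp')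
    · simp only at h3; subst h3
      exact c.case_in' hst hvt h hq hW h4.symm
  · push Not at hf
    have hwt : w ≠ t := by
      rintro rfl
      obtain ⟨i, hi, hfi⟩ := h.1.cov f c.fA (by rw [c.hf]; simp)
      exact hf i hi hfi
    refine c.linked_of_avoid hst hwt (I := I) (W := W) ⟨h.1.wk, h.1.nr, ?_, h.1.dj, h.1.cov⟩
      (fun i hi => ⟨(h.2 i hi).fin, (h.2 i hi).ne⟩)
    intro i hi k hk
    refine ⟨h.1.sub i hi k hk, ?_⟩
    rintro (rfl | rfl)
    · exact hp i hi hk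
    · exact hf i hi hk

/-- orthogonality -/
structure Orth (inc : E → Sym2 V) (A : Set E) (T : Set V) (t : V) (I : Set E)
    (W : E → List (E × V)) (X : Set V) : Prop where
  lk : SLk inc A A T t I W
  mem : t ∈ X
  uniq : ∀ x ∈ X, x ∈ T → x = t
  o1 : ∀ h ∈ A, ∀ u x, inc h = s(u, x) → u ∈ X → x ∉ X →
    ∃ i ∈ I, ∃ l1 l2, W i = l1 ++ (h, x) :: l2 ∧ endp t l1 = u
  o2 : ∀ i ∈ I, ∀ l1 h x l2, W i = l1 ++ (h, x) :: l2 → x ∈ X → endp t l1 ∈ X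

lemma Ctx.star (c : Ctx inc A T s v w e f) [DecidableEq E] {t : V} (htT : t ∈ T)
    (hst : s ≠ t) (hL : Linked inc A T t) :
    Linked (Function.update inc e s(s, w)) (A \ {f}) T t ∨
    ∃ I W X, Orth inc A T t I W X ∧ v ∈ X := by
  have hvt : v ≠ t := by rintro rfl; exact c.hv htT
  obtain ⟨I, W, h⟩ := hL.strict
  have hk := h.1
  by_cases he : ∃ p ∈ I, e ∈ eds (W p)
  swap
  · push Not at he; exact Or.inl (c.star_unused htT hst h he)
  obtain ⟨p, hp, hep⟩ := he
  obtain ⟨l3, x, b, hab⟩ := split_eds e _ hep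
  obtain ⟨hxs, rfl, hl3⟩ := (h.2 p hp).last_e c.hs hst c.hv c.he hab
  subst hxs
  have m6 : e ∉ eds l3 := by
    have := (h.2 p hp).eds_nd
    rw [hab, eds_append, List.nodup_append] at this
    intro hc; exact this.2.2 _ hc e (by simp) rfl
  have st := h.trunc hp hab (by rw [hl3]; exact hvt)
  have hu : ∀ j, j ≠ p → Function.update W p l3 j = W j := by
    intro j hj; simp [hj]
  have hue : Function.update W p l3 p = l3 := by simp
  set W1 := Function.update W p l3 with hW1
  clear_value W1
  have heo : ∀ i ∈ I, e ∉ eds (W1 i) := by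
    intro i hi hc
    by_cases hip : i = p
    · subst hip; rw [hue] at hc; exact m6 hc
    · rw [hu i hip] at hc; exact hip (hk.dj _ hi _ hp _ hc hep)
  have hend : endp t (W1 p) = v := by rw [hue, hl3]
  by_cases hf : ∃ q ∈ I, f ∈ eds (W q)
  swap
  · left
    push Not at hf
    have hwt : w ≠ t := by
      rintro rfl
      obtain ⟨i, hi, hfi⟩ := h.1.cov f c.fA (by rw [c.hf]; simp)
      exact hf i hi hfi
    refine c.open htT hst hwt (st.mono ?_) hend
    intro i hi k hk' hkA
    refine ⟨hkA, ?_⟩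
    rintro (rfl | rfl)
    · exact heo i hi hk'
    · by_cases hip : i = p
      · subst hip; rw [hue] at hk'; apply hf i hi; rw [hab]; simp [hk']
      · rw [hu i hip] at hk'; exact hf i hi hk'
  obtain ⟨q, hq, hfq⟩ := hf
  obtain ⟨l1, y, l2, hW⟩ := split_eds f _ hfq
  have hwkq := h.1.wk q hq
  rw [hW, IsWk_append, IsWk_cons] at hwkq
  have h2 := hwkq.2.1
  rw [c.hf] at h2
  rcases Sym2.eq_iff.1 h2 with ⟨h3, h4⟩ | ⟨h3, h4⟩
  swap
  · left; simp only at h3; subst h3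
    exact c.case_in' hst hvt h hq hW h4.symm
  simp only at h4; subst h4
  by_cases hpq : p = q
  · left
    subst hpq
    refine c.case_out htT hst hvt h hq hW h3.symm ?_
    intro i hi hip hc
    exact hip (hk.dj _ hi _ hp _ hc hep)
  have hwt : w ≠ t := by
    have := hk.nr q hq
    rw [hW] at this
    rintro rfl; simp at this
  have st2 : St inc A (A \ {e}) T t I W1 p := st.mono (by
    intro i hi k hk' hkA
    refine ⟨hkA, ?_⟩
    rintro rfl
    exact heo i hi hk')
  have hBB : A \ {e, f} ⊆ A \ {e} := by
    intro k hk; exact ⟨hk.1, fun hc => hk.2 (by simp at hc; simp [hc])⟩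
  by_cases hr1 : ∃ y, Rch inc (A \ {e, f}) t I W1 v y ∧ y ∈ T
  · left
    obtain ⟨y, hy, hyT⟩ := hr1
    obtain ⟨W', g', st', h5, h6, _⟩ := st2.reach hend hvt hBB hy
    obtain ⟨W2, h7, h8⟩ := strict_of (T := T) st'.lk (by
      intro i hi
      by_cases hig : i = g'
      · subst hig; rw [h5]; exact ⟨hyT, h6⟩
      · exact st'.fn i hi hig)
    refine c.star_unused htT hst (I := I) (W := W2) ⟨⟨h7.1.wk, h7.1.nr,
      fun i hi k hk => (h7.1.sub i hi k hk).1, h7.1.dj, h7.1.cov⟩, h7.2⟩ ?_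
    intro i hi hc
    exact (h7.1.sub i hi e hc).2 rfl
  by_cases hr2 : Rch inc (A \ {e, f}) t I W1 v w
  · left
    obtain ⟨W', g', st', h5, h6, h7⟩ := st2.reach hend hvt hBB hr2
    have h8 := h7 w f v (by simp) (Or.inr ⟨q, hq, l1, l2, by rw [hu q (Ne.symm hpq), hW], h3.symm⟩)
    by_cases h9 : ∃ i ∈ I, f ∈ eds (W' i)
    · obtain ⟨W2, g2, st3, a1, _, a3⟩ := st'.move h5 h6 (h := f) (x := v)
        ⟨by rw [c.hf, Sym2.eq_swap], ⟨c.fA, by simpa using c.ef.symm⟩, hvt, h8⟩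
      refine c.open htT hst hwt (st3.mono ?_) a1
      intro i hi k hk' hkA
      refine ⟨hkA.1, ?_⟩
      rintro (rfl | rfl)
      · exact hkA.2 rfl
      · exact a3 h9 i hi hk'
    · push Not at h9
      refine c.linked_of_w hst hwt (st'.mono ?_) h5
      intro i hi k hk' hkA
      refine ⟨hkA.1, ?_⟩
      rintro (rfl | rfl)
      · exact hkA.2 rfl
      · exact h9 i hi hk'
  right
  have hwX : ¬ (w = t ∨ Rch inc (A \ {e, f}) t I W1 v w) := by tauto
  refine ⟨I, W, {z | z = t ∨ Rch inc (A \ {e, f}) t I W1 v z}, ⟨h, Or.inl rfl, ?_, ?_, ?_⟩,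
    Or.inr (Rch.refl v)⟩
  · rintro z (hz | hz) hzT
    · exact hz
    · exact absurd ⟨z, hz, hzT⟩ hr1
  · intro k hkA u y hinc hu' hy'
    by_cases hke : k = e
    · subst hke
      rw [c.he] at hinc
      rcases Sym2.eq_iff.1 hinc with ⟨b1, b2⟩ | ⟨b1, b2⟩
      · subst b1
        rcases hu' with hz | hz
        · exact absurd hz hst
        · exact absurd ⟨_, hz, c.hs⟩ hr1
      · subst b1; subst b2
        exact ⟨p, hp, l3, [], hab, hl3⟩
    by_cases hkf : k = f
    · subst hkf
      rw [c.hf] at hinc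
      rcases Sym2.eq_iff.1 hinc with ⟨b1, b2⟩ | ⟨b1, b2⟩
      · subst b1; subst b2
        exact ⟨q, hq, l1, l2, hW, h3.symm⟩
      · subst b2; exact absurd hu' hwX
    rcases hu' with rfl | hu'
    · obtain ⟨i, hi, hki⟩ := hk.cov k hkA (by rw [hinc]; simp)
      obtain ⟨x', m, hm⟩ := head_edge (hk.wk i hi) (hk.nr i hi) hki (by rw [hinc]; simp)
      have := hk.wk i hi
      rw [hm] at this
      have h5 := this.1
      simp only at h5
      rw [hinc] at h5
      have h6 : y = x' := by
        rcases Sym2.eq_iff.1 h5 with ⟨_, h6⟩ | ⟨h6, h7⟩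
        · exact h6
        · rw [h7, h6]
      exact ⟨i, hi, [], m, by rw [hm, h6]; simp, rfl⟩
    · have hkB : k ∈ A \ {e, f} := ⟨hkA, by simp [hke, hkf]⟩
      have hyt : y ≠ t := fun hc => hy' (Or.inl hc)
      have hnu : ¬ Us t I W1 u k y := fun hc => hy' (Or.inr (hu'.step ⟨hinc, hkB, hyt, hc⟩))
      have hused : ∃ i ∈ I, k ∈ eds (W1 i) := by
        by_contra hc; push Not at hc; exact hnu (Or.inl hc)
      obtain ⟨i, hi, hki⟩ := hused
      obtain ⟨a, z, b, hab'⟩ := split_eds k _ hki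
      have h5 := st.lk.wk i hi
      rw [hab', IsWk_append, IsWk_cons] at h5
      have h6 := h5.2.1
      rw [hinc] at h6
      rcases Sym2.eq_iff.1 h6 with ⟨b1, b2⟩ | ⟨b1, b2⟩
      · simp only at b2; subst b2
        by_cases hip : i = p
        · subst hip
          rw [hue] at hab'
          exact ⟨i, hi, a, b ++ [(e, x)], by rw [hab, hab']; simp, b1.symm⟩
        · rw [hu i hip] at hab'
          exact ⟨i, hi, a, b, hab', b1.symm⟩
      · simp only at b1; subst b1
        exact absurd (Or.inr ⟨i, hi, a, b, hab', b2.symm⟩) hnu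
  · intro i hi a k z b hab' hz
    have hzt : z ≠ t := by
      have := hk.nr i hi
      rw [hab'] at this
      rintro rfl; simp at this
    have hzr : Rch inc (A \ {e, f}) t I W1 v z := by
      rcases hz with hz | hz
      · exact absurd hz hzt
      · exact hz
    have hwk := hk.wk i hi
    rw [hab', IsWk_append, IsWk_cons] at hwk
    have hinc := hwk.2.1
    simp only at hinc
    by_cases hke : k = e
    · subst hke
      obtain ⟨b1, b2, b3⟩ := (h.2 i hi).last_e c.hs hst c.hv c.he hab'
      subst b1
      exact absurd ⟨_, hzr, c.hs⟩ hr1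
    by_cases hkf : k = f
    · subst hkf
      exfalso
      have : i = q := hk.dj _ hi _ hq _ (by rw [hab']; simp) hfq
      subst this
      have := split_unique (h.2 i hi).eds_nd hab' hW
      exact hr2 (this.2.1 ▸ hzr)
    by_cases hyt : endp t a = t
    · exact Or.inl hyt
    right
    have hkA := hk.sub i hi k (by rw [hab']; simp)
    refine hzr.step (h := k) ⟨by rw [hinc, Sym2.eq_swap], ⟨hkA, by simp [hke, hkf]⟩, hyt, Or.inr ?_⟩
    by_cases hip : i = p
    · subst hip
      rw [hab] at hab'
      rcases List.append_eq_append_iff.1 hab' with ⟨c', hc1, hc2⟩ | ⟨c', hc1, hc2⟩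
      · exfalso
        rcases c' with _ | ⟨q', c'⟩
        · simp at hc2; exact hke hc2.1.1.symm
        · simp at hc2
      · rcases c' with _ | ⟨q', c'⟩
        · simp at hc2; exact absurd hc2.1.1 hke
        · simp at hc2
          exact ⟨i, hi, a, c', by rw [hue, hc1, ← hc2.1], rfl⟩
    · exact ⟨i, hi, a, b, by rw [hu i hip, hab'], rfl⟩

end

end LC

end Part5

section Part6
namespace LC

variable {V : Type*} {E : Type*}

section
variable {inc : E → Sym2 V} {A : Set E} {T : Set V} {s v w : V} {e f : E}

lemma Orth.inX {t : V} {I W X} (o : Orth inc A T t I W X) {i} (hi : i ∈ I) :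
    ∀ l1 l2, W i = l1 ++ l2 → endp t l1 ∈ X → ∀ y ∈ t :: vts l1, y ∈ X := by
  intro l1
  induction l1 using List.reverseRecOn with
  | nil => intro l2 _ _ y hy; simp at hy; rw [hy]; exact o.mem
  | append_singleton l p ih =>
    intro l2 hW hX y hy
    have h1 : endp t l ∈ X := o.o2 i hi l p.1 p.2 l2 (by rw [hW]; simp) (by simpa using hX)
    simp only [vts_append, vts_cons, vts_nil, List.mem_cons, List.mem_append, List.not_mem_nil,
      or_false] at hy
    rcases hy with hy | hy | hy
    · rw [hy]; exact o.mem
    · exact ih (p :: l2) (by rw [hW]; simp) h1 y (by simp [hy])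
    · rw [hy]; simpa using hX

/-- specification of the inner walk -/
structure Sp (inc0 : E → Sym2 V) (t : V) (I0 : Set E) (W0 : E → List (E × V)) (X0 : Set V) (h : E)
    (S : List (E × V)) (u0 x0 : V) (i0 : E) (l1 l2 : List (E × V)) : Prop where
  inc : inc0 h = s(u0, x0)
  u : u0 ∈ X0
  x : x0 ∉ X0
  i : i0 ∈ I0
  W : W0 i0 = l1 ++ (h, x0) :: l2
  e : endp t l1 = u0
  X : ∀ y ∈ t :: vts l1, y ∈ X0
  wk : IsWk inc0 u0 S
  en : endp u0 S = t
  ed : eds S = (eds l1).reverse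
  vt : u0 :: vts S = (t :: vts l1).reverse

lemma Orth.exSp {t : V} {I W X} (o : Orth inc A T t I W X) {h} (hA : h ∈ A) (hc : crs inc X h) :
    ∃ S u x i l1 l2, Sp inc t I W X h S u x i l1 l2 := by
  obtain ⟨u, x, hinc, hu, hx⟩ := hc
  obtain ⟨i, hi, l1, l2, hW, he⟩ := o.o1 h hA u x hinc hu hx
  have hwk := o.lk.1.wk i hi
  rw [hW, IsWk_append] at hwk
  obtain ⟨m, h1, h2, h3, h4⟩ := rev_walk hwk.1
  rw [he] at h1 h2 h4
  exact ⟨m, u, x, i, l1, l2, hinc, hu, hx, hi, hW, he, o.inX hi l1 _ hW (he ▸ hu), h1, h2, h3, h4⟩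

lemma Orth.lemC {t : V} {I W X} (o : Orth inc A T t I W X) (htT : t ∈ T) (hsT : s ∈ T)
    (hst : s ≠ t) (hvT : v ∉ T) (hvX : v ∈ X) (heA : e ∈ A) (he : inc e = s(s, v))
    (hL : ∀ t' ∈ T, Linked inc A T t') :
    ∃ l, TP inc T s l ∧ e ∈ eds l ∧ (∀ k ∈ eds l, k ∈ A) ∧
      ∀ t' ∈ T, Linked inc {k | k ∈ A ∧ k ∉ eds l} T t' := by
  classical
  have hsX : s ∉ X := fun h => hst (o.uniq s h hsT)
  have hec : crs inc X e := ⟨v, s, by rw [he, Sym2.eq_swap], hvX, hsX⟩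
  haveI : Nonempty V := ⟨s⟩
  have := fun h (hh : h ∈ A ∧ crs inc X h) => o.exSp hh.1 hh.2
  choose! S u x i l1 l2 hS using this
  have Sin : ∀ h, h ∈ A ∧ crs inc X h → ∀ k ∈ eds (S h), k ∈ A ∧ ∀ y ∈ inc k, y ∈ X := by
    intro h hh k hk
    have sp := hS h hh
    rw [sp.ed, List.mem_reverse] at hk
    have hwk := o.lk.1.wk _ sp.i
    rw [sp.W, IsWk_append] at hwk
    refine ⟨o.lk.1.sub _ sp.i _ (by rw [sp.W]; simp [hk]), ?_⟩
    intro y hy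
    exact sp.X y (mem_eds_ends hwk.1 hk y hy)
  have Sdj : ∀ h, h ∈ A ∧ crs inc X h → ∀ h', h' ∈ A ∧ crs inc X h' → ∀ k, k ∈ eds (S h) →
      k ∈ eds (S h') → h = h' := by
    intro h hh h' hh' k hk hk'
    have sp := hS h hh
    have sp' := hS h' hh'
    rw [sp.ed, List.mem_reverse] at hk
    rw [sp'.ed, List.mem_reverse] at hk'
    have hii : i h = i h' := o.lk.1.dj _ sp.i _ sp'.i k (by rw [sp.W]; simp [hk])
      (by rw [sp'.W]; simp [hk'])
    have hW := sp.W
    rw [hii, sp'.W] at hW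
    rcases List.append_eq_append_iff.1 hW with ⟨c, hc1, hc2⟩ | ⟨c, hc1, hc2⟩
    · rcases c with _ | ⟨q, c⟩
      · simp at hc2; exact hc2.1.1.symm
      · simp at hc2
        exfalso; apply sp'.x; apply sp.X; rw [hc1, ← hc2.1]; simp
    · rcases c with _ | ⟨q, c⟩
      · simp at hc2; exact hc2.1.1
      · simp at hc2
        exfalso; apply sp.x; apply sp'.X; rw [hc1, ← hc2.1]; simp
  have spe := hS e ⟨heA, hec⟩
  have hue : u e = v ∧ x e = s := by
    have := spe.inc
    rw [he] at this
    rcases Sym2.eq_iff.1 this with ⟨h1, h2⟩ | ⟨h1, h2⟩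
    · exact absurd (h1 ▸ spe.u) hsX
    · exact ⟨h2.symm, h1.symm⟩
  have hevt : v :: vts (S e) = (t :: vts (l1 e)).reverse := by rw [← spe.vt, hue.1]
  have hl1nd : (t :: vts (l1 e)).Nodup := by
    have := (o.lk.2 _ spe.i).nd
    rw [spe.W] at this
    refine this.sublist ?_
    simp
  have hSX : ∀ y ∈ v :: vts (S e), y ∈ X := by
    intro y hy; rw [hevt, List.mem_reverse] at hy; exact spe.X y hy
  have hend : endp s ((e, v) :: S e) = t := by
    have := spe.en; rw [hue.1] at this; simpa using this
  have hcrn : ∀ h, crs inc X h → (∃ y ∈ inc h, y ∉ X) := by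
    rintro h ⟨a, b, h1, h2, h3⟩
    exact ⟨b, by rw [h1]; simp, h3⟩
  have tp : TP inc T s ((e, v) :: S e) := by
    refine ⟨?_, ?_, ?_, ?_, ?_⟩
    · have := spe.wk; rw [hue.1] at this; exact ⟨he, this⟩
    · rw [vts_cons, List.nodup_cons]
      refine ⟨fun hc => hsX (hSX s hc), ?_⟩
      simp only
      rw [hevt, List.nodup_reverse]; exact hl1nd
    · rw [hend]; exact htT
    · rw [hend]; exact hst.symm
    · intro y hy hyT
      rw [hend]; exact o.uniq y (hSX y hy) hyT
  refine ⟨(e, v) :: S e, tp, by simp, ?_, ?_⟩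
  · intro k hk
    simp at hk
    rcases hk with rfl | hk
    · exact heA
    · exact (Sin e ⟨heA, hec⟩ k hk).1
  intro t2 ht2
  have hlmem : ∀ k, k ∈ eds ((e, v) :: S e) ↔ k = e ∨ k ∈ eds (l1 e) := by
    intro k; simp [spe.ed]
  by_cases htt : t2 = t
  · subst htt
    refine ⟨I \ {i e}, W, ⟨fun j hj => o.lk.1.wk j hj.1, fun j hj => o.lk.1.nr j hj.1, ?_,
      fun j hj j' hj' => o.lk.1.dj j hj.1 j' hj'.1, ?_⟩,
      fun j hj => ⟨(o.lk.2 j hj.1).fin, (o.lk.2 j hj.1).ne⟩⟩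
    · intro j hj k hk
      refine ⟨o.lk.1.sub j hj.1 k hk, ?_⟩
      rw [hlmem]
      intro hc
      apply hj.2
      refine o.lk.1.dj j hj.1 _ spe.i k hk ?_
      rw [spe.W]
      rcases hc with rfl | hc
      · simp
      · simp [hc]
    · intro k hk ht
      obtain ⟨j, hj, hkj⟩ := o.lk.1.cov k hk.1 ht
      refine ⟨j, ⟨hj, ?_⟩, hkj⟩
      intro hji
      apply hk.2
      rw [hlmem]
      rw [Set.mem_singleton_iff] at hji
      obtain ⟨y, m, hm⟩ := head_edge (o.lk.1.wk j hj) (o.lk.1.nr j hj) hkj ht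
      rw [hji, spe.W] at hm
      rcases hh : l1 e with _ | ⟨p, m'⟩
      · rw [hh] at hm; simp at hm; exact Or.inl hm.1.1.symm
      · rw [hh] at hm; simp at hm; right; simp [hm.1]
  have ht2X : t2 ∉ X := fun h => htt (o.uniq t2 h ht2)
  obtain ⟨I2, W2, h2⟩ := (hL t2 ht2).strict
  have ex : ∀ j ∈ I2, ∃ L, IsWk inc t2 L ∧ t2 ∉ vts L ∧ (endp t2 L ∈ T ∧ endp t2 L ≠ t2) ∧
      L.head? = (W2 j).head? ∧
      (∀ k ∈ eds L, (k ∈ eds (W2 j) ∧ ∃ y ∈ inc k, y ∉ X) ∨ ∃ h, h ∈ eds (W2 j) ∧ h ∈ eds L ∧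
        (h ∈ A ∧ crs inc X h) ∧ k ∈ eds (S h)) ∧
      (e ∈ eds L → ∃ a x b, W2 j = a ++ (e, x) :: b ∧ x ∈ X) := by
    intro j hj
    have tp2 := h2.2 j hj
    by_cases hX : ∃ y ∈ vts (W2 j), y ∈ X
    · obtain ⟨a, h, y, b, hW2, hy, ha⟩ := trunc (· ∈ X) t2 _ hX
      have hwk := tp2.wk
      rw [hW2, IsWk_append, IsWk_cons] at hwk
      simp only at hwk
      have hnr := tp2.nr
      rw [hW2] at hnr
      simp only [vts_append, vts_cons, List.mem_append, List.mem_cons, not_or] at hnr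
      have haX : ∀ z ∈ t2 :: vts a, z ∉ X := by
        intro z hz
        rw [List.mem_cons] at hz
        rcases hz with rfl | hz
        · exact ht2X
        · exact ha z hz
      have hcr : h ∈ A ∧ crs inc X h := by
        refine ⟨h2.1.sub j hj h (by rw [hW2]; simp), (crs_iff hwk.2.1).2 ?_⟩
        have := haX _ (endp_mem t2 a)
        tauto
      have sp := hS h hcr
      have huy : u h = y := by
        have := sp.inc
        rw [hwk.2.1] at this
        rcases Sym2.eq_iff.1 this with ⟨h3, h4⟩ | ⟨h3, h4⟩
        · exact absurd (h3 ▸ sp.u) (haX _ (endp_mem t2 a))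
        · exact h4.symm
      have hSh : ∀ z ∈ vts (S h), z ∈ X := by
        intro z hz
        apply sp.X
        rw [← List.mem_reverse, ← sp.vt]; simp [hz]
      have hen : endp t2 (a ++ (h, y) :: S h) = t := by
        have := sp.en
        rw [huy] at this
        simpa using this
      have hae : ∀ k ∈ eds a, ∀ z ∈ inc k, z ∉ X := by
        intro k hk z hz; exact haX z (mem_eds_ends hwk.1 hk z hz)
      refine ⟨a ++ (h, y) :: S h, ?_, ?_, ?_, ?_, ?_, ?_⟩
      · rw [IsWk_append, IsWk_cons]
        refine ⟨hwk.1, hwk.2.1, ?_⟩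
        have := sp.wk
        rwa [huy] at this
      · simp only [vts_append, vts_cons, List.mem_append, List.mem_cons, not_or]
        exact ⟨hnr.1, hnr.2.1, fun hc => ht2X (hSh _ hc)⟩
      · rw [hen]; exact ⟨htT, Ne.symm htt⟩
      · rw [hW2]; rcases a with _ | ⟨p, a⟩ <;> simp
      · intro k hk
        simp only [eds_append, eds_cons, List.mem_append, List.mem_cons] at hk
        rcases hk with hk | rfl | hk
        · left
          refine ⟨by rw [hW2]; simp [hk], ?_⟩
          obtain ⟨z, hz⟩ : ∃ z, z ∈ inc k := by
            induction inc k using Sym2.ind with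
            | h a b => exact ⟨a, by simp⟩
          exact ⟨z, hz, hae k hk z hz⟩
        · left
          exact ⟨by rw [hW2]; simp, hcrn _ hcr.2⟩
        · right
          exact ⟨h, by rw [hW2]; simp, by simp, hcr, hk⟩
      · intro hk
        simp only [eds_append, eds_cons, List.mem_append, List.mem_cons] at hk
        rcases hk with hk | hk | hk
        · exact absurd hvX (hae e hk v (by rw [he]; simp))
        · rw [hk]; exact ⟨a, y, b, hW2, hy⟩
        · exact absurd ((Sin h hcr e hk).2 s (by rw [he]; simp)) hsX
    · push Not at hX
      have hnX : ∀ k ∈ eds (W2 j), ∀ z ∈ inc k, z ∉ X := by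
        intro k hk z hz
        have := mem_eds_ends tp2.wk hk z hz
        rw [List.mem_cons] at this
        rcases this with rfl | h
        · exact ht2X
        · exact hX z h
      refine ⟨W2 j, tp2.wk, tp2.nr, ⟨tp2.fin, tp2.ne⟩, rfl, ?_, ?_⟩
      · intro k hk; left; refine ⟨hk, ?_⟩
        obtain ⟨z, hz⟩ : ∃ z, z ∈ inc k := by
          induction inc k using Sym2.ind with
          | h a b => exact ⟨a, by simp⟩
        exact ⟨z, hz, hnX k hk z hz⟩
      · intro hc; exact absurd hvX (hnX e hc v (by rw [he]; simp))
  choose! L g1 g2 g3 g4 g5 g6 using ex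
  refine ⟨{j | j ∈ I2 ∧ e ∉ eds (L j)}, L, ⟨fun j hj => g1 j hj.1, fun j hj => g2 j hj.1, ?_, ?_, ?_⟩,
    fun j hj => g3 j hj.1⟩
  · rintro j ⟨hj, hje⟩ k hk
    rcases g5 j hj k hk with ⟨h3, y, hy, hyX⟩ | ⟨h, h3, h4, h5, h6⟩
    · refine ⟨h2.1.sub j hj k h3, ?_⟩
      simp only [eds_cons, List.mem_cons, not_or]
      refine ⟨by rintro rfl; exact hje hk, ?_⟩
      intro hc; exact hyX ((Sin e ⟨heA, hec⟩ k hc).2 y hy)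
    · refine ⟨(Sin h h5 k h6).1, ?_⟩
      simp only [eds_cons, List.mem_cons, not_or]
      refine ⟨by rintro rfl; exact hje hk, ?_⟩
      intro hc
      have := Sdj h h5 e ⟨heA, hec⟩ k h6 hc
      rw [this] at h4; exact hje h4
  · rintro j ⟨hj, hje⟩ j' ⟨hj', hje'⟩ k hk hk'
    rcases g5 j hj k hk with ⟨h3, y, hy, hyX⟩ | ⟨h, h3, h4, h5, h6⟩ <;>
    rcases g5 j' hj' k hk' with ⟨h3', y', hy', hyX'⟩ | ⟨h', h3', h4', h5', h6'⟩
    · exact h2.1.dj _ hj _ hj' _ h3 h3'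
    · exact absurd ((Sin h' h5' k h6').2 y hy) hyX
    · exact absurd ((Sin h h5 k h6).2 y' hy') hyX'
    · have := Sdj h h5 h' h5' k h6 h6'
      subst this
      exact h2.1.dj _ hj _ hj' _ h3 h3'
  · intro k hk ht
    obtain ⟨j, hj, hkj⟩ := h2.1.cov k hk.1 ht
    obtain ⟨y, m, hm⟩ := head_edge (h2.1.wk j hj) (h2.1.nr j hj) hkj ht
    have hh := g4 j hj
    rw [hm] at hh
    simp only [List.head?_cons] at hh
    obtain ⟨m', hm'⟩ := List.head?_eq_some_iff.1 hh
    refine ⟨j, ⟨hj, ?_⟩, by rw [hm']; simp⟩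
    intro hc
    obtain ⟨a, z, b, hab, hz⟩ := g6 j hj hc
    by_cases hts : t2 = s
    · subst hts
      obtain ⟨y', m2, hm2⟩ := head_edge (h2.1.wk j hj) (h2.1.nr j hj)
        (show e ∈ eds (W2 j) by rw [hab]; simp) (by rw [he]; simp)
      rw [hm] at hm2
      simp at hm2
      apply hk.2; simp [hm2.1]
    · have := (h2.2 j hj).last_e hsT (Ne.symm hts) hvT he hab
      rw [this.1] at hz
      exact hsX hz

end

end LC

end Part6

section Part7
namespace LC

variable {V : Type*} {E : Type*}

lemma Linked.congr {inc inc' : E → Sym2 V} {A : Set E} {T : Set V} {t : V} (h : Linked inc A T t)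
    (H : ∀ k ∈ A, inc k = inc' k) : Linked inc' A T t := by
  obtain ⟨I, W, h1, h2⟩ := h
  refine ⟨I, W, ⟨fun i hi => IsWk_congr (h1.wk i hi) fun k hk => H k (h1.sub i hi k hk), h1.nr,
    h1.sub, h1.dj, fun g hg ht => h1.cov g hg (by rw [H g hg]; exact ht)⟩, h2⟩

lemma Par.rem {inc : E → Sym2 V} {A : Set E} {T : Set V} {s : V} {l : List (E × V)}
    (h : Par inc A T) (hs : s ∈ T) (hl : TP inc T s l) (hA : ∀ k ∈ eds l, k ∈ A) :
    Par inc {k | k ∈ A ∧ k ∉ eds l} T := by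
  classical
  intro X hX hfin
  have hc := cross_parity X hl.wk
  have hsX : s ∉ X := fun h => hX h hs
  have htX : endp s l ∉ X := fun h => hX h hl.fin
  obtain ⟨f1, f2⟩ := ncard_countP (P := crs inc X) (Q := fun k => k ∈ eds l ∧ crs inc X k) hl.eds_nd
    (fun k => Iff.rfl)
  have hev : Even {k | k ∈ eds l ∧ crs inc X k}.ncard := by
    rw [f2]; exact hc.2 (by simp [hsX, htX])
  have hun : {k | k ∈ A ∧ crs inc X k} =
      {k | k ∈ {k | k ∈ A ∧ k ∉ eds l} ∧ crs inc X k} ∪ {k | k ∈ eds l ∧ crs inc X k} := by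
    ext k
    simp only [Set.mem_setOf_eq, Set.mem_union]
    have := hA k
    tauto
  have hdj : Disjoint {k | k ∈ {k | k ∈ A ∧ k ∉ eds l} ∧ crs inc X k}
      {k | k ∈ eds l ∧ crs inc X k} := by
    rw [Set.disjoint_left]
    rintro k ⟨⟨_, h1⟩, _⟩ ⟨h2, _⟩
    exact h1 h2
  have := h X hX (by rw [hun]; exact hfin.union f1)
  rw [hun, Set.ncard_union_eq hdj hfin f1] at this
  rw [Nat.even_add] at this
  exact this.2 hev

section
variable {inc : E → Sym2 V} {A : Set E} {T : Set V} {s v w : V} {e f : E}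

lemma Ctx.par' (c : Ctx inc A T s v w e f) [DecidableEq E] :
    Par (Function.update inc e s(s, w)) (A \ {f}) T := by
  intro X hX hfin
  have hsX : s ∉ X := fun h => hX h c.hs
  have ef := c.ef
  have ce : crs inc X e ↔ v ∈ X := by rw [crs_iff c.he]; tauto
  have cf : crs inc X f ↔ ¬ (v ∈ X ↔ w ∈ X) := crs_iff c.hf
  have ce' : crs (Function.update inc e s(s, w)) X e ↔ w ∈ X := by
    rw [crs_iff (u := s) (x := w) (by simp)]; tauto
  have co : ∀ k, k ≠ e → (crs (Function.update inc e s(s, w)) X k ↔ crs inc X k) := by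
    intro k hk; unfold crs; rw [Function.update_of_ne hk]
  set C' := {h | h ∈ A \ {f} ∧ crs (Function.update inc e s(s, w)) X h} with hC'
  have hfC' : f ∉ C' := fun h => h.1.2 rfl
  have heC' : e ∈ C' ↔ w ∈ X := by
    rw [hC']; simp only [Set.mem_setOf_eq, ce']; exact ⟨fun h => h.2, fun h => ⟨⟨c.eA, ef⟩, h⟩⟩
  have main : ∀ k, k ∈ {h | h ∈ A ∧ crs inc X h} ↔ (k = e ∧ v ∈ X) ∨ (k = f ∧ ¬ (v ∈ X ↔ w ∈ X)) ∨
      (k ∈ C' ∧ k ≠ e) := by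
    intro k
    by_cases hke : k = e
    · subst hke; simp [ce, c.eA, ef]
    by_cases hkf : k = f
    · subst hkf; simp [cf, c.fA, hfC', hke]
    simp [hC', co k hke, hke, hkf]
  by_cases hv : v ∈ X <;> by_cases hw : w ∈ X
  · have : {h | h ∈ A ∧ crs inc X h} = C' := by
      ext k; rw [main]; have := heC'.2 hw; by_cases k = e <;> simp_all
    have h2 := c.par X hX
    rw [this] at h2; exact h2 hfin
  · have he' : e ∉ C' := fun h => hw (heC'.1 h)
    have : {h | h ∈ A ∧ crs inc X h} = insert e (insert f C') := by
      ext k; rw [main]; by_cases k = e <;> simp_all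
    have h2 := c.par X hX
    rw [this] at h2
    have h3 := h2 ((hfin.insert _).insert _)
    rw [Set.ncard_insert_of_notMem (by simp [ef, he']) (hfin.insert _),
      Set.ncard_insert_of_notMem hfC' hfin] at h3
    simpa [Nat.even_add_one] using h3
  · have he' := heC'.2 hw
    have : {h | h ∈ A ∧ crs inc X h} = insert f (C' \ {e}) := by
      ext k; rw [main]; by_cases k = e <;> simp_all
    have h2 := c.par X hX
    rw [this] at h2
    have h3 := h2 ((hfin.subset Set.sdiff_subset).insert _)
    rw [Set.ncard_insert_of_notMem (by simp [hfC']) (hfin.subset Set.sdiff_subset),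
      Set.ncard_sdiff_singleton_add_one he' hfin] at h3
    exact h3
  · have he' : e ∉ C' := fun h => hw (heC'.1 h)
    have : {h | h ∈ A ∧ crs inc X h} = C' := by
      ext k; rw [main]; by_cases k = e <;> simp_all
    have h2 := c.par X hX
    rw [this] at h2; exact h2 hfin

lemma key_zero (hs : s ∈ T) (hv : v ∈ T) (hsv : s ≠ v) (he : inc e = s(s, v)) (heA : e ∈ A)
    (hL : ∀ t ∈ T, Linked inc A T t) :
    ∃ l, TP inc T s l ∧ e ∈ eds l ∧ (∀ k ∈ eds l, k ∈ A) ∧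
      ∀ t' ∈ T, Linked inc {k | k ∈ A ∧ k ∉ eds l} T t' := by
  refine ⟨[(e, v)], ⟨⟨he, trivial⟩, by simpa using hsv, by simpa using hv, by simpa using hsv.symm,
    by simp⟩, by simp, by simpa using heA, ?_⟩
  intro t ht
  obtain ⟨I, W, h⟩ := (hL t ht).strict
  refine ⟨{i | i ∈ I ∧ e ∉ eds (W i)}, W, ⟨fun i hi => h.1.wk i hi.1, fun i hi => h.1.nr i hi.1, ?_,
    fun i hi j hj => h.1.dj i hi.1 j hj.1, ?_⟩, fun i hi => ⟨(h.2 i hi.1).fin, (h.2 i hi.1).ne⟩⟩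
  · rintro i ⟨hi, hie⟩ k hk
    refine ⟨h.1.sub i hi k hk, ?_⟩
    simp; rintro rfl; exact hie hk
  · rintro g ⟨hg, hge⟩ htg
    obtain ⟨i, hi, hgi⟩ := h.1.cov g hg htg
    refine ⟨i, ⟨hi, ?_⟩, hgi⟩
    intro hei
    have tp := h.2 i hi
    have m1 := mem_eds_ends tp.wk hei s (by rw [he]; simp)
    have m2 := mem_eds_ends tp.wk hei v (by rw [he]; simp)
    have hte : t ∈ inc e := by
      rw [List.mem_cons] at m1 m2
      rw [he]
      rcases m1 with m1 | m1
      · simp [m1]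
      rcases m2 with m2 | m2
      · simp [m2]
      exact absurd ((tp.int s m1 hs).trans (tp.int v m2 hv).symm) hsv
    obtain ⟨x, m, h1⟩ := head_edge tp.wk tp.nr hei hte
    obtain ⟨x', m', h2⟩ := head_edge tp.wk tp.nr hgi htg
    rw [h1] at h2; simp at h2
    exact hge (by simp [h2.1.1])

lemma key_lift (c : Ctx inc A T s v w e f) (hvw : v ≠ w) [DecidableEq E] {l' : List (E × V)}
    (tp : TP (Function.update inc e s(s, w)) T s l') (hel : e ∈ eds l')
    (hA : ∀ k ∈ eds l', k ∈ A \ {f})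
    (hL : ∀ t ∈ T, Linked (Function.update inc e s(s, w)) {k | k ∈ A \ {f} ∧ k ∉ eds l'} T t) :
    ∃ l, TP inc T s l ∧ e ∈ eds l ∧ (∀ k ∈ eds l, k ∈ A) ∧
      ∀ t' ∈ T, Linked inc {k | k ∈ A ∧ k ∉ eds l} T t' := by
  obtain ⟨x, m, rfl⟩ := head_edge tp.wk tp.nr hel (by simp)
  have hwk := tp.wk
  rw [IsWk_cons] at hwk
  have hxw : x = w := by
    have := hwk.1
    simp only [Function.update_self] at this
    rcases Sym2.eq_iff.1 this with ⟨_, h⟩ | ⟨h1, h2⟩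
    · exact h.symm
    · rw [h2, h1]
  subst hxw
  have hend := tp.eds_nd
  simp only [eds_cons, List.nodup_cons] at hend
  have hnd := tp.nd
  simp only [vts_cons] at hnd
  have hin : ∀ k, k ≠ e → Function.update inc e s(s, x) k = inc k :=
    fun k hk => Function.update_of_ne hk _ _
  have hwm : IsWk inc x m := IsWk_congr hwk.2 (fun k hk => hin k (by rintro rfl; exact hend.1 hk))
  have hfm : f ∉ eds m := fun h => (hA f (by simp [h])).2 rfl
  have hL2 : ∀ t ∈ T, Linked inc {k | k ∈ A \ {f} ∧ k ∉ eds ((e, x) :: m)} T t := by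
    intro t ht
    refine (hL t ht).congr ?_
    rintro k ⟨_, hk⟩
    exact hin k (by rintro rfl; simp at hk)
  have h_int := tp.int
  have hfin := tp.fin
  have hne := tp.ne
  simp only [endp_cons, vts_cons] at h_int hfin hne
  by_cases hv : v ∈ vts m
  · obtain ⟨a, b, rfl, hab, hane⟩ := split_vts x v m hv
    rw [IsWk_append, hab] at hwm
    rw [endp_append, hab] at h_int hfin hne
    simp only [vts_append] at hnd h_int
    have hbn : b ≠ [] := by rintro rfl; exact c.hv hfin
    have hendb := endp_mem' v b hbn
    have hva : v ∈ vts a := hab ▸ endp_mem' x a hane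
    have hdis : ∀ y ∈ x :: vts a, y ∉ vts b := by
      intro y hy hyb
      have h3 := (List.nodup_cons.1 hnd).2
      rw [← List.cons_append] at h3
      exact (List.disjoint_of_nodup_append h3) hy hyb
    have hnT : ∀ y ∈ x :: vts a, y ∉ T := by
      intro y hy hyT
      have := h_int y (by simp at hy ⊢; tauto) hyT
      rw [this] at hy
      exact hdis _ hy hendb
    refine ⟨(e, v) :: b, ⟨⟨c.he, hwm.2⟩, ?_, ?_, ?_, ?_⟩, by simp, ?_, ?_⟩
    · rw [List.nodup_cons] at hnd
      rw [vts_cons, List.nodup_cons, List.nodup_cons]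
      refine ⟨?_, hdis v (by simp [hva]), ?_⟩
      · have := hnd.1
        simp only [List.mem_cons, List.mem_append, not_or] at this ⊢
        exact ⟨c.sv, this.2.2⟩
      · exact (List.nodup_cons.1 hnd.2).2.of_append_right
    · simpa using hfin
    · simpa using hne
    · simp only [vts_cons, endp_cons]
      intro y hy
      rw [List.mem_cons] at hy
      rcases hy with rfl | hy
      · exact fun h => absurd h c.hv
      · exact h_int y (by simp [hy])
    · intro k hk
      simp at hk
      rcases hk with rfl | hk
      · exact c.eA
      · exact (hA k (by simp [hk])).1
    · intro t ht
      refine (hL2 t ht).mono ?_ ?_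
      · rintro k ⟨⟨h1, _⟩, h2⟩
        simp at h2 ⊢
        tauto
      · rintro g ⟨h1, h2⟩ htg
        simp at h2 ⊢
        refine ⟨⟨h1, ?_⟩, h2.1, ?_, h2.2⟩
        · rintro rfl
          rw [c.hf] at htg
          rcases Sym2.mem_iff.1 htg with rfl | rfl
          · exact c.hv ht
          · exact hnT t (by simp) ht
        · intro hga
          exact hnT t (mem_eds_ends hwm.1 hga t htg) ht
  · refine ⟨(e, v) :: (f, x) :: m, ⟨⟨c.he, c.hf, hwm⟩, ?_, ?_, ?_, ?_⟩, by simp, ?_, ?_⟩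
    · rw [List.nodup_cons] at hnd
      rw [vts_cons, vts_cons, List.nodup_cons, List.nodup_cons]
      refine ⟨?_, ?_, hnd.2⟩
      · have := hnd.1
        rw [List.mem_cons, not_or]; exact ⟨c.sv, this⟩
      · rw [List.mem_cons, not_or]; exact ⟨hvw, hv⟩
    · simpa using hfin
    · simpa using hne
    · simp only [vts_cons, endp_cons]
      intro y hy
      rw [List.mem_cons] at hy
      rcases hy with rfl | hy
      · exact fun h => absurd h c.hv
      · exact h_int y hy
    · intro k hk
      simp at hk
      rcases hk with rfl | rfl | hk
      · exact c.eA
      · exact c.fA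
      · exact (hA k (by simp [hk])).1
    · intro t ht
      have : {k | k ∈ A ∧ k ∉ eds ((e, v) :: (f, x) :: m)} =
          {k | k ∈ A \ {f} ∧ k ∉ eds ((e, x) :: m)} := by
        ext k; simp; tauto
      rw [this]; exact hL2 t ht

end

theorem key_aux {T : Set V} {s : V} {e : E} (hs : s ∈ T) (n : ℕ) : ∀ (inc : E → Sym2 V) (A : Set E)
    (_ : Par inc A T) (_ : ∀ t ∈ T, Linked inc A T t) (I W) (_ : SLk inc A A T s I W) (i) (_ : i ∈ I)
    (v m) (_ : W i = (e, v) :: m) (_ : m.length = n),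
    ∃ l, TP inc T s l ∧ e ∈ eds l ∧ (∀ k ∈ eds l, k ∈ A) ∧
      ∀ t' ∈ T, Linked inc {k | k ∈ A ∧ k ∉ eds l} T t' := by
  classical
  induction n with
  | zero =>
    intro inc A par hL I W h i hi v m hW hm
    have tp := h.2 i hi
    rw [List.length_eq_zero_iff.1 hm] at hW
    rw [hW] at tp
    exact key_zero hs (by simpa using tp.fin) (by simpa using tp.ne.symm) tp.wk.1
      (h.1.sub i hi e (by rw [hW]; simp)) hL
  | succ n ih =>
    intro inc A par hL I W h i hi v m hW hm
    rcases m with _ | ⟨⟨f, w⟩, m⟩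
    · simp at hm
    have tp := h.2 i hi
    rw [hW] at tp
    have hnd := tp.nd
    simp only [vts_cons, List.nodup_cons, List.mem_cons, not_or] at hnd
    have hend := tp.eds_nd
    simp only [eds_cons, List.nodup_cons, List.mem_cons, not_or] at hend
    have hvT : v ∉ T := by
      intro hv
      have h1 := tp.int v (by simp) hv
      have h2 := endp_mem w m
      simp only [endp_cons] at h1
      rw [← h1, List.mem_cons] at h2
      rcases h2 with h2 | h2
      · exact hnd.2.1.1 h2
      · exact hnd.2.1.2 h2
    have hwk := tp.wk
    simp only [IsWk_cons] at hwk
    have c : Ctx inc A T s v w e f := ⟨hs, hvT, Ne.symm hnd.1.2.1, hwk.1, hwk.2.1,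
      h.1.sub i hi e (by rw [hW]; simp), h.1.sub i hi f (by rw [hW]; simp), par⟩
    by_cases hO : ∃ t I W X, t ∈ T ∧ s ≠ t ∧ Orth inc A T t I W X ∧ v ∈ X
    · obtain ⟨t, I, W, X, htT, hst, o, hvX⟩ := hO
      exact o.lemC htT hs hst hvT hvX c.eA c.he hL
    have hin : ∀ k, k ≠ e → inc k = Function.update inc e s(s, w) k :=
      fun k hk => (Function.update_of_ne hk _ _).symm
    have hno : ∀ j ∈ I, j ≠ i → e ∉ eds (W j) ∧ f ∉ eds (W j) := by
      intro j hj hji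
      constructor
      · intro hc; exact hji (h.1.dj j hj i hi e hc (by rw [hW]; simp))
      · intro hc; exact hji (h.1.dj j hj i hi f hc (by rw [hW]; simp))
    have hW'sub : ∀ j, j ∈ I → ∀ k ∈ eds (Function.update W i ((e, w) :: m) j), k ∈ eds (W j) := by
      intro j hj k hk
      by_cases hji : j = i
      · subst hji; rw [hW]; simp at hk ⊢; tauto
      · rwa [Function.update_of_ne hji] at hk
    have hS : SLk (Function.update inc e s(s, w)) (A \ {f}) (A \ {f}) T s I
        (Function.update W i ((e, w) :: m)) := by
      have tpj : ∀ j ∈ I, TP (Function.update inc e s(s, w)) T s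
          (Function.update W i ((e, w) :: m) j) := by
        intro j hj
        by_cases hji : j = i
        · subst hji
          rw [Function.update_self]
          refine ⟨⟨by simp, IsWk_congr hwk.2.2 fun k hk => hin k ?_⟩, ?_, ?_, ?_, ?_⟩
          · rintro rfl; exact hend.1.2 hk
          · simp only [vts_cons, List.nodup_cons, List.mem_cons, not_or]
            exact ⟨hnd.1.2, hnd.2.2⟩
          · simpa using tp.fin
          · simpa using tp.ne
          · intro y hy; simpa using tp.int y (by simp at hy ⊢; tauto)
        · rw [Function.update_of_ne hji]
          have tj := h.2 j hj
          exact ⟨IsWk_congr tj.wk fun k hk => hin k (by rintro rfl; exact (hno j hj hji).1 hk),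
            tj.nd, tj.fin, tj.ne, tj.int⟩
      refine ⟨⟨fun j hj => (tpj j hj).wk, fun j hj => (tpj j hj).nr, ?_, ?_, ?_⟩, tpj⟩
      · intro j hj k hk
        refine ⟨h.1.sub j hj k (hW'sub j hj k hk), ?_⟩
        rintro rfl
        by_cases hji : j = i
        · subst hji
          simp at hk
          rcases hk with hk | hk
          · exact c.ef hk.symm
          · exact hend.2.1 hk
        · exact (hno j hj hji).2 (hW'sub j hj _ hk)
      · intro j hj j' hj' k hk hk'
        exact h.1.dj j hj j' hj' k (hW'sub j hj k hk) (hW'sub j' hj' k hk')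
      · rintro g ⟨hg, hgf⟩ hsg
        by_cases hge : g = e
        · exact ⟨i, hi, by simp [hge]⟩
        rw [← hin g hge] at hsg
        obtain ⟨j, hj, hgj⟩ := h.1.cov g hg hsg
        refine ⟨j, hj, ?_⟩
        by_cases hji : j = i
        · subst hji; rw [hW] at hgj; simp at hgj hgf ⊢; tauto
        · rwa [Function.update_of_ne hji]
    have hL' : ∀ t ∈ T, Linked (Function.update inc e s(s, w)) (A \ {f}) T t := by
      intro t ht
      by_cases hst : s = t
      · subst hst; exact hS.linked
      · rcases c.star ht hst (hL t ht) with h1 | ⟨I', W', X', h1, h2⟩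
        · exact h1
        · exact absurd ⟨t, I', W', X', ht, hst, h1, h2⟩ hO
    obtain ⟨l', h1, h2, h3, h4⟩ := ih _ _ c.par' hL' I _ hS i hi w m (by simp) (by simpa using hm)
    exact key_lift c hnd.2.1.1 h1 h2 h3 h4

theorem key {inc : E → Sym2 V} {A : Set E} {T : Set V} {s : V} {e : E} (hs : s ∈ T)
    (par : Par inc A T) (hL : ∀ t ∈ T, Linked inc A T t) (heA : e ∈ A) (hse : s ∈ inc e) :
    ∃ l, TP inc T s l ∧ e ∈ eds l ∧ (∀ k ∈ eds l, k ∈ A) ∧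
      ∀ t' ∈ T, Linked inc {k | k ∈ A ∧ k ∉ eds l} T t' := by
  obtain ⟨I, W, h⟩ := (hL s hs).strict
  obtain ⟨i, hi, hei⟩ := h.1.cov e heA hse
  obtain ⟨x, m, hm⟩ := head_edge (h.1.wk i hi) (h.1.nr i hi) hei hse
  exact key_aux hs _ inc A par hL I W h i hi x m hm rfl

/-- a good state -/
def Good (inc : E → Sym2 V) (T : Set V) (A : Set E) : Prop :=
  Par inc A T ∧ ∀ t ∈ T, Linked inc A T t

theorem step {inc : E → Sym2 V} {T : Set V} (A : Set E) (e : E) (h : Good inc T A) :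
    ∃ (F : Set (V × List (E × V))) (B : Set E), Good inc T B ∧ B ⊆ A ∧
      (∀ p ∈ F, p.1 ∈ T ∧ TP inc T p.1 p.2 ∧ ∀ k ∈ eds p.2, k ∈ A ∧ k ∉ B) ∧
      (∀ p ∈ F, ∀ q ∈ F, p = q) ∧
      (e ∈ A → (∃ t ∈ T, t ∈ inc e) → ∃ p ∈ F, e ∈ eds p.2) ∧
      (∀ k ∈ A, k ∉ B → ∃ p ∈ F, k ∈ eds p.2) := by
  by_cases hc : e ∈ A ∧ ∃ t ∈ T, t ∈ inc e
  · obtain ⟨heA, s, hs, hse⟩ := hc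
    obtain ⟨l, h1, h2, h3, h4⟩ := key hs h.1 h.2 heA hse
    refine ⟨{(s, l)}, {k | k ∈ A ∧ k ∉ eds l}, ⟨h.1.rem hs h1 h3, h4⟩, fun k hk => hk.1, ?_, ?_, ?_, ?_⟩
    · rintro p rfl
      exact ⟨hs, h1, fun k hk => ⟨h3 k hk, fun hc => hc.2 hk⟩⟩
    · rintro p rfl q rfl; rfl
    · intro _ _; exact ⟨_, rfl, h2⟩
    · intro k hk hkB
      refine ⟨_, rfl, ?_⟩
      by_contra hc
      exact hkB ⟨hk, hc⟩
  · refine ⟨∅, A, h, le_rfl, by simp, by simp, ?_, ?_⟩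
    · intro h1 h2; exact absurd ⟨h1, h2⟩ hc
    · intro k h1 h2; exact absurd h1 h2

/-- the countable case -/
theorem countable_case {inc : E → Sym2 V} {T : Set V} (A : Set E) (hA : A.Countable)
    (h : Good inc T A) :
    ∃ (F : Set (V × List (E × V))),
      (∀ p ∈ F, p.1 ∈ T ∧ TP inc T p.1 p.2 ∧ ∀ k ∈ eds p.2, k ∈ A) ∧
      (∀ p ∈ F, ∀ q ∈ F, ∀ k, k ∈ eds p.2 → k ∈ eds q.2 → p = q) ∧
      (∀ e ∈ A, (∃ t ∈ T, t ∈ inc e) → ∃ p ∈ F, e ∈ eds p.2) := by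
  rcases A.eq_empty_or_nonempty with rfl | hne
  · exact ⟨∅, by simp, by simp, by simp⟩
  obtain ⟨en, hen⟩ := hA.exists_eq_range hne
  choose F B g1 g2 g3 g4 g5 g6 using fun (A : {A : Set E // Good inc T A}) (e : E) => step A.1 e A.2
  let st : ℕ → {A : Set E // Good inc T A} := fun n =>
    Nat.rec ⟨A, h⟩ (fun n S => ⟨B S (en n), g1 S (en n)⟩) n
  have hst : ∀ n, (st (n + 1)).1 = B (st n) (en n) := fun n => rfl
  have anti : Antitone fun n => (st n).1 := by
    apply antitone_nat_of_succ_le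
    intro n
    rw [hst]; exact g2 _ _
  have disj : ∀ n m, n < m → ∀ p ∈ F (st n) (en n), ∀ q ∈ F (st m) (en m), ∀ k, k ∈ eds p.2 →
      k ∈ eds q.2 → False := by
    intro n m hnm p hp q hq k hk hk'
    have h1 := ((g3 _ _ p hp).2.2 k hk).2
    have h2 := ((g3 _ _ q hq).2.2 k hk').1
    rw [← hst] at h1
    exact h1 (anti (Nat.succ_le_of_lt hnm) h2)
  refine ⟨⋃ n, F (st n) (en n), ?_, ?_, ?_⟩
  · intro p hp
    obtain ⟨n, hn⟩ := Set.mem_iUnion.1 hp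
    have := g3 _ _ p hn
    exact ⟨this.1, this.2.1, fun k hk => anti (Nat.zero_le n) (this.2.2 k hk).1⟩
  · intro p hp q hq k hk hk'
    obtain ⟨n, hn⟩ := Set.mem_iUnion.1 hp
    obtain ⟨m, hm⟩ := Set.mem_iUnion.1 hq
    rcases lt_trichotomy n m with hnm | rfl | hnm
    · exact (disj n m hnm p hn q hm k hk hk').elim
    · exact g4 _ _ p hn q hm
    · exact (disj m n hnm q hm p hn k hk' hk).elim
  · intro e he ht
    by_contra hcon
    push Not at hcon
    have hin : ∀ n, e ∈ (st n).1 := by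
      intro n
      induction n with
      | zero => exact he
      | succ n ih =>
        by_contra hc
        rw [hst] at hc
        obtain ⟨p, hp, hk⟩ := g6 _ _ e ih hc
        exact hcon p (Set.mem_iUnion.2 ⟨n, hp⟩) hk
    obtain ⟨n, rfl⟩ : ∃ n, en n = e := by rw [hen] at he; exact he
    obtain ⟨p, hp, hk⟩ := g5 _ _ (hin n) ht
    exact hcon p (Set.mem_iUnion.2 ⟨n, hp⟩) hk

end LC

end Part7

section Part8
namespace LC

section cardinals
open Cardinal

lemma exists_rank (α : Type*) : ∃ r : α → Ordinal, Function.Injective r ∧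
    ∀ o, o < (#α).ord ↔ ∃ a, r a = o := by
  obtain ⟨r, wo, h⟩ := Cardinal.exists_ord_eq α
  refine ⟨fun a => Ordinal.typein r a, Ordinal.typein_injective r, ?_⟩
  intro o
  rw [h]
  constructor
  · intro ho; exact Ordinal.typein_surj r ho
  · rintro ⟨a, rfl⟩; exact Ordinal.typein_lt_type r a

lemma mk_rank_le.{w} {α : Type w} {r : α → Ordinal.{w}} (hr : Function.Injective r) (s : Set α) (o : Ordinal.{w})
    (hs : ∀ a ∈ s, r a < o) : #s ≤ o.card := by
  have h1 : Function.Injective (fun a : s => (⟨r a.1, hs a.1 a.2⟩ : Set.Iio o)) := by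
    intro a b hab
    exact Subtype.ext (hr (congrArg Subtype.val hab))
  have h2 := Cardinal.lift_mk_le_lift_mk_of_injective h1
  rw [Cardinal.mk_Iio_ordinal, Cardinal.lift_lift] at h2
  exact Cardinal.lift_le.{w + 1, w}.1 h2

lemma mk_biUnion_finite {E : Type*} {β : Type*} {μ : Cardinal} (hμ : ℵ₀ ≤ μ) {s : Set β}
    (hs : s.Finite) (t : β → Set E) (ht : ∀ i ∈ s, #(t i) ≤ μ) : #(⋃ i ∈ s, t i : Set E) ≤ μ := by
  induction s, hs using Set.Finite.induction_on with
  | empty => simp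
  | insert _ _ ih =>
    rw [Set.biUnion_insert]
    exact (mk_union_le _ _).trans (add_le_of_le hμ (ht _ (by simp)) (ih fun i hi => ht i (by simp [hi])))

lemma mk_iUnion_le_of.{w} {E ι : Type w} {μ : Cardinal.{w}} (hμ : ℵ₀ ≤ μ) (hι : #ι ≤ μ)
    (t : ι → Set E) (ht : ∀ i, #(t i) ≤ μ) : #(⋃ i, t i : Set E) ≤ μ :=
  (mk_iUnion_le _).trans (mul_le_of_le hμ hι (ciSup_le' ht))

lemma exists_closure {E : Type*} {μ : Cardinal} (hμ : ℵ₀ ≤ μ) (Op : Finset E → Set E)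
    (hOp : ∀ Z, #(Op Z) ≤ μ) (Y : Set E) (hY : #Y ≤ μ) :
    ∃ Y' : Set E, Y ⊆ Y' ∧ #Y' ≤ μ ∧ (∀ Z : Finset E, ↑Z ⊆ Y' → Op Z ⊆ Y') ∧
      ∀ S : Set E, Y ⊆ S → (∀ Z, Op Z ⊆ S) → Y' ⊆ S := by
  let Φ : Set E → Set E := fun Y => Y ∪ ⋃ Z : Finset Y, Op (Z.map (Function.Embedding.subtype _))
  have hΦ : ∀ Y : Set E, #Y ≤ μ → #(Φ Y) ≤ μ := by
    intro Y hY
    refine (mk_union_le _ _).trans (add_le_of_le hμ hY ?_)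
    refine (mk_iUnion_le _).trans (mul_le_of_le hμ ?_ ?_)
    · rcases finite_or_infinite Y with h | h
      · exact (Cardinal.mk_le_aleph0).trans hμ
      · rw [mk_finset_of_infinite]; exact hY
    · exact ciSup_le' fun Z => hOp _
  let s : ℕ → Set E := fun n => Φ^[n] Y
  have hs : ∀ n, s (n + 1) = Φ (s n) := fun n => Function.iterate_succ_apply' _ _ _
  have hm : Monotone s := monotone_nat_of_le_succ fun n => by rw [hs]; exact Set.subset_union_left
  have hc : ∀ n, #(s n) ≤ μ := by
    intro n
    induction n with
    | zero => exact hY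
    | succ n ih => rw [hs]; exact hΦ _ ih
  refine ⟨⋃ n, s n, Set.subset_iUnion s 0, ?_, ?_, ?_⟩
  · have h1 := mk_iUnion_le_lift s
    have : #(⋃ n, s n : Set E) ≤ ℵ₀ * μ := by
      simp only [mk_nat, lift_aleph0, lift_uzero] at h1
      refine h1.trans ?_
      gcongr
      exact ciSup_le' hc
    exact this.trans (mul_le_of_le hμ hμ le_rfl)
  · intro Z hZ
    obtain ⟨n, hn⟩ : ∃ n, ↑Z ⊆ s n := by
      have := DirectedOn.exists_mem_subset_of_finset_subset_biUnion (f := s) (c := Set.univ)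
        ⟨0, trivial⟩ (fun i _ j _ => ⟨max i j, trivial, hm (le_max_left _ _), hm (le_max_right _ _)⟩)
        (s := Z) (by simpa using hZ)
      obtain ⟨n, _, h⟩ := this
      exact ⟨n, h⟩
    refine Set.Subset.trans ?_ (Set.subset_iUnion s (n + 1))
    rw [hs]
    refine Set.Subset.trans ?_ Set.subset_union_right
    classical
    have : Op Z = Op ((Z.subtype (· ∈ s n)).map (Function.Embedding.subtype _)) := by
      congr 1
      ext x
      simp
      intro hx; exact hn hx
    rw [this]
    exact Set.subset_iUnion (fun Z : Finset (s n) => Op (Z.map (Function.Embedding.subtype _))) _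
  · intro S h1 h2
    apply Set.iUnion_subset
    intro n
    induction n with
    | zero => exact h1
    | succ n ih =>
      rw [hs]; exact Set.union_subset ih (Set.iUnion_subset fun Z => h2 _)

end cardinals

end LC

end Part8

section Part9
namespace LC

universe v' e'
variable {V : Type v'} {E : Type e'}

/-- connectedness by a set of edges -/
def conn (inc : E → Sym2 V) (A : Set E) (x y : V) : Prop :=
  ∀ X : Set V, (∀ h ∈ A, ¬ crs inc X h) → (x ∈ X ↔ y ∈ X)

lemma conn.refl (inc : E → Sym2 V) (A : Set E) (x : V) : conn inc A x x := fun _ _ => Iff.rfl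

lemma conn.symm {inc : E → Sym2 V} {A : Set E} {x y : V} (h : conn inc A x y) : conn inc A y x :=
  fun X hX => (h X hX).symm

lemma conn.trans {inc : E → Sym2 V} {A : Set E} {x y z : V} (h : conn inc A x y)
    (h' : conn inc A y z) : conn inc A x z := fun X hX => (h X hX).trans (h' X hX)

lemma conn.mono {inc : E → Sym2 V} {A B : Set E} {x y : V} (h : conn inc A x y) (hAB : A ⊆ B) :
    conn inc B x y := fun X hX => h X fun k hk => hX k (hAB hk)

lemma conn.edge {inc : E → Sym2 V} {A : Set E} {x y : V} {h : E} (hA : h ∈ A) (hh : inc h = s(x, y)) :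
    conn inc A x y := by
  intro X hX
  have := hX h hA
  rw [crs_iff hh] at this
  exact not_not.1 this

lemma conn.cross {inc : E → Sym2 V} {A : Set E} {x y : V} (h : conn inc A x y) {X : Set V}
    (hx : x ∈ X) (hy : y ∉ X) : ∃ k ∈ A, crs inc X k := by
  by_contra hc
  push Not at hc
  exact hy ((h X hc).1 hx)

lemma conn.fin {inc : E → Sym2 V} {A : Set E} {x y : V} (h : conn inc A x y) :
    ∃ q : Finset E, ↑q ⊆ A ∧ conn inc ↑q x y := by
  classical
  let X : Set V := {z | ∃ q : Finset E, ↑q ⊆ A ∧ conn inc ↑q x z}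
  have hX : ∀ h ∈ A, ¬ crs inc X h := by
    rintro k hk ⟨a, b, hab, ⟨q, hq, ha⟩, hb⟩
    apply hb
    refine ⟨insert k q, ?_, ?_⟩
    · intro z hz
      simp at hz
      rcases hz with rfl | hz
      · exact hk
      · exact hq hz
    · refine (ha.mono (by simp)).trans (conn.edge (h := k) (by simp) hab)
  exact (h X hX).1 ⟨∅, by simp, conn.refl _ _ _⟩

/-- vertices incident with a set of edges -/
def VS (inc : E → Sym2 V) (F : Set E) : Set V := {x | ∃ h ∈ F, x ∈ inc h}

lemma VS_finite (inc : E → Sym2 V) (Z : Finset E) : (VS inc (Z : Set E)).Finite := by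
  have : VS inc (Z : Set E) = ⋃ h ∈ Z, {x | x ∈ inc h} := by
    ext x; simp [VS]
  rw [this]
  refine Set.Finite.biUnion Z.finite_toSet ?_
  intro h _
  induction inc h using Sym2.ind with
  | h a b =>
    refine (Set.toFinite ({a, b} : Set V)).subset ?_
    intro x hx; simpa using hx

lemma exists_sym2 (z : Sym2 V) : ∃ a b, z = s(a, b) := by
  induction z using Sym2.ind with
  | h a b => exact ⟨a, b, rfl⟩

/-- the first claim -/
lemma par_sdiff {inc : E → Sym2 V} {S F : Set E} (hS : Par inc S ∅) (hFS : F ⊆ S)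
    (hF : ∀ x ∈ VS inc F, ∀ y ∈ VS inc F, ∀ X : Set V, {h | h ∈ S \ F ∧ crs inc X h}.Finite →
      x ∈ X → y ∉ X → ¬ conn inc (S \ F) x y) : Par inc (S \ F) ∅ := by
  intro X _ hfin
  let p : V → Prop := fun z => ∃ x ∈ VS inc F, x ∈ X ∧ conn inc (S \ F) z x
  let X1 : Set V := {z | z ∈ X ∧ ¬ p z}
  let X2 : Set V := {z | z ∉ X ∧ p z}
  have h1 : ∀ h ∈ F, ¬ crs inc X1 h := by
    rintro h hh ⟨a, b, hab, ⟨ha, hp⟩, _⟩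
    exact hp ⟨a, ⟨h, hh, by rw [hab]; simp⟩, ha, conn.refl _ _ _⟩
  have h2 : ∀ h ∈ F, ¬ crs inc X2 h := by
    rintro h hh ⟨a, b, hab, ⟨ha, x, hx, hxX, hc⟩, _⟩
    exact hF x hx a ⟨h, hh, by rw [hab]; simp⟩ X hfin hxX ha hc.symm
  have h3 : ∀ h ∈ S \ F, (crs inc X h ↔ crs inc X1 h ∨ crs inc X2 h) ∧
      ¬ (crs inc X1 h ∧ crs inc X2 h) := by
    intro h hh
    obtain ⟨a, b, hab⟩ := exists_sym2 (inc h)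
    have hc : conn inc (S \ F) a b := conn.edge hh hab
    have hp : p a ↔ p b := by
      constructor
      · rintro ⟨x, h1, h2, h3⟩; exact ⟨x, h1, h2, hc.symm.trans h3⟩
      · rintro ⟨x, h1, h2, h3⟩; exact ⟨x, h1, h2, hc.trans h3⟩
    rw [crs_iff hab, crs_iff hab, crs_iff hab]
    have e1 : ∀ z, z ∈ X1 ↔ z ∈ X ∧ ¬ p z := fun z => Iff.rfl
    have e2 : ∀ z, z ∈ X2 ↔ z ∉ X ∧ p z := fun z => Iff.rfl
    rw [e1, e1, e2, e2, hp]
    by_cases a ∈ X <;> by_cases b ∈ X <;> by_cases p b <;> simp_all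
  have hun : {h | h ∈ S \ F ∧ crs inc X h} =
      {h | h ∈ S ∧ crs inc X1 h} ∪ {h | h ∈ S ∧ crs inc X2 h} := by
    ext h
    constructor
    · rintro ⟨hh, hc⟩
      rcases (h3 h hh).1.1 hc with hc | hc
      · exact Or.inl ⟨hh.1, hc⟩
      · exact Or.inr ⟨hh.1, hc⟩
    · rintro (⟨hh, hc⟩ | ⟨hh, hc⟩)
      · have : h ∈ S \ F := ⟨hh, fun h' => h1 h h' hc⟩
        exact ⟨this, (h3 h this).1.2 (Or.inl hc)⟩
      · have : h ∈ S \ F := ⟨hh, fun h' => h2 h h' hc⟩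
        exact ⟨this, (h3 h this).1.2 (Or.inr hc)⟩
  rw [hun] at hfin ⊢
  have f1 := hfin.subset Set.subset_union_left
  have f2 := hfin.subset Set.subset_union_right
  rw [Set.ncard_union_eq ?_ f1 f2]
  · exact (hS X1 (by simp) f1).add (hS X2 (by simp) f2)
  · rw [Set.disjoint_left]
    rintro h ⟨hh, hc⟩ ⟨_, hc'⟩
    have : h ∈ S \ F := ⟨hh, fun h' => h1 h h' hc⟩
    exact (h3 h this).2 ⟨hc, hc'⟩

/-- the second claim -/
lemma par_piece {inc : E → Sym2 V} {B D : Set E} (hB : Par inc B ∅) (hDB : D ⊆ B)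
    (hD : ∀ x ∈ VS inc D, ∀ y ∈ VS inc D, ∀ C : Finset E, ↑C ⊆ D → conn inc (B \ ↑C) x y →
      conn inc (D \ ↑C) x y) : Par inc D ∅ := by
  intro X _ hfin
  obtain ⟨C, hC⟩ := hfin.exists_finset_coe
  have hCD : ↑C ⊆ D := by rw [hC]; exact fun h hh => hh.1
  let X' : Set V := {z | ∃ y ∈ VS inc D, y ∈ X ∧ conn inc (B \ ↑C) z y}
  have : {h | h ∈ B ∧ crs inc X' h} = {h | h ∈ D ∧ crs inc X h} := by
    ext h
    constructor
    · rintro ⟨hh, hc⟩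
      by_contra hn
      have hhC : h ∈ B \ ↑C := ⟨hh, by rw [hC]; exact hn⟩
      obtain ⟨a, b, hab, ⟨y, h1, h2, h3⟩, hb⟩ := hc
      exact hb ⟨y, h1, h2, (conn.edge hhC hab).symm.trans h3⟩
    · rintro ⟨hh, hc⟩
      refine ⟨hDB hh, ?_⟩
      obtain ⟨a, b, hab, ha, hb⟩ := hc
      refine ⟨a, b, hab, ⟨a, ⟨h, hh, by rw [hab]; simp⟩, ha, conn.refl _ _ _⟩, ?_⟩
      rintro ⟨y, h1, h2, h3⟩
      have := hD b ⟨h, hh, by rw [hab]; simp⟩ y h1 C hCD h3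
      obtain ⟨k, hk, hkc⟩ := this.symm.cross h2 hb
      apply hk.2
      rw [hC]; exact ⟨hk.1, hkc⟩
  have h := hB X' (by simp)
  rw [this] at h
  exact h hfin

lemma exists_Q (inc : E → Sym2 V) (S : Set E) (x y : V) : ∃ Q : Set (Finset E),
    (∀ q ∈ Q, ↑q ⊆ S ∧ conn inc ↑q x y) ∧ (∀ q ∈ Q, ∀ q' ∈ Q, ∀ k, k ∈ q → k ∈ q' → q = q') ∧
    ∀ q : Finset E, ↑q ⊆ S → conn inc ↑q x y → (∀ q' ∈ Q, ∀ k, k ∈ q → k ∈ q' → False) → q ∈ Q := by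
  obtain ⟨Q, hQ⟩ := zorn_subset {Q : Set (Finset E) | (∀ q ∈ Q, ↑q ⊆ S ∧ conn inc ↑q x y) ∧
    (∀ q ∈ Q, ∀ q' ∈ Q, ∀ k, k ∈ q → k ∈ q' → q = q')} (by
      intro c hc hch
      refine ⟨⋃₀ c, ⟨?_, ?_⟩, fun s hs => Set.subset_sUnion_of_mem hs⟩
      · rintro q ⟨Q, hQ, hq⟩; exact (hc hQ).1 q hq
      · rintro q ⟨Q, hQ, hq⟩ q' ⟨Q', hQ', hq'⟩ k hk hk'
        rcases hch.total hQ hQ' with h | h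
        · exact (hc hQ').2 q (h hq) q' hq' k hk hk'
        · exact (hc hQ).2 q hq q' (h hq') k hk hk')
  refine ⟨Q, hQ.prop.1, hQ.prop.2, ?_⟩
  intro q h1 h2 h3
  have : insert q Q ∈ {Q : Set (Finset E) | (∀ q ∈ Q, ↑q ⊆ S ∧ conn inc ↑q x y) ∧
    (∀ q ∈ Q, ∀ q' ∈ Q, ∀ k, k ∈ q → k ∈ q' → q = q')} := by
    constructor
    · rintro q' (rfl | hq')
      · exact ⟨h1, h2⟩
      · exact hQ.prop.1 q' hq'
    · rintro q' (rfl | hq') q'' (rfl | hq'') k hk hk'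
      · rfl
      · exact (h3 _ hq'' k hk hk').elim
      · exact (h3 _ hq' k hk' hk).elim
      · exact hQ.prop.2 _ hq' _ hq'' k hk hk'
  exact hQ.le_of_ge this (Set.subset_insert _ _) (Set.mem_insert _ _)

section
open Cardinal

lemma mk_finset_iUnion_le {μ : Cardinal.{e'}} (hμ : ℵ₀ ≤ μ) (Q : Set (Finset E)) (hQ : #Q ≤ μ) :
    #{h : E | ∃ q ∈ Q, h ∈ q} ≤ μ := by
  have : {h : E | ∃ q ∈ Q, h ∈ q} = ⋃ q : Q, (↑(q.1) : Set E) := by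
    ext h; simp
  rw [this]
  exact mk_iUnion_le_of hμ hQ _ fun q => (Cardinal.mk_le_aleph0).trans hμ

/-- one stage of the construction -/
lemma exists_stage (inc : E → Sym2 V) (S : Set E) (Q : V → V → Set (Finset E))
    (hQ : ∀ x y, ∀ q ∈ Q x y, ↑q ⊆ S)
    (f : ∀ x y, Q x y → Ordinal.{e'}) (hf : ∀ x y, Function.Injective (f x y))
    (b : S) (o : Ordinal.{e'}) (F : Set E) (hFS : F ⊆ S) :
    ∃ F' : Set E, F ⊆ F' ∧ F' ⊆ S ∧ b.1 ∈ F' ∧ #F' ≤ max #F (max ℵ₀ o.card) ∧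
      (∀ x ∈ VS inc F', ∀ y ∈ VS inc F', ∀ q (hq : q ∈ Q x y), ((Q x y).Countable ∨ f x y ⟨q, hq⟩ ≤ o) →
        ↑q ⊆ F') ∧
      (∀ x ∈ VS inc F', ∀ y ∈ VS inc F', ∀ C : Finset E, ↑C ⊆ F' → conn inc ((S \ F) \ ↑C) x y →
        conn inc ((F' \ F) \ ↑C) x y) := by
  classical
  have hR : ∀ (C : Finset E) (x y : V), ∃ q : Finset E, ↑q ⊆ (S \ F) \ ↑C ∧
      (conn inc ((S \ F) \ ↑C) x y → conn inc ↑q x y) := by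
    intro C x y
    by_cases h : conn inc ((S \ F) \ ↑C) x y
    · obtain ⟨q, h1, h2⟩ := h.fin
      exact ⟨q, h1, fun _ => h2⟩
    · exact ⟨∅, by simp, fun h' => absurd h' h⟩
  choose R hR1 hR2 using hR
  set μ := max #F (max ℵ₀ o.card) with hμd
  have hμ : ℵ₀ ≤ μ := (le_max_left _ _).trans (le_max_right _ _)
  let U : V → V → Set E := fun x y =>
    {h | ∃ q ∈ {q | ∃ hq : q ∈ Q x y, (Q x y).Countable ∨ f x y ⟨q, hq⟩ ≤ o}, h ∈ q}
  let Op : Finset E → Set E := fun Z => ⋃ x ∈ VS inc (Z : Set E), ⋃ y ∈ VS inc (Z : Set E),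
    (U x y ∪ ⋃ C ∈ (↑Z.powerset : Set (Finset E)), ↑(R C x y))
  have hUc : ∀ x y, #(U x y) ≤ μ := by
    intro x y
    apply mk_finset_iUnion_le hμ
    by_cases hc : (Q x y).Countable
    · refine le_trans ?_ hμ
      rw [le_aleph0_iff_set_countable]
      exact hc.mono fun q hq => hq.1
    · let j : {q | ∃ hq : q ∈ Q x y, (Q x y).Countable ∨ f x y ⟨q, hq⟩ ≤ o} →
        {q : Q x y | f x y q < Order.succ o} := fun q => ⟨⟨q.1, q.2.1⟩, by
          rcases q.2.2 with h | h
          · exact absurd h hc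
          · exact Order.lt_succ_of_le h⟩
      have hj : Function.Injective j := by
        intro q q' h
        exact Subtype.ext (congrArg (fun z => z.1.1) h)
      refine (mk_le_of_injective hj).trans ((mk_rank_le (hf x y) _ (Order.succ o) fun a h => h).trans ?_)
      rw [← Ordinal.add_one_eq_succ, Ordinal.card_add_one]
      refine add_le_of_le hμ ((le_max_right _ _).trans (le_max_right _ _)) ?_
      exact one_le_aleph0.trans hμ
  have hOp : ∀ Z, #(Op Z) ≤ μ := by
    intro Z
    apply mk_biUnion_finite hμ (VS_finite inc Z)
    intro x _
    apply mk_biUnion_finite hμ (VS_finite inc Z)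
    intro y _
    refine (mk_union_le _ _).trans (add_le_of_le hμ (hUc x y) ?_)
    apply mk_biUnion_finite hμ (Finset.finite_toSet _)
    intro C _
    exact (Cardinal.mk_le_aleph0).trans hμ
  have hOpS : ∀ Z, Op Z ⊆ S := by
    intro Z h hh
    simp only [Op, Set.mem_iUnion] at hh
    obtain ⟨x, _, y, _, hh⟩ := hh
    rcases hh with ⟨q, ⟨hq, _⟩, hhq⟩ | hh
    · exact hQ x y q hq hhq
    · simp only [Set.mem_iUnion] at hh
      obtain ⟨C, _, hh⟩ := hh
      exact (hR1 C x y hh).1.1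
  obtain ⟨F', h1, h2, h3, h4⟩ := exists_closure hμ Op hOp (insert b.1 F) (by
    refine (mk_insert_le).trans (add_le_of_le hμ (le_max_left _ _) (one_le_aleph0.trans hμ)))
  refine ⟨F', fun h hh => h1 (Or.inr hh), h4 S (Set.insert_subset b.2 hFS) hOpS, h1 (Or.inl rfl), h2,
    ?_, ?_⟩
  · rintro x ⟨hx, hxF, hx'⟩ y ⟨hy, hyF, hy'⟩ q hq hqq h hh
    refine h3 {hx, hy} ?_ ?_
    · intro z hz; simp at hz; rcases hz with rfl | rfl <;> assumption
    · simp only [Op, Set.mem_iUnion]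
      exact ⟨x, ⟨hx, by simp, hx'⟩, y, ⟨hy, by simp, hy'⟩, Or.inl ⟨q, ⟨hq, hqq⟩, hh⟩⟩
  · rintro x ⟨hx, hxF, hx'⟩ y ⟨hy, hyF, hy'⟩ C hC hcon
    refine (hR2 C x y hcon).mono ?_
    intro h hh
    have h5 := hR1 C x y hh
    refine ⟨⟨?_, h5.1.2⟩, h5.2⟩
    refine h3 (insert hx (insert hy C)) ?_ ?_
    · intro z hz; simp at hz; rcases hz with rfl | rfl | hz
      · assumption
      · assumption
      · exact hC hz
    · simp only [Op, Set.mem_iUnion]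
      refine ⟨x, ⟨hx, by simp, hx'⟩, y, ⟨hy, by simp, hy'⟩, Or.inr ?_⟩
      simp only [Set.mem_iUnion]
      refine ⟨C, ?_, hh⟩
      simp only [Finset.coe_powerset, Set.mem_preimage, Set.mem_powerset_iff, Finset.coe_subset]
      intro z hz; simp [hz]

/-- decomposition into countable pieces without odd cuts -/
theorem nw (inc : E → Sym2 V) (κ : Cardinal.{e'}) : ∀ S : Set E, #S = κ → Par inc S ∅ →
    ∃ 𝒞 : Set (Set E), (∀ D ∈ 𝒞, D.Countable ∧ Par inc D ∅ ∧ D ⊆ S) ∧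
      (∀ D ∈ 𝒞, ∀ D' ∈ 𝒞, ∀ k, k ∈ D → k ∈ D' → D = D') ∧ ∀ k ∈ S, ∃ D ∈ 𝒞, k ∈ D := by
  classical
  induction κ using WellFoundedLT.induction with
  | ind κ ih =>
  intro S hκ hS
  by_cases hcount : κ ≤ ℵ₀
  · refine ⟨{S}, ?_, ?_, ?_⟩
    · rintro D rfl
      exact ⟨by rwa [← le_aleph0_iff_set_countable, hκ], hS, le_rfl⟩
    · rintro D rfl D' rfl _ _ _; rfl
    · intro k hk; exact ⟨S, rfl, hk⟩
  push Not at hcount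
  choose Q hQ1 hQ2 hQ3 using exists_Q inc S
  choose f hf1 hf2 using fun x y => exists_rank (Q x y)
  obtain ⟨r, hr1, hr2⟩ := exists_rank S
  rw [hκ] at hr2
  have := fun (b : S) (F : {F : Set E // F ⊆ S}) =>
    exists_stage inc S Q (fun x y q hq => (hQ1 x y q hq).1) f hf1 b (r b) F.1 F.2
  choose Cl c1 c2 c3 c4 c5 c6 using this
  have wf : WellFounded (fun a b : S => r a < r b) := InvImage.wf r wellFounded_lt
  let Fp : S → {F : Set E // F ⊆ S} := wf.fix fun b g =>
    ⟨Cl b ⟨⋃ c, ⋃ hc : r c < r b, (g c hc).1, Set.iUnion_subset fun c => Set.iUnion_subset fun hc =>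
      (g c hc).2⟩, c2 _ _⟩
  let F : S → {F : Set E // F ⊆ S} := fun b => ⟨⋃ c, ⋃ _ : r c < r b, (Fp c).1,
    Set.iUnion_subset fun c => Set.iUnion_subset fun _ => (Fp c).2⟩
  have hFp : ∀ b, (Fp b).1 = Cl b (F b) := by
    intro b
    have := wf.fix_eq (fun (b : S) (g : ∀ c, r c < r b → {F : Set E // F ⊆ S}) =>
      (⟨Cl b ⟨⋃ c, ⋃ hc : r c < r b, (g c hc).1, Set.iUnion_subset fun c => Set.iUnion_subset fun hc =>
      (g c hc).2⟩, c2 _ _⟩ : {F : Set E // F ⊆ S})) b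
    exact congrArg Subtype.val this
  have hFmem : ∀ b k, k ∈ (F b).1 ↔ ∃ c, r c < r b ∧ k ∈ (Fp c).1 := by
    intro b k; simp [F]
  have hle : ∀ b, (F b).1 ⊆ (Fp b).1 := fun b => by rw [hFp]; exact c1 _ _
  have hmono : ∀ b c, r b ≤ r c → (Fp b).1 ⊆ (Fp c).1 := by
    intro b c hbc
    rcases hbc.eq_or_lt with h | h
    · rw [hr1 h]
    · intro k hk; exact hle c ((hFmem c k).2 ⟨b, h, hk⟩)
  have hcard : ∀ b, #(Fp b).1 ≤ max ℵ₀ (r b).card ∧ #(F b).1 ≤ max ℵ₀ (r b).card := by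
    intro b
    induction b using wf.induction with
    | _ b ihb =>
    have hF : #(F b).1 ≤ max ℵ₀ (r b).card := by
      have : (F b).1 = ⋃ c : {c | r c < r b}, (Fp c.1).1 := by
        ext k; simp [F]
      rw [this]
      apply mk_iUnion_le_of (le_max_left _ _)
      · exact (mk_rank_le hr1 _ _ fun a h => h).trans (le_max_right _ _)
      · intro c
        refine (ihb c.1 c.2).1.trans ?_
        exact max_le_max le_rfl (Ordinal.card_le_card (le_of_lt c.2))
    refine ⟨?_, hF⟩
    rw [hFp]
    exact (c4 b (F b)).trans (max_le hF le_rfl)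
  have hlt : ∀ b, max ℵ₀ (r b).card < κ := fun b =>
    max_lt hcount (lt_ord.1 ((hr2 _).2 ⟨b, rfl⟩))
  have parF : ∀ b, Par inc (S \ (F b).1) ∅ := by
    intro b
    refine par_sdiff hS (F b).2 ?_
    intro x hx y hy X hfin hxX hyX hcon
    obtain ⟨hx', hxF, hxx⟩ := hx
    obtain ⟨hy', hyF, hyy⟩ := hy
    obtain ⟨cx, hcx, hxF⟩ := (hFmem _ _).1 hxF
    obtain ⟨cy, hcy, hyF⟩ := (hFmem _ _).1 hyF
    by_cases hall : ∀ q ∈ Q x y, ↑q ⊆ (F b).1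
    · obtain ⟨q, hq, hqc⟩ := hcon.fin
      have hqQ : q ∈ Q x y := hQ3 x y q (fun k hk => (hq hk).1) hqc
        fun q' hq' k hk hk' => (hq hk).2 (hall q' hq' hk')
      obtain ⟨k, hk, _⟩ := hqc.cross hxX hyX
      exact (hq hk).2 (hall q hqQ hk)
    · push Not at hall
      obtain ⟨q, hq, hqF⟩ := hall
      -- the family is large
      have hbig : max ℵ₀ (r b).card < #(Q x y) := by
        apply max_lt
        · by_contra hc
          push Not at hc
          rw [le_aleph0_iff_set_countable] at hc
          apply hqF
          have hm := max_cases (r cx) (r cy)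
          rcases le_total (r cx) (r cy) with h | h
          · have := c5 cy (F cy) x ⟨hx', by rw [← hFp]; exact hmono _ _ h hxF, hxx⟩ y
              ⟨hy', by rw [← hFp]; exact hyF, hyy⟩ q hq (Or.inl hc)
            intro k hk
            exact (hFmem _ _).2 ⟨cy, hcy, by rw [hFp]; exact this hk⟩
          · have := c5 cx (F cx) x ⟨hx', by rw [← hFp]; exact hxF, hxx⟩ y
              ⟨hy', by rw [← hFp]; exact hmono _ _ h hyF, hyy⟩ q hq (Or.inl hc)
            intro k hk
            exact (hFmem _ _).2 ⟨cx, hcx, by rw [hFp]; exact this hk⟩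
        · rw [← lt_ord]
          by_contra hc
          push Not at hc
          have hfq : f x y ⟨q, hq⟩ < r b := lt_of_lt_of_le ((hf2 x y _).2 ⟨_, rfl⟩) hc
          obtain ⟨d, hd⟩ := (hr2 (f x y ⟨q, hq⟩)).1 (hfq.trans ((hr2 _).2 ⟨b, rfl⟩))
          obtain ⟨c, h1, h2, h3, h4⟩ : ∃ c, r c < r b ∧ r cx ≤ r c ∧ r cy ≤ r c ∧ r d ≤ r c := by
            rw [← hd] at hfq
            rcases le_total (r cx) (r cy) with h | h
            · rcases le_total (r cy) (r d) with h' | h'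
              · exact ⟨d, hfq, h.trans h', h', le_rfl⟩
              · exact ⟨cy, hcy, h, le_rfl, h'⟩
            · rcases le_total (r cx) (r d) with h' | h'
              · exact ⟨d, hfq, h', h.trans h', le_rfl⟩
              · exact ⟨cx, hcx, le_rfl, h, h'⟩
          have := c5 c (F c) x ⟨hx', by rw [← hFp]; exact hmono _ _ h2 hxF, hxx⟩ y
              ⟨hy', by rw [← hFp]; exact hmono _ _ h3 hyF, hyy⟩ q hq (Or.inr (hd ▸ h4))
          apply hqF
          intro k hk
          exact (hFmem _ _).2 ⟨c, h1, by rw [hFp]; exact this hk⟩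
      have hhit : ∀ q : Q x y, ∃ k : ((F b).1 ∪ {h | h ∈ S \ (F b).1 ∧ crs inc X h} : Set E),
          k.1 ∈ q.1 := by
        intro q
        obtain ⟨k, hk, hkc⟩ := (hQ1 x y q.1 q.2).2.cross hxX hyX
        by_cases hkF : k ∈ (F b).1
        · exact ⟨⟨k, Or.inl hkF⟩, hk⟩
        · exact ⟨⟨k, Or.inr ⟨⟨(hQ1 x y q.1 q.2).1 hk, hkF⟩, hkc⟩⟩, hk⟩
      choose g hg using hhit
      have ginj : Function.Injective g := by
        intro q q' h
        exact Subtype.ext (hQ2 x y q.1 q.2 q'.1 q'.2 (g q).1 (hg q) (h ▸ hg q'))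
      have h1 := mk_le_of_injective ginj
      have h2 : #((F b).1 ∪ {h | h ∈ S \ (F b).1 ∧ crs inc X h} : Set E) ≤ max ℵ₀ (r b).card := by
        refine (mk_union_le _ _).trans (add_le_of_le (le_max_left _ _) (hcard b).2 ?_)
        exact (hfin.lt_aleph0.le).trans (le_max_left _ _)
      exact absurd (h1.trans h2) (not_le.2 hbig)
  have parD : ∀ b, Par inc ((Fp b).1 \ (F b).1) ∅ := by
    intro b
    refine par_piece (parF b) (fun k hk => ⟨(Fp b).2 hk.1, hk.2⟩) ?_
    rintro x ⟨hx', hxF, hxx⟩ y ⟨hy', hyF, hyy⟩ C hC hcon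
    have := c6 b (F b) x ⟨hx', by rw [← hFp]; exact hxF.1, hxx⟩ y
      ⟨hy', by rw [← hFp]; exact hyF.1, hyy⟩ C (by rw [← hFp]; exact fun k hk => (hC hk).1) hcon
    rwa [← hFp] at this
  have hDc : ∀ b, #((Fp b).1 \ (F b).1 : Set E) < κ := fun b =>
    lt_of_le_of_lt ((mk_le_mk_of_subset Set.sdiff_subset).trans (hcard b).1) (hlt b)
  have := fun b => ih _ (hDc b) _ rfl (parD b)
  choose 𝒞 k1 k2 k3 using this
  have hdisj : ∀ b c k, k ∈ (Fp b).1 \ (F b).1 → k ∈ (Fp c).1 \ (F c).1 → b = c := by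
    intro b c k hb hc
    rcases lt_trichotomy (r b) (r c) with h | h | h
    · exact absurd ((hFmem c k).2 ⟨b, h, hb.1⟩) hc.2
    · exact hr1 h
    · exact absurd ((hFmem b k).2 ⟨c, h, hc.1⟩) hb.2
  refine ⟨⋃ b, 𝒞 b, ?_, ?_, ?_⟩
  · intro D hD
    obtain ⟨b, hb⟩ := Set.mem_iUnion.1 hD
    have := k1 b D hb
    exact ⟨this.1, this.2.1, fun k hk => (Fp b).2 (this.2.2 hk).1⟩
  · intro D hD D' hD' k hk hk'
    obtain ⟨b, hb⟩ := Set.mem_iUnion.1 hD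
    obtain ⟨c, hc⟩ := Set.mem_iUnion.1 hD'
    have := hdisj b c k ((k1 b D hb).2.2 hk) ((k1 c D' hc).2.2 hk')
    subst this
    exact k2 b D hb D' hc k hk hk'
  · intro k hk
    obtain ⟨b, hb, hmin⟩ := wf.has_min {b : S | k ∈ (Fp b).1} ⟨⟨k, hk⟩, by
      show k ∈ (Fp _).1
      rw [hFp]; exact c3 ⟨k, hk⟩ _⟩
    have : k ∈ (Fp b).1 \ (F b).1 := by
      refine ⟨hb, ?_⟩
      intro hc
      obtain ⟨c, hcb, hkc⟩ := (hFmem _ _).1 hc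
      exact hmin c hkc hcb
    obtain ⟨D, hD, hkD⟩ := k3 b k this
    exact ⟨D, Set.mem_iUnion.2 ⟨b, hD⟩, hkD⟩

end

end LC

end Part9

section Part10
namespace LC

universe v' e'
variable {V : Type v'} {E : Type e'}

lemma par_union {inc : E → Sym2 V} {A : Set E} {T : Set V} (p : E → Set E)
    (h1 : ∀ k ∈ A, k ∈ p k ∧ p k ⊆ A ∧ Par inc (p k) T) (h2 : ∀ k ∈ A, ∀ h ∈ p k, p h = p k) :
    Par inc A T := by
  classical
  intro X hX hfin
  rw [Set.ncard_eq_toFinset_card _ hfin, Finset.card_eq_sum_card_image p]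
  apply Finset.even_sum
  intro b hb
  obtain ⟨k, hk, rfl⟩ := Finset.mem_image.1 hb
  have hkA : k ∈ A := by
    have := hfin.mem_toFinset.1 hk
    exact this.1
  have hset : (↑{a ∈ hfin.toFinset | p a = p k} : Set E) = {h | h ∈ p k ∧ crs inc X h} := by
    ext h
    simp only [Finset.coe_filter, Set.Finite.mem_toFinset, Set.mem_ofPred_eq]
    constructor
    · rintro ⟨⟨h3, h4⟩, h5⟩; exact ⟨h5 ▸ (h1 h h3).1, h4⟩
    · rintro ⟨h3, h4⟩; exact ⟨⟨(h1 k hkA).2.1 h3, h4⟩, h2 k hkA h h3⟩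
  rw [← Set.ncard_coe_finset, hset]
  apply (h1 k hkA).2.2 X hX
  rw [← hset]; exact Finset.finite_toSet _

lemma countable_cls {R : E → E → Prop} (hR : ∀ k, {h | R k h}.Countable) (k : E) :
    {h | Relation.ReflTransGen R k h}.Countable := by
  let s : ℕ → Set E := fun n => Nat.rec {k} (fun _ S => ⋃ h ∈ S, {h' | R h h'}) n
  have hs : ∀ n, s (n + 1) = ⋃ h ∈ s n, {h' | R h h'} := fun n => rfl
  have hc : ∀ n, (s n).Countable := by
    intro n
    induction n with
    | zero => exact Set.countable_singleton k
    | succ n ih => rw [hs]; exact ih.biUnion fun h _ => hR h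
  refine (Set.countable_iUnion hc).mono ?_
  intro h hh
  change Relation.ReflTransGen R k h at hh
  induction hh with
  | refl => exact Set.mem_iUnion.2 ⟨0, rfl⟩
  | tail _ h2 ih =>
    obtain ⟨n, hn⟩ := Set.mem_iUnion.1 ih
    refine Set.mem_iUnion.2 ⟨n + 1, ?_⟩
    rw [hs]
    exact Set.mem_biUnion hn h2

lemma crs_compl {inc : E → Sym2 V} {X : Set V} {h : E} : crs inc Xᶜ h ↔ crs inc X h := by
  obtain ⟨a, b, hab⟩ := exists_sym2 (inc h)
  rw [crs_iff hab, crs_iff hab]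
  simp only [Set.mem_compl_iff]; tauto

lemma pieces {inc : E → Sym2 V} {T : Set V} {t0 : V} (ht0 : t0 ∈ T) (par : Par inc Set.univ T) :
    ∃ p : E → Set E, (∀ k, k ∈ p k ∧ (p k).Countable ∧ Par inc (p k) T) ∧
      ∀ k, ∀ h ∈ p k, p h = p k := by
  classical
  let φ : V → V := fun x => if x ∈ T then t0 else x
  let inc0 : E → Sym2 V := fun e => Sym2.map φ (inc e)
  have hcr : ∀ X h, crs inc0 X h ↔ crs inc (φ ⁻¹' X) h := by
    intro X h
    obtain ⟨a, b, hab⟩ := exists_sym2 (inc h)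
    have : inc0 h = s(φ a, φ b) := by simp [inc0, hab]
    rw [crs_iff hab, crs_iff this]; rfl
  have hφT : ∀ x ∈ T, φ x = t0 := fun x hx => by simp [φ, hx]
  have hφ : ∀ x ∉ T, φ x = x := fun x hx => by simp [φ, hx]
  have aux : ∀ X : Set V, t0 ∉ X → {h | h ∈ Set.univ ∧ crs inc0 X h}.Finite →
      Even {h | h ∈ Set.univ ∧ crs inc0 X h}.ncard := by
    intro X hX hfin
    simp only [hcr] at hfin ⊢
    refine par _ ?_ hfin
    intro x hx hxT
    apply hX
    rw [← hφT x hxT]; exact hx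
  have par0 : Par inc0 Set.univ ∅ := by
    intro X _ hfin
    by_cases hX : t0 ∈ X
    · have := aux Xᶜ (by simpa using hX)
      simp only [crs_compl] at this
      exact this hfin
    · exact aux X hX hfin
  obtain ⟨𝒞, h1, h2, h3⟩ := nw inc0 _ Set.univ rfl par0
  choose p hp1 hp2 using fun k => h3 k (Set.mem_univ k)
  refine ⟨p, fun k => ⟨hp2 k, (h1 _ (hp1 k)).1, ?_⟩, ?_⟩
  · intro X hX hfin
    have hpre : φ ⁻¹' X = X := by
      ext x
      by_cases hx : x ∈ T
      · simp only [Set.mem_preimage, hφT x hx]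
        exact ⟨fun h => absurd ht0 (hX h), fun h => absurd hx (hX h)⟩
      · simp only [Set.mem_preimage, hφ x hx]
    have := (h1 _ (hp1 k)).2.1 X (by simp)
    simp only [hcr, hpre] at this
    exact this hfin
  · intro k h hh
    exact h2 _ (hp1 h) _ (hp1 k) h (hp2 h) hh

theorem main_list {inc : E → Sym2 V} {T : Set V} (hT : T.Countable) (par : Par inc Set.univ T)
    (hL : ∀ t ∈ T, Linked inc Set.univ T t) :
    ∃ (F : Set (V × List (E × V))),
      (∀ p ∈ F, p.1 ∈ T ∧ TP inc T p.1 p.2) ∧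
      (∀ p ∈ F, ∀ q ∈ F, ∀ k, k ∈ eds p.2 → k ∈ eds q.2 → p = q) ∧
      (∀ e, (∃ t ∈ T, t ∈ inc e) → ∃ p ∈ F, e ∈ eds p.2) := by
  rcases T.eq_empty_or_nonempty with rfl | ⟨t0, ht0⟩
  · exact ⟨∅, by simp, by simp, by simp⟩
  obtain ⟨p, hp1, hp2⟩ := pieces ht0 par
  have hp3 : ∀ k h, h ∈ p k → k ∈ p h := fun k h hh => by rw [hp2 k h hh]; exact (hp1 k).1
  choose! I W hW1 hW2 using hL
  let R : E → E → Prop := fun k h => h ∈ p k ∨ ∃ t ∈ T, ∃ i ∈ I t, k ∈ eds (W t i) ∧ h ∈ eds (W t i)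
  have Rs : Std.Symm R := by
    constructor
    rintro k h (hh | ⟨t, ht, i, hi, h1, h2⟩)
    · exact Or.inl (hp3 k h hh)
    · exact Or.inr ⟨t, ht, i, hi, h2, h1⟩
  have Rc : ∀ k, {h | R k h}.Countable := by
    intro k
    have : {h | R k h} ⊆ p k ∪ ⋃ t ∈ T, {h | ∃ i ∈ I t, k ∈ eds (W t i) ∧ h ∈ eds (W t i)} := by
      rintro h (hh | ⟨t, ht, hh⟩)
      · exact Or.inl hh
      · exact Or.inr (Set.mem_biUnion ht hh)
    refine Set.Countable.mono this ((hp1 k).2.1.union (hT.biUnion ?_))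
    intro t ht
    by_cases hk : ∃ i ∈ I t, k ∈ eds (W t i)
    · obtain ⟨i, hi, hki⟩ := hk
      refine (List.finite_toSet (eds (W t i))).countable.mono ?_
      rintro h ⟨j, hj, h1, h2⟩
      rw [(hW1 t ht).dj j hj i hi k h1 hki] at h2
      exact h2
    · refine Set.countable_empty.mono ?_
      rintro h ⟨j, hj, h1, _⟩
      exact hk ⟨j, hj, h1⟩
  let Cls : E → Set E := fun k => {h | Relation.ReflTransGen R k h}
  have hsym : ∀ k h, h ∈ Cls k → k ∈ Cls h := by
    intro k h hh
    change Relation.ReflTransGen R k h at hh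
    change Relation.ReflTransGen R h k
    induction hh with
    | refl => exact Relation.ReflTransGen.refl
    | tail _ h2 ih => exact Relation.ReflTransGen.head (Rs.symm _ _ h2) ih
  have heq : ∀ k h, h ∈ Cls k → Cls h = Cls k := by
    intro k h hh
    ext z
    exact ⟨fun hz => Relation.ReflTransGen.trans hh hz,
      fun hz => Relation.ReflTransGen.trans (hsym k h hh) hz⟩
  have hstep : ∀ k h z, h ∈ Cls k → R h z → z ∈ Cls k := fun k h z hh hz =>
    Relation.ReflTransGen.tail hh hz
  have good : ∀ k, Good inc T (Cls k) := by
    intro k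
    constructor
    · refine par_union p ?_ (fun k _ => hp2 k)
      intro h hh
      exact ⟨(hp1 h).1, fun z hz => hstep k h z hh (Or.inl hz), (hp1 h).2.2⟩
    · intro t ht
      have hw := hW1 t ht
      refine ⟨{i | i ∈ I t ∧ ∃ h ∈ eds (W t i), h ∈ Cls k}, W t, ⟨fun i hi => hw.wk i hi.1,
        fun i hi => hw.nr i hi.1, ?_, fun i hi j hj => hw.dj i hi.1 j hj.1, ?_⟩,
        fun i hi => hW2 t ht i hi.1⟩
      · rintro i ⟨hi, h, h1, h2⟩ z hz
        exact hstep k h z h2 (Or.inr ⟨t, ht, i, hi, h1, hz⟩)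
      · intro g hg htg
        obtain ⟨i, hi, hgi⟩ := hw.cov g trivial htg
        exact ⟨i, ⟨hi, g, hgi, hg⟩, hgi⟩
  have hex : ∀ A ∈ Set.range Cls, ∃ (F : Set (V × List (E × V))),
      (∀ p ∈ F, p.1 ∈ T ∧ TP inc T p.1 p.2 ∧ ∀ k ∈ eds p.2, k ∈ A) ∧
      (∀ p ∈ F, ∀ q ∈ F, ∀ k, k ∈ eds p.2 → k ∈ eds q.2 → p = q) ∧
      (∀ e ∈ A, (∃ t ∈ T, t ∈ inc e) → ∃ p ∈ F, e ∈ eds p.2) := by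
    rintro _ ⟨k, rfl⟩
    exact countable_case _ (countable_cls Rc k) (good k)
  choose! F f1 f2 f3 using hex
  refine ⟨⋃ k, F (Cls k), ?_, ?_, ?_⟩
  · intro q hq
    obtain ⟨k, hk⟩ := Set.mem_iUnion.1 hq
    have := f1 _ ⟨k, rfl⟩ q hk
    exact ⟨this.1, this.2.1⟩
  · intro q hq q' hq' z hz hz'
    obtain ⟨k, hk⟩ := Set.mem_iUnion.1 hq
    obtain ⟨k', hk'⟩ := Set.mem_iUnion.1 hq'
    have h1 := (f1 _ ⟨k, rfl⟩ q hk).2.2 z hz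
    have h2 := (f1 _ ⟨k', rfl⟩ q' hk').2.2 z hz'
    have : Cls k = Cls k' := (heq k z h1).symm.trans (heq k' z h2)
    rw [← this] at hk'
    exact f2 _ ⟨k, rfl⟩ q hk q' hk' z hz hz'
  · intro e he
    obtain ⟨q, hq, h⟩ := f3 _ ⟨e, rfl⟩ e Relation.ReflTransGen.refl he
    exact ⟨q, Set.mem_iUnion.2 ⟨e, hq⟩, h⟩

end LC

end Part10

namespace LC

section Final
universe v' e'
variable {V : Type v'} {E : Type e'}

lemma walk_to_list {G : Multigraph V E} {u w : V} (p : G.Walk u w) :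
    ∃ l, IsWk G.inc u l ∧ endp u l = w ∧ eds l = p.edges ∧ u :: vts l = p.support := by
  induction p with
  | nil v => exact ⟨[], trivial, rfl, rfl, rfl⟩
  | @cons u v w e he p ih =>
    obtain ⟨l, h1, h2, h3, h4⟩ := ih
    refine ⟨(e, v) :: l, ⟨he, h1⟩, h2, ?_, ?_⟩
    · simp [Multigraph.Walk.edges, h3]
    · simp [Multigraph.Walk.support, h4]

lemma list_to_walk {G : Multigraph V E} (u : V) (l : List (E × V)) (h : IsWk G.inc u l) :
    ∃ p : G.Walk u (endp u l), p.edges = eds l ∧ p.support = u :: vts l := by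
  induction l generalizing u with
  | nil => exact ⟨.nil u, rfl, rfl⟩
  | cons q l ih =>
    obtain ⟨p, h1, h2⟩ := ih q.2 h.2
    refine ⟨.cons q.1 h.1 p, ?_, ?_⟩
    · simp [Multigraph.Walk.edges, h1]
    · simp [Multigraph.Walk.support, h2]

lemma tpath_to_TP {G : Multigraph V E} {T : Set V} (p : G.TPath T) :
    ∃ l, TP G.inc T p.first l ∧ endp p.first l = p.last ∧ eds l = p.walk.edges := by
  obtain ⟨l, h1, h2, h3, h4⟩ := walk_to_list p.walk
  have hnd := p.support_nodup
  rw [← h4] at hnd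
  refine ⟨l, ⟨h1, hnd, h2 ▸ p.last_mem, h2 ▸ p.ne.symm, ?_⟩, h2, h3⟩
  intro x hx hxT
  rcases p.internal x (h4 ▸ List.mem_cons_of_mem _ hx) hxT with h | h
  · subst h
    exact absurd hx (List.nodup_cons.1 hnd).1
  · rw [h2, h]

lemma TP_to_tpath {G : Multigraph V E} {T : Set V} {s : V} {l : List (E × V)} (hs : s ∈ T)
    (h : TP G.inc T s l) : ∃ p : G.TPath T, p.walk.edges = eds l := by
  obtain ⟨w, h1, h2⟩ := list_to_walk s l h.wk
  refine ⟨⟨s, endp s l, w, hs, h.fin, h.ne.symm, h2 ▸ h.nd, ?_⟩, h1⟩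
  intro x hx hxT
  rw [h2] at hx
  rcases List.mem_cons.1 hx with rfl | hx
  · exact Or.inl rfl
  · exact Or.inr (h.int x hx hxT)

lemma ends_mem {inc : E → Sym2 V} {u t : V} {l : List (E × V)} {g : E} (h : IsWk inc u l)
    (hg : g ∈ eds l) (ht : t ∈ inc g) : t ∈ u :: vts l := by
  obtain ⟨a, y, b, rfl⟩ := split_eds g l hg
  simp only [IsWk_append, IsWk_cons] at h
  rw [h.2.1, Sym2.mem_iff] at ht
  rcases ht with rfl | rfl
  · have := endp_mem u a
    simp only [List.mem_cons, vts_append, List.mem_append] at this ⊢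
    tauto
  · simp

lemma tpath_from {G : Multigraph V E} {T : Set V} (p : G.TPath T) {t : V} {g : E} (htT : t ∈ T)
    (hg : g ∈ p.walk.edges) (ht : t ∈ G.inc g) :
    ∃ l, TP G.inc T t l ∧ ∀ e, e ∈ eds l ↔ e ∈ p.walk.edges := by
  obtain ⟨l, h1, h2, h3⟩ := tpath_to_TP p
  have hm := ends_mem h1.wk (h3 ▸ hg) ht
  rcases List.mem_cons.1 hm with rfl | hm
  · exact ⟨l, h1, fun e => by rw [h3]⟩
  · have := h1.int t hm htT
    subst this
    obtain ⟨m, m1, _, m3⟩ := TP_rev p.first_mem h1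
    exact ⟨m, m1, fun e => by rw [m3, List.mem_reverse, h3]⟩

lemma linked_of {G : Multigraph V E} {T : Set V} {t : V} (htT : t ∈ T) {P : Set (G.TPath T)}
    (hd : G.TPathDisjoint P) (hc : ∀ e ∈ G.inci t, ∃ p ∈ P, e ∈ p.walk.edges) :
    Linked G.inc Set.univ T t := by
  have key : ∀ e, t ∈ G.inc e → ∃ l, TP G.inc T t l ∧ e ∈ eds l ∧
      ∃ p ∈ P, ∀ e, e ∈ eds l ↔ e ∈ p.walk.edges := by
    intro e he
    obtain ⟨p, hp, hep⟩ := hc e he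
    obtain ⟨l, h1, h2⟩ := tpath_from p htT hep he
    exact ⟨l, h1, (h2 e).2 hep, p, hp, h2⟩
  choose! W hW he hWp using key
  refine ⟨{e | t ∈ G.inc e}, W, ⟨fun i hi => (hW i hi).wk, fun i hi => (hW i hi).nr,
    fun _ _ _ _ => trivial, ?_, fun g _ hg => ⟨g, hg, he g hg⟩⟩,
    fun i hi => ⟨(hW i hi).fin, (hW i hi).ne⟩⟩
  intro i hi j hj h h1 h2
  obtain ⟨p, hp, hpi⟩ := hWp i hi
  obtain ⟨q, hq, hqj⟩ := hWp j hj
  have hij : p = q := by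
    by_contra hne
    exact hd _ hp _ hq hne h ((hpi h).1 h1) ((hqj h).1 h2)
  have hj' : j ∈ eds (W i) := by
    rw [hpi, hij, ← hqj]
    exact he j hj
  obtain ⟨x, m, hm⟩ := head_edge (hW i hi).wk (hW i hi).nr hj' hj
  obtain ⟨y, n, hn⟩ := head_edge (hW i hi).wk (hW i hi).nr (he i hi) hi
  rw [hm] at hn
  simp only [List.cons.injEq, Prod.mk.injEq] at hn
  exact hn.1.1.symm

end Final

end LC

/-- If `T` is countable, no `X ⊆ V ∖ T` has odd finite cut, and for each
`t ∈ T` some system of pairwise edge-disjoint `T`-paths covers all edges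
incident with `t`, then a single system of pairwise edge-disjoint `T`-paths
covers all edges incident with any vertex of `T`. -/
theorem lovasz_cherkassky_linked {V : Type u} {E : Type v}
    (G : Multigraph V E) (T : Set V) (hT : T.Countable)
    (hEul : ∀ X : Set V, X ⊆ Tᶜ → ¬ ((G.cut X).Finite ∧ Odd (G.cut X).ncard))
    (hlink : ∀ t ∈ T, ∃ Pt : Set (G.TPath T), G.TPathDisjoint Pt ∧
      ∀ e ∈ G.inci t, ∃ p ∈ Pt, e ∈ p.walk.edges) :
    ∃ P : Set (G.TPath T), G.TPathDisjoint P ∧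
      ∀ t ∈ T, ∀ e ∈ G.inci t, ∃ p ∈ P, e ∈ p.walk.edges := by
  classical
  have par : LC.Par G.inc Set.univ T := by
    intro X hX hfin
    have hset : {h | h ∈ (Set.univ : Set E) ∧ LC.crs G.inc X h} = G.cut X := by
      ext h
      simp [LC.crs, Multigraph.cut]
    rw [hset] at hfin ⊢
    rw [← Nat.not_odd_iff_even]
    exact fun ho => hEul X hX ⟨hfin, ho⟩
  have hL : ∀ t ∈ T, LC.Linked G.inc Set.univ T t := by
    intro t ht
    obtain ⟨P, h1, h2⟩ := hlink t ht
    exact LC.linked_of ht h1 h2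
  obtain ⟨F, h1, h2, h3⟩ := LC.main_list hT par hL
  have hq : ∀ p : F, ∃ q : G.TPath T, q.walk.edges = LC.eds p.1.2 :=
    fun p => LC.TP_to_tpath (h1 p.1 p.2).1 (h1 p.1 p.2).2
  choose q hq using hq
  refine ⟨Set.range q, ?_, ?_⟩
  · rintro _ ⟨a, rfl⟩ _ ⟨b, rfl⟩ hne e ha hb
    rw [hq] at ha hb
    exact hne (congrArg q (Subtype.ext (h2 a.1 a.2 b.1 b.2 e ha hb)))
  · intro t ht e he
    obtain ⟨p, hp, hep⟩ := h3 e ⟨t, ht, he⟩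
    exact ⟨q ⟨p, hp⟩, ⟨_, rfl⟩, by rw [hq]; exact hep⟩
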